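/- arXiv:2308.13120 — 6 statements merged into one kernel-verified Lean document; each statement's English description precedes it below -/
import Mathlib

section
/- Let k be a field of characteristic 0 and Γ a group. The group algebra k[Γ] is a prime ring if and only if every finite normal subgroup of Γ is trivial. -/
/-!
If `N` is a finite normal subgroup and `n ∈ N`, then the sum `s` of the elements of `N` is central
and `s * (1 - n) = 0`, so primeness forces `n = 1`.

Conversely, let `Δ` be the FC-centre of `Γ` and suppose `Γ` has no nontrivial finite normal
subgroup. The normal closure `H` of a finite subset of `Δ` has a centralizer of finite index, so by
Schur's theorem `[H, H]` is finite, hence trivial: `Δ` is abelian. An element of `Δ` of finite order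
then has a finite normal closure, so `Δ` is torsion-free. Thus `Δ` embeds into a rational vector
space, has unique products, and its group ring over a prime ring is prime.

Primeness passes from `R[Δ]` to `R[Γ]` by Passman's argument. Let `x R[Γ] y = 0` and write
`x = x₀ + x₁` with `x₀` supported on `Δ` and `x₁` off `Δ`. Then `x₀ y = -(h x₁ h⁻¹) y` for all `h`
in the finite-index centralizer of the support of `x₀`. Since the elements of the support of `x₁`
have infinitely many conjugates, B. H. Neumann's lemma on coset coverings provides such an `h` for
which the two sides have disjoint supports, whence `x₀ y = 0`.
-/

open scoped Pointwise commutatorElement MonoidAlgebra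

section MulAction

variable {G X : Type*} [Group G] [MulAction G X]

open MulAction

lemma finiteIndex_stabilizer_iff {x : X} :
    (stabilizer G x).FiniteIndex ↔ (orbit G x).Finite := by
  rw [Subgroup.finiteIndex_iff_finite_quotient,
    ← (orbitEquivQuotientStabilizer G x).finite_iff, Set.finite_coe_iff]

lemma finite_orbit_of_finiteIndex (H : Subgroup G) [H.FiniteIndex] {x : X}
    (hx : (orbit H x).Finite) : (orbit G x).Finite := by
  have hrel : (stabilizer G x).relIndex H ≠ 0 := (finiteIndex_stabilizer_iff.2 hx).index_ne_zero
  rw [← finiteIndex_stabilizer_iff, Subgroup.finiteIndex_iff, ← Subgroup.relIndex_top_right]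
  refine Subgroup.relIndex_ne_zero_trans hrel ?_
  rw [Subgroup.relIndex_top_right]
  exact Subgroup.FiniteIndex.index_ne_zero

lemma exists_forall_smul_notMem {s t : Set X} (hs : s.Finite) (ht : t.Finite)
    (hinf : ∀ x ∈ s, (orbit G x).Infinite) : ∃ g : G, ∀ x ∈ s, g • x ∉ t := by
  classical
  lift s to Finset X using hs
  lift t to Finset X using ht
  by_contra! hmeet
  -- `G` is covered by the finitely many sets `{g | g • x = y}` with `x ∈ s` and `y ∈ t`, each of
  -- which is empty or a left coset of the stabilizer of `x`.
  have hrep (p : X × X) : ∃ c : G, ∀ g : G, g • p.1 = p.2 → c • p.1 = p.2 := by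
    by_cases h : ∃ c : G, c • p.1 = p.2
    · exact h.imp fun c hc _ _ => hc
    · exact ⟨1, fun g hg => (h ⟨g, hg⟩).elim⟩
  choose c hc using hrep
  have hcover : ⋃ p ∈ s ×ˢ t, c p • (stabilizer G p.1 : Set G) = Set.univ := by
    refine Set.eq_univ_of_forall fun g => ?_
    obtain ⟨x, hx, hgx⟩ := hmeet g
    refine Set.mem_biUnion (x := (x, g • x)) (Finset.mk_mem_product hx hgx) ?_
    rw [mem_leftCoset_iff, SetLike.mem_coe, mem_stabilizer_iff, mul_smul, inv_smul_eq_iff]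
    exact (hc (x, g • x) g rfl).symm
  obtain ⟨p, hp, hfin⟩ := Subgroup.exists_finiteIndex_of_leftCoset_cover hcover
  exact hinf p.1 (Finset.mem_product.1 hp).1 (finiteIndex_stabilizer_iff.1 hfin)

end MulAction

section Group

variable {G : Type*} [Group G]

lemma uniqueProds_of_isMulTorsionFree (A : Type*) [CommGroup A] [IsMulTorsionFree A] :
    UniqueProds A :=
  UniqueProds.of_injective_mulHom
    (AddMonoidHom.toMultiplicativeRight (DivisibleHull.coeAddMonoidHom (M := Additive A))).toMulHom
    (DivisibleHull.coe_injective (M := Additive A)) inferInstance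

lemma finite_closure_of_commute_of_isOfFinOrder {s : Set G} (hs : s.Finite)
    (hcomm : ∀ a ∈ s, ∀ b ∈ s, a * b = b * a) (hfin : ∀ a ∈ s, IsOfFinOrder a) :
    (Subgroup.closure s : Set G).Finite := by
  have := Subgroup.isMulCommutative_closure hcomm
  have : Group.FG (Subgroup.closure s) :=
    (Group.fg_iff_subgroup_fg _).2 ((Subgroup.fg_iff _).2 ⟨s, rfl, hs⟩)
  have htors (a : G) (ha : a ∈ Subgroup.closure s) : IsOfFinOrder a := by
    induction ha using Subgroup.closure_induction with
    | mem a ha => exact hfin a ha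
    | one => exact .one
    | mul a b ha hb iha ihb =>
      exact Commute.isOfFinOrder_mul (setLike_mul_comm ha hb) iha ihb
    | inv a _ ih => exact ih.inv
  open scoped IsMulCommutative in
  exact CommGroup.finite_of_fg_isMulTorsion (Subgroup.closure s) fun a =>
    Submonoid.isOfFinOrder_coe.1 (htors a a.2)

lemma commutatorElement_mul_left_of_mem_center {z : G} (hz : z ∈ Subgroup.center G) (a b : G) :
    ⁅a * z, b⁆ = ⁅a, b⁆ := by
  rw [commutatorElement_def, commutatorElement_def, mul_assoc a z b, ← Subgroup.mem_center_iff.1 hz]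
  group

lemma commutatorElement_mul_right_of_mem_center {z : G} (hz : z ∈ Subgroup.center G) (a b : G) :
    ⁅a, b * z⁆ = ⁅a, b⁆ := by
  rw [← commutatorElement_inv, commutatorElement_mul_left_of_mem_center hz, commutatorElement_inv]

lemma finite_commutatorSet_of_finiteIndex_center [(Subgroup.center G).FiniteIndex] :
    Finite (commutatorSet G) := by
  refine ((Set.finite_range fun p : (G ⧸ Subgroup.center G) × (G ⧸ Subgroup.center G) =>
    ⁅p.1.out, p.2.out⁆).subset ?_).to_subtype
  rintro _ ⟨a, b, rfl⟩
  obtain ⟨z, hz⟩ := QuotientGroup.mk_out_eq_mul (Subgroup.center G) a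
  obtain ⟨w, hw⟩ := QuotientGroup.mk_out_eq_mul (Subgroup.center G) b
  refine ⟨(a, b), ?_⟩
  simp only [hz, hw, commutatorElement_mul_left_of_mem_center z.2,
    commutatorElement_mul_right_of_mem_center w.2]

lemma finite_commutator_of_finiteIndex_centralizer (H : Subgroup G)
    [(Subgroup.centralizer (H : Set G)).FiniteIndex] : ((⁅H, H⁆ : Subgroup G) : Set G).Finite := by
  have hcenter : (Subgroup.centralizer (H : Set G)).subgroupOf H ≤ Subgroup.center H :=
    fun z hz => Subgroup.mem_center_iff.2 fun a =>
      Subtype.ext (Subgroup.mem_centralizer_iff.1 (Subgroup.mem_subgroupOf.1 hz) a a.2)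
  have := Subgroup.finiteIndex_of_le hcenter
  have := finite_commutatorSet_of_finiteIndex_center (G := H)
  rw [← Subgroup.map_subtype_commutator, Subgroup.coe_map]
  have : Finite (commutator H) := inferInstance
  exact Set.Finite.image _ (commutator H : Set H).toFinite

variable (G) in
/-- The FC-centre of a group, often written `Δ(G)`: the subgroup of the elements with finitely many
conjugates. -/
def fcCenter : Subgroup G where
  carrier := {g | (conjugatesOf g).Finite}
  one_mem' := by
    refine (Set.finite_singleton 1).subset fun g hg => ?_
    exact isConj_one_right.1 hg
  mul_mem' {a b} ha hb := by
    refine (ha.mul hb).subset fun g hg => ?_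
    obtain ⟨c, rfl⟩ := isConj_iff.1 hg
    exact ⟨_, isConj_iff.2 ⟨c, rfl⟩, _, isConj_iff.2 ⟨c, rfl⟩, conj_mul⟩
  inv_mem' {a} ha := by
    refine ha.inv.subset fun g hg => ?_
    obtain ⟨c, rfl⟩ := isConj_iff.1 hg
    exact isConj_iff.2 ⟨c, by rw [conj_inv, inv_inv]⟩

lemma mem_fcCenter_iff {g : G} : g ∈ fcCenter G ↔ (conjugatesOf g).Finite := Iff.rfl

instance fcCenter_normal : (fcCenter G).Normal where
  conj_mem g hg c := by
    rwa [mem_fcCenter_iff, ← (isConj_iff.2 ⟨c, rfl⟩ : IsConj g _).conjugatesOf_eq]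

lemma orbit_conjAct_eq_conjugatesOf (g : G) : MulAction.orbit (ConjAct G) g = conjugatesOf g :=
  Set.ext fun _ => ConjAct.mem_orbit_conjAct.trans isConj_comm

lemma finiteIndex_centralizer_singleton_iff {g : G} :
    (Subgroup.centralizer {g}).FiniteIndex ↔ g ∈ fcCenter G := by
  rw [mem_fcCenter_iff, ← orbit_conjAct_eq_conjugatesOf, ← finiteIndex_stabilizer_iff,
    ConjAct.stabilizer_eq_centralizer]
  rfl

lemma finiteIndex_centralizer_of_subset_fcCenter {s : Set G} (hs : s.Finite)
    (hsΔ : s ⊆ fcCenter G) : (Subgroup.centralizer s).FiniteIndex := by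
  have := hs.to_subtype
  rw [Subgroup.centralizer_eq_iInf, iInf_subtype']
  exact Subgroup.finiteIndex_iInf fun g : s => finiteIndex_centralizer_singleton_iff.2 (hsΔ g.2)

lemma finite_conjugatesOfSet_of_subset_fcCenter {s : Set G} (hs : s.Finite)
    (hsΔ : s ⊆ fcCenter G) : (Group.conjugatesOfSet s).Finite :=
  hs.biUnion fun _ hg => hsΔ hg

lemma finiteIndex_centralizer_normalClosure {s : Set G} (hs : s.Finite) (hsΔ : s ⊆ fcCenter G) :
    (Subgroup.centralizer (Subgroup.normalClosure s : Set G)).FiniteIndex := by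
  rw [Subgroup.normalClosure, Subgroup.centralizer_closure]
  exact finiteIndex_centralizer_of_subset_fcCenter
    (finite_conjugatesOfSet_of_subset_fcCenter hs hsΔ) (Group.conjugatesOfSet_subset hsΔ)

lemma exists_mem_forall_conj_notMem (W : Subgroup G) [W.FiniteIndex] {s t : Set G}
    (hs : s.Finite) (ht : t.Finite) (hsΔ : ∀ g ∈ s, g ∉ fcCenter G) :
    ∃ w ∈ W, ∀ g ∈ s, w * g * w⁻¹ ∉ t := by
  let W' : Subgroup (ConjAct G) := W
  have : W'.FiniteIndex := ‹W.FiniteIndex›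
  obtain ⟨w, hw⟩ := exists_forall_smul_notMem (G := W') hs ht fun g hg hfin => by
    refine hsΔ g hg ?_
    rw [mem_fcCenter_iff, ← orbit_conjAct_eq_conjugatesOf]
    exact finite_orbit_of_finiteIndex W' hfin
  exact ⟨ConjAct.ofConjAct w, w.2, hw⟩

lemma isMulCommutative_fcCenter
    (hN : ∀ N : Subgroup G, N.Normal → (N : Set G).Finite → N = ⊥) :
    IsMulCommutative (fcCenter G) := by
  refine .of_setLike_mul_comm fun a ha b hb => ?_
  let H := Subgroup.normalClosure {a, b}
  have : (Subgroup.centralizer (H : Set G)).FiniteIndex :=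
    finiteIndex_centralizer_normalClosure (Set.toFinite {a, b}) (Set.pair_subset ha hb)
  have hbot : ⁅H, H⁆ = ⊥ := hN _ inferInstance (finite_commutator_of_finiteIndex_centralizer H)
  have haH : a ∈ H := Subgroup.subset_normalClosure (Set.mem_insert a {b})
  have hbH : b ∈ H := Subgroup.subset_normalClosure (Set.mem_insert_of_mem a rfl)
  exact (Subgroup.commutator_eq_bot_iff_le_centralizer.1 hbot haH b hbH).symm

lemma isMulTorsionFree_fcCenter
    (hN : ∀ N : Subgroup G, N.Normal → (N : Set G).Finite → N = ⊥) :
    IsMulTorsionFree (fcCenter G) := by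
  have := isMulCommutative_fcCenter hN
  open scoped IsMulCommutative in
  refine IsMulTorsionFree.of_not_isOfFinOrder fun (g : fcCenter G) hg hfin => hg (Subtype.ext ?_)
  have hconj : conjugatesOf (g : G) ⊆ fcCenter G := Group.conjugates_subset_normal g.2
  have hfinite : (Subgroup.normalClosure {(g : G)} : Set G).Finite := by
    rw [Subgroup.normalClosure, Group.conjugatesOfSet, Set.biUnion_singleton]
    exact finite_closure_of_commute_of_isOfFinOrder g.2
      (fun a ha b hb => setLike_mul_comm (hconj ha) (hconj hb))
      (fun a ha => IsConj.isOfFinOrder ha (Submonoid.isOfFinOrder_coe.2 hfin))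
  have hbot := hN _ Subgroup.normalClosure_normal hfinite
  exact Subgroup.mem_bot.1 (hbot ▸ Subgroup.subset_normalClosure (Set.mem_singleton (g : G)))

lemma uniqueProds_fcCenter
    (hN : ∀ N : Subgroup G, N.Normal → (N : Set G).Finite → N = ⊥) :
    UniqueProds (fcCenter G) := by
  have := isMulCommutative_fcCenter hN
  have := isMulTorsionFree_fcCenter hN
  open scoped IsMulCommutative in
  exact uniqueProds_of_isMulTorsionFree (fcCenter G)

end Group

/-- Primeness of a possibly noncommutative ring, stated for elements: `x A y = 0` only if `x = 0` or
`y = 0`. The zero ring is not excluded. -/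
def IsPrimeRing (A : Type*) [Mul A] [Zero A] : Prop :=
  ∀ x y : A, (∀ a : A, x * a * y = 0) → x = 0 ∨ y = 0

section MonoidAlgebra

open MonoidAlgebra

lemma exists_coeff_ne_zero {R M : Type*} [Semiring R] {x : R[M]} (hx : x ≠ 0) :
    ∃ m, x.coeff m ≠ 0 :=
  DFunLike.ne_iff.1 (coeff_eq_zero.not.2 hx)

lemma mapDomain_eq_self {R M : Type*} [Semiring R] {f : M → M} {x : R[M]}
    (hf : ∀ m ∈ x.coeff.support, f m = m) :
    mapDomain f x = x := by
  rw [mapDomain, Finsupp.mapDomain_congr (g := id) hf, Finsupp.mapDomain_id, ofCoeff_coeff]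

lemma isPrimeRing_monoidAlgebra_of_uniqueProds {R A : Type*} [Semiring R] [Monoid A]
    [UniqueProds A] (hR : IsPrimeRing R) : IsPrimeRing R[A] := by
  intro x y hxy
  by_contra! hne
  obtain ⟨a, ha, b, hb, hab⟩ := UniqueProds.uniqueMul_of_nonempty
    (Finsupp.support_nonempty_iff.2 (coeff_eq_zero.not.2 hne.1))
    (Finsupp.support_nonempty_iff.2 (coeff_eq_zero.not.2 hne.2))
  refine (hR (x.coeff a) (y.coeff b) fun r => ?_).elim
    (Finsupp.mem_support_iff.1 ha) (Finsupp.mem_support_iff.1 hb)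
  have hsupp : (single 1 r * y).coeff.support ⊆ y.coeff.support := fun c hc => by
    rw [Finsupp.mem_support_iff, coeff_single_one_mul] at hc
    exact Finsupp.mem_support_iff.2 (right_ne_zero_of_mul hc)
  calc x.coeff a * r * y.coeff b = (x * (single 1 r * y)).coeff (a * b) := by
        rw [coeff_mul_mul_of_uniqueMul (hab.mono subset_rfl hsupp), coeff_single_one_mul, mul_assoc]
    _ = 0 := by rw [← mul_assoc, hxy, coeff_zero, Finsupp.zero_apply]

lemma isPrimeRing_of_isPrimeRing_monoidAlgebra {R M : Type*} [Semiring R] [MulOneClass M]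
    (h : IsPrimeRing R[M]) : IsPrimeRing R := by
  intro r s hrs
  have hzero (a : R[M]) : single 1 r * a * single 1 s = 0 := by
    ext m
    rw [coeff_mul_single_one, coeff_single_one_mul, hrs, coeff_zero, Finsupp.zero_apply]
  simpa only [single_eq_zero] using h (single 1 r) (single 1 s) hzero

variable {R G : Type*} [Group G]

section Semiring

variable [Semiring R]

lemma single_mul_mul_single_inv (g : G) (x : R[G]) :
    single g 1 * x * single g⁻¹ 1 = mapDomain (MulAut.conj g) x := by
  induction x using MonoidAlgebra.induction_linear with
  | zero => simp
  | add x y hx hy => rw [mul_add, add_mul, hx, hy, mapDomain_add]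
  | single h r => simp

/-- The projection `R[G] → R[H]` that forgets the coefficients outside the subgroup `H`. -/
noncomputable def subgroupProj (H : Subgroup G) (x : R[G]) : R[H] :=
  comapDomain H.subtype H.subtype_injective x

lemma coeff_subgroupProj (H : Subgroup G) (x : R[G]) (h : H) :
    (subgroupProj H x).coeff h = x.coeff h :=
  rfl

lemma coeff_mapDomain_subgroupProj_of_mem {H : Subgroup G} (x : R[G]) {g : G} (hg : g ∈ H) :
    (mapDomain H.subtype (subgroupProj H x)).coeff g = x.coeff g :=
  Finsupp.mapDomain_apply H.subtype_injective _ (⟨g, hg⟩ : H)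

lemma coeff_mapDomain_subgroupProj_of_notMem {H : Subgroup G} (x : R[G]) {g : G} (hg : g ∉ H) :
    (mapDomain H.subtype (subgroupProj H x)).coeff g = 0 :=
  Finsupp.mapDomain_of_notMem_range _ _ (by simpa using hg)

lemma subgroupProj_mapDomain_mul (H : Subgroup G) (a : R[H]) (y : R[G]) :
    subgroupProj H (mapDomain H.subtype a * y) = a * subgroupProj H y := by
  induction a using MonoidAlgebra.induction_linear with
  | zero => simp [subgroupProj]
  | add a b ha hb =>
    rw [mapDomain_add, add_mul, add_mul, ← ha, ← hb]
    exact comapDomain_add _ _ _ _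
  | single h r =>
    ext g
    rw [mapDomain_single, coeff_subgroupProj, coeff_single_mul_apply, coeff_single_mul_apply,
      coeff_subgroupProj]
    rfl

lemma exists_subgroupProj_single_mul_ne_zero (H : Subgroup G) {x : R[G]} (hx : x ≠ 0) :
    ∃ g : G, subgroupProj H (single g 1 * x) ≠ 0 := by
  obtain ⟨g, hg⟩ := exists_coeff_ne_zero hx
  refine ⟨g⁻¹, fun h => hg ?_⟩
  simpa [coeff_subgroupProj] using congr((coeff $h) 1)

end Semiring

section Ring

variable [Ring R]

lemma mul_eq_zero_of_conj_notMem {x₀ x₁ y : R[G]} {g : G}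
    (hxy : (x₀ + x₁) * single g⁻¹ 1 * y = 0)
    (hfix : ∀ a ∈ x₀.coeff.support, g * a * g⁻¹ = a)
    (hsep : ∀ b ∈ x₁.coeff.support,
      g * b * g⁻¹ ∉ ((x₀ * y).coeff.support / y.coeff.support : Set G)) :
    x₀ * y = 0 := by
  classical
  have hx₀ : mapDomain (MulAut.conj g) x₀ = x₀ := mapDomain_eq_self hfix
  have hsum : x₀ * y + mapDomain (MulAut.conj g) x₁ * y = 0 := by
    calc x₀ * y + mapDomain (MulAut.conj g) x₁ * y
        = single g 1 * ((x₀ + x₁) * single g⁻¹ 1 * y) := by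
          nth_rw 1 [← hx₀]
          simp only [← single_mul_mul_single_inv, mul_add, add_mul, mul_assoc]
      _ = 0 := by rw [hxy, mul_zero]
  by_contra hne
  obtain ⟨z, hz⟩ := exists_coeff_ne_zero hne
  have hz' : z ∈ (mapDomain (MulAut.conj g) x₁ * y).coeff.support := by
    rw [eq_neg_of_add_eq_zero_left hsum, coeff_neg, Finsupp.neg_apply, neg_ne_zero] at hz
    exact Finsupp.mem_support_iff.2 hz
  obtain ⟨w, hw, v, hv, rfl⟩ := Finset.mem_mul.1 (support_coeff_mul_subset _ _ hz')
  obtain ⟨b, hb, rfl⟩ := Finset.mem_image.1 (Finsupp.mapDomain_support hw)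
  exact hsep b hb ⟨_, Finsupp.mem_support_iff.2 hz, v, hv, mul_div_cancel_right _ v⟩

lemma mapDomain_subgroupProj_fcCenter_mul_eq_zero {x y : R[G]} (hxy : ∀ a, x * a * y = 0) :
    mapDomain (fcCenter G).subtype (subgroupProj (fcCenter G) x) * y = 0 := by
  set x₀ := mapDomain (fcCenter G).subtype (subgroupProj (fcCenter G) x)
  have hsupp₀ : (x₀.coeff.support : Set G) ⊆ fcCenter G := fun a ha => by
    by_contra hnot
    exact Finsupp.mem_support_iff.1 ha (coeff_mapDomain_subgroupProj_of_notMem x hnot)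
  have hsupp₁ : ∀ b ∈ (x - x₀).coeff.support, b ∉ fcCenter G := fun b hb hmem => by
    refine Finsupp.mem_support_iff.1 hb ?_
    rw [coeff_sub, Finsupp.sub_apply, coeff_mapDomain_subgroupProj_of_mem x hmem, sub_self]
  have := finiteIndex_centralizer_of_subset_fcCenter x₀.coeff.support.finite_toSet hsupp₀
  obtain ⟨w, hw, hsep⟩ := exists_mem_forall_conj_notMem
    (Subgroup.centralizer (x₀.coeff.support : Set G)) (x - x₀).coeff.support.finite_toSet
    ((x₀ * y).coeff.support.finite_toSet.div y.coeff.support.finite_toSet) hsupp₁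
  refine mul_eq_zero_of_conj_notMem (x₁ := x - x₀) (g := w) ?_ (fun a ha => ?_) hsep
  · rw [add_sub_cancel, hxy]
  · rw [← Subgroup.mem_centralizer_iff.1 hw a ha, mul_inv_cancel_right]

lemma isPrimeRing_of_isPrimeRing_fcCenter (h : IsPrimeRing R[fcCenter G]) : IsPrimeRing R[G] := by
  intro x y hxy
  by_contra! hne
  obtain ⟨g, hg⟩ := exists_subgroupProj_single_mul_ne_zero (fcCenter G) hne.1
  obtain ⟨g', hg'⟩ := exists_subgroupProj_single_mul_ne_zero (fcCenter G) hne.2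
  refine (h _ _ fun a => ?_).elim hg hg'
  let b := mapDomain (fcCenter G).subtype a
  have hzero : ∀ c, single g 1 * x * c * (b * (single g' 1 * y)) = 0 := fun c => by
    calc single g 1 * x * c * (b * (single g' 1 * y))
        = single g 1 * (x * (c * b * single g' 1) * y) := by simp only [mul_assoc]
      _ = 0 := by rw [hxy, mul_zero]
  rw [mul_assoc, ← subgroupProj_mapDomain_mul, ← subgroupProj_mapDomain_mul,
    mapDomain_subgroupProj_fcCenter_mul_eq_zero hzero]
  exact comapDomain_zero _ _

lemma eq_bot_of_isPrimeRing_monoidAlgebra [Nontrivial R] (h : IsPrimeRing R[G]) (N : Subgroup G)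
    [N.Normal] [Finite N] : N = ⊥ := by
  have := Fintype.ofFinite N
  let s : R[G] := ∑ n : N, single (n : G) 1
  have hcentral (a : R[G]) : s * a = a * s := by
    induction a using MonoidAlgebra.induction_linear with
    | zero => simp
    | add a b ha hb => rw [mul_add, add_mul, ha, hb]
    | single g r =>
      rw [Finset.sum_mul, Finset.mul_sum]
      refine (Fintype.sum_equiv (MulAut.conjNormal g).toEquiv _ _ fun n => ?_).symm
      simp
  have habsorb (n : N) : s * single (n : G) 1 = s := by
    rw [Finset.sum_mul]
    exact Fintype.sum_equiv (Equiv.mulRight n) _ _ fun m => by simp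
  have hne : s ≠ 0 := fun hs => by
    classical
    have := congr(coeff $hs 1)
    simp [s, Finsupp.single_apply] at this
  refine (Subgroup.eq_bot_iff_forall N).2 fun n hn => ?_
  have hann (a : R[G]) : s * a * (1 - single n 1) = 0 := by
    rw [hcentral, mul_assoc, mul_sub, mul_one, habsorb ⟨n, hn⟩, sub_self, mul_zero]
  have hone := sub_eq_zero.1 ((h s _ hann).resolve_left hne)
  rw [one_def, single_left_inj one_ne_zero] at hone
  exact hone.symm

theorem monoidAlgebra_prime_iff_general (R : Type*) [Ring R] [Nontrivial R]
    (Γ : Type*) [Group Γ] :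
    IsPrimeRing R[Γ] ↔
      IsPrimeRing R ∧ ∀ N : Subgroup Γ, N.Normal → (N : Set Γ).Finite → N = ⊥ := by
  refine ⟨fun h => ⟨isPrimeRing_of_isPrimeRing_monoidAlgebra h, fun N _ hfin => ?_⟩,
    fun ⟨hR, hN⟩ => ?_⟩
  · have : Finite N := hfin
    exact eq_bot_of_isPrimeRing_monoidAlgebra h N
  · have := uniqueProds_fcCenter hN
    exact isPrimeRing_of_isPrimeRing_fcCenter (isPrimeRing_monoidAlgebra_of_uniqueProds hR)

end Ring

end MonoidAlgebra

lemma isPrimeRing_of_noZeroDivisors {R : Type*} [MulZeroOneClass R] [NoZeroDivisors R] :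
    IsPrimeRing R :=
  fun x y hxy => mul_eq_zero.1 (by simpa only [mul_one] using hxy 1)

/-- (Connell) For a field `k` of characteristic 0 and a group `Γ`, the group algebra
`k[Γ]` is a prime ring iff every finite normal subgroup of `Γ` is trivial. -/
theorem monoidAlgebra_prime_iff (k : Type*) [Field k] [CharZero k]
    (Γ : Type*) [Group Γ] :
    (∀ x y : MonoidAlgebra k Γ, (∀ a : MonoidAlgebra k Γ, x * a * y = 0) → x = 0 ∨ y = 0) ↔
      (∀ N : Subgroup Γ, N.Normal → (N : Set Γ).Finite → N = ⊥) :=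
  (monoidAlgebra_prime_iff_general k Γ).trans (and_iff_right isPrimeRing_of_noZeroDivisors)
end

section
/- Let k be a field of characteristic 0 and Γ any group. Then the group algebra k[Γ] is a semiprime ring, i.e., for every x ∈ k[Γ], if x·a·x = 0 for all a ∈ k[Γ], then x = 0. -/
/-!
If a ring carries an involution such that `x * star x = 0` forces `x = 0`, then it is semiprime:
`x * a * x = 0` for all `a` makes `z = x * star x` satisfy `z * star z = 0`, so `z = 0` and `x = 0`.
On `ℂ[Γ]` the involution `∑ c_g g ↦ ∑ conj c_g g⁻¹` is of this kind, because the coefficient of `1`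
in `x * star x` is `∑ |c_g|²`.

In general, the coefficients of `x` lie in a finitely generated subring `A`, and by the
Nullstellensatz, applied to `ℚ ⊗ A`, every nonzero element of `A` stays nonzero under some ring
homomorphism `A → ℂ`. As the condition `x * a * x = 0` need only be tested on group elements `a`,
it passes to the images of `x` in `ℂ[Γ]`; these all vanish, hence so does `x`.
-/

open scoped TensorProduct

/-- Semiprimeness of a ring `A`, in its elementwise form: `x A x = 0` only for `x = 0`. -/
def IsSemiprimeRing (A : Type*) [Mul A] [Zero A] : Prop :=
  ∀ x : A, (∀ a : A, x * a * x = 0) → x = 0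

theorem IsSemiprimeRing.of_mul_star_self_eq_zero {A : Type*} [NonUnitalSemiring A] [StarRing A]
    (h : ∀ x : A, x * star x = 0 → x = 0) : IsSemiprimeRing A := by
  intro x hx
  refine h x (h (x * star x) ?_)
  calc x * star x * star (x * star x) = x * star x * x * star x := by
        rw [star_mul, star_star, ← mul_assoc]
    _ = 0 := by rw [hx, zero_mul]

section GroupAlgebraStar

variable (R Γ : Type*) [Semiring R] [StarRing R] [Group Γ]

/-- The map `∑ r_g g ↦ ∑ star r_g g⁻¹` on a group algebra. -/
noncomputable def groupAlgebraStar : MonoidAlgebra R Γ ≃+ MonoidAlgebra R Γ :=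
  (MonoidAlgebra.mapAddEquiv Γ starAddEquiv).trans
    (MonoidAlgebra.mapDomainAddEquiv R (Equiv.inv Γ))

variable {R Γ}

theorem groupAlgebraStar_single (g : Γ) (r : R) :
    groupAlgebraStar R Γ (MonoidAlgebra.single g r) = MonoidAlgebra.single g⁻¹ (star r) := by
  simp [groupAlgebraStar]

theorem coeff_groupAlgebraStar (x : MonoidAlgebra R Γ) (g : Γ) :
    (groupAlgebraStar R Γ x).coeff g = star (x.coeff g⁻¹) := by
  simp [groupAlgebraStar]

theorem groupAlgebraStar_mul (x y : MonoidAlgebra R Γ) :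
    groupAlgebraStar R Γ (x * y) = groupAlgebraStar R Γ y * groupAlgebraStar R Γ x := by
  induction x using MonoidAlgebra.induction_linear with
  | zero => simp
  | add x x' hx hx' => simp [add_mul, mul_add, hx, hx']
  | single g r =>
    induction y using MonoidAlgebra.induction_linear with
    | zero => simp
    | add y y' hy hy' => simp [add_mul, mul_add, hy, hy']
    | single h s => simp [groupAlgebraStar_single]

variable (R Γ) in
/-- The star ring structure of a group algebra given by `groupAlgebraStar`. It is not a global
instance, since other involutions of `Γ` extend to the group algebra as well. -/
noncomputable abbrev groupAlgebraStarRing : StarRing (MonoidAlgebra R Γ) where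
  star := groupAlgebraStar R Γ
  star_involutive x := by
    ext g
    simp [coeff_groupAlgebraStar]
  star_mul := groupAlgebraStar_mul
  star_add := map_add _

theorem coeff_one_mul_groupAlgebraStar_self (x : MonoidAlgebra R Γ) :
    (x * groupAlgebraStar R Γ x).coeff 1 =
      ∑ g ∈ x.coeff.support, x.coeff g * star (x.coeff g) := by
  simp [MonoidAlgebra.coeff_mul_apply_left, Finsupp.sum, coeff_groupAlgebraStar]

end GroupAlgebraStar

section StarOrdered

variable {R Γ : Type*} [Ring R] [PartialOrder R] [StarRing R] [StarOrderedRing R]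
  [NoZeroDivisors R] [Group Γ]

theorem eq_zero_of_mul_groupAlgebraStar_self_eq_zero {x : MonoidAlgebra R Γ}
    (hx : x * groupAlgebraStar R Γ x = 0) : x = 0 := by
  have hsum : ∑ g ∈ x.coeff.support, x.coeff g * star (x.coeff g) = 0 := by
    rw [← coeff_one_mul_groupAlgebraStar_self, hx, MonoidAlgebra.coeff_zero, Finsupp.zero_apply]
  rw [Finset.sum_eq_zero_iff_of_nonneg fun g _ ↦ mul_star_self_nonneg (x.coeff g)] at hsum
  ext g
  by_contra hg
  exact hg (by simpa using hsum g (Finsupp.mem_support_iff.mpr hg))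

theorem IsSemiprimeRing.monoidAlgebra_of_starOrderedRing :
    IsSemiprimeRing (MonoidAlgebra R Γ) := by
  let := groupAlgebraStarRing R Γ
  exact .of_mul_star_self_eq_zero fun _ ↦ eq_zero_of_mul_groupAlgebraStar_self_eq_zero

end StarOrdered

section ChangeOfScalars

variable {M R S : Type*} [Monoid M] [CommSemiring R] [CommSemiring S]

theorem mul_mul_self_eq_zero_of_single {x : MonoidAlgebra R M}
    (hx : ∀ m, x * MonoidAlgebra.single m 1 * x = 0) (a : MonoidAlgebra R M) :
    x * a * x = 0 := by
  induction a using MonoidAlgebra.induction_linear with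
  | zero => simp
  | add a b ha hb => simp [add_mul, mul_add, ha, hb]
  | single m r =>
    have hsingle : MonoidAlgebra.single m r = r • MonoidAlgebra.single m (1 : R) := by simp
    rw [hsingle, mul_smul_comm, smul_mul_assoc, hx, smul_zero]

theorem mapRingHom_mul_mul_self_eq_zero (φ : R →+* S) {x : MonoidAlgebra R M}
    (hx : ∀ a, x * a * x = 0) (b : MonoidAlgebra S M) :
    MonoidAlgebra.mapRingHom M φ x * b * MonoidAlgebra.mapRingHom M φ x = 0 := by
  refine mul_mul_self_eq_zero_of_single (fun m ↦ ?_) b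
  simpa using congrArg (MonoidAlgebra.mapRingHom M φ) (hx (MonoidAlgebra.single m 1))

theorem IsSemiprimeRing.monoidAlgebra_of_forall_exists_ringHom
    (hS : IsSemiprimeRing (MonoidAlgebra S M)) (h : ∀ r : R, r ≠ 0 → ∃ φ : R →+* S, φ r ≠ 0) :
    IsSemiprimeRing (MonoidAlgebra R M) := by
  intro x hx
  ext m
  by_contra hm
  obtain ⟨φ, hφ⟩ := h (x.coeff m) hm
  have hφx : MonoidAlgebra.mapRingHom M φ x = 0 := hS _ (mapRingHom_mul_mul_self_eq_zero φ hx)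
  apply hφ
  rw [← MonoidAlgebra.coeff_mapRingHom, hφx, MonoidAlgebra.coeff_zero, Finsupp.zero_apply]

end ChangeOfScalars

section FinitelyGenerated

variable {R M : Type*} (D : Type*) [CommSemiring D] [Semiring R] [Algebra D R] [Monoid M]

theorem exists_fg_subalgebra_mem_range_mapRingHom (x : MonoidAlgebra R M) :
    ∃ A : Subalgebra D R, A.FG ∧ x ∈ Set.range (MonoidAlgebra.mapRingHom M (A.val : A →+* R)) := by
  classical
  let s : Finset R := x.coeff.support.image x.coeff
  refine ⟨Algebra.adjoin D s, ⟨s, rfl⟩, ?_⟩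
  have hcoeff (m : M) : x.coeff m ∈ Algebra.adjoin D (s : Set R) := by
    by_cases hm : x.coeff m = 0
    · exact hm ▸ zero_mem _
    · exact Algebra.subset_adjoin (Finset.mem_image_of_mem _ (Finsupp.mem_support_iff.mpr hm))
  rw [MonoidAlgebra.coe_mapRingHom, MonoidAlgebra.range_map]
  exact fun m ↦ ⟨⟨x.coeff m, hcoeff m⟩, rfl⟩

theorem IsSemiprimeRing.monoidAlgebra_of_fg_subalgebra
    (h : ∀ A : Subalgebra D R, A.FG → IsSemiprimeRing (MonoidAlgebra A M)) :
    IsSemiprimeRing (MonoidAlgebra R M) := by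
  intro x hx
  obtain ⟨A, hA, y, rfl⟩ := exists_fg_subalgebra_mem_range_mapRingHom D x
  have hinj : Function.Injective (MonoidAlgebra.mapRingHom M (A.val : A →+* R)) :=
    MonoidAlgebra.map_injective _ Subtype.val_injective
  have hy : y = 0 := h A hA y fun a ↦ hinj <| by rw [map_mul, map_mul, hx, map_zero]
  rw [hy, map_zero]

end FinitelyGenerated

section Nullstellensatz

variable {A : Type*} [CommRing A] {a : A}

theorem exists_isMaximal_notMem_of_notMem_radical [IsJacobsonRing A] {I : Ideal A}
    (ha : a ∉ I.radical) : ∃ m : Ideal A, I ≤ m ∧ m.IsMaximal ∧ a ∉ m := by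
  rw [Ideal.radical_eq_jacobson, Ideal.jacobson, Ideal.mem_sInf] at ha
  simpa [and_assoc] using ha

theorem exists_algHom_apply_ne_zero_of_finiteType (K L : Type*) [Field K] [Field L]
    [IsAlgClosed L] [Algebra K L] [Algebra K A] [Algebra.FiniteType K A]
    (ha : ¬IsNilpotent a) : ∃ φ : A →ₐ[K] L, φ a ≠ 0 := by
  have : IsJacobsonRing A := isJacobsonRing_of_finiteType (A := K)
  obtain ⟨m, -, hm, ham⟩ := exists_isMaximal_notMem_of_notMem_radical (I := ⊥) ha
  let : Field (A ⧸ m) := Ideal.Quotient.field m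
  have : Module.Finite K (A ⧸ m) := finite_of_finite_type_of_isJacobsonRing K (A ⧸ m)
  let ψ : A ⧸ m →ₐ[K] L := IsAlgClosed.lift
  refine ⟨ψ.comp (Ideal.Quotient.mkₐ K m), ?_⟩
  simpa [Ideal.Quotient.eq_zero_iff_mem] using ham

theorem exists_algHom_apply_ne_zero_of_flat (D K L : Type*) [CommRing D] [Field K] [Field L]
    [IsAlgClosed L] [Algebra D K] [FaithfulSMul D K] [Algebra K L] [Algebra D L]
    [IsScalarTower D K L] [Algebra D A] [Module.Flat D A] [Algebra.FiniteType D A]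
    (ha : ¬IsNilpotent a) : ∃ φ : A →ₐ[D] L, φ a ≠ 0 := by
  let ι : A →ₐ[D] K ⊗[D] A := Algebra.TensorProduct.includeRight
  have hι : Function.Injective ι :=
    Algebra.TensorProduct.includeRight_injective (FaithfulSMul.algebraMap_injective D K)
  have hιa : ¬IsNilpotent (ι a) := by rwa [IsNilpotent.map_iff hι]
  obtain ⟨φ, hφ⟩ := exists_algHom_apply_ne_zero_of_finiteType K L hιa
  exact ⟨(φ.restrictScalars D).comp ι, hφ⟩

end Nullstellensatz

open scoped ComplexOrder in
theorem monoidAlgebra_semiprime_general (R : Type*) [CommRing R] [IsReduced R]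
    [IsAddTorsionFree R] (Γ : Type*) [Group Γ] : IsSemiprimeRing (MonoidAlgebra R Γ) := by
  refine .monoidAlgebra_of_fg_subalgebra ℤ fun A hA ↦ ?_
  have : Algebra.FiniteType ℤ A := A.fg_iff_finiteType.mp hA
  have : IsReduced A := isReduced_of_injective A.val Subtype.val_injective
  refine .monoidAlgebra_of_forall_exists_ringHom (S := ℂ) .monoidAlgebra_of_starOrderedRing
    fun a ha ↦ ?_
  obtain ⟨φ, hφ⟩ := exists_algHom_apply_ne_zero_of_flat ℤ ℚ ℂ (mt IsNilpotent.eq_zero ha)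
  exact ⟨φ, hφ⟩

/-- For a field `k` of characteristic 0 and any group `Γ`, the group algebra `k[Γ]`
is semiprime. -/
theorem monoidAlgebra_semiprime (k : Type*) [Field k] [CharZero k]
    (Γ : Type*) [Group Γ] :
    ∀ x : MonoidAlgebra k Γ, (∀ a : MonoidAlgebra k Γ, x * a * x = 0) → x = 0 :=
  monoidAlgebra_semiprime_general k Γ
end

section
/- Let k be a field of characteristic 0 containing an element transcendental over ℚ. Then for every group Γ, the group algebra k[Γ] is semiprimitive, i.e., its Jacobson radical (the intersection of all maximal left ideals) is zero. -/
/-!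
The proof is by Galois descent along the automorphisms of an algebraically closed field.

By Nakayama's lemma the radical can only grow when `k` is replaced by its algebraic closure `L`, so
suppose `J(L[Γ]) ≠ 0`. The radical is an `L`-subspace stable under `Aut(L/ℚ)`, whose fixed field is
`ℚ`. Hence an element of minimal support in it, scaled to have a coefficient `1`, has rational
coefficients.

So let `0 ≠ q ∈ ℚ[Γ]` lie in `J(L[Γ])`, and put `b = q* q`, where `*` is the involution `g ↦ g⁻¹`.
Let `t ∈ L` be transcendental. As `b` lies in the radical, `b - t` has a left inverse. For every
`c ∈ ℚ` there is an automorphism of `L` with `t ↦ t + c`; it fixes `b`, hence carries this inverse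
to a left inverse of `b - (t + c)` with the same finite support. Infinitely many resolvents
in a finite-dimensional space are linearly dependent, which makes `b` algebraic over `L`. An
algebraic element of the radical is nilpotent. But the coefficient of `x* x` at `1` is the sum of
the squares of the coefficients of `x`, so the self-adjoint element `b ≠ 0` is not nilpotent.
-/

open MonoidAlgebra

/-! ### Automorphisms of algebraically closed fields -/

section Automorphisms

variable {K L : Type*} [Field K] [Field L] [Algebra K L] [IsAlgClosed L]

-- `L` is an algebraic closure of the polynomial ring on a transcendence basis.
lemma exists_algEquiv_aeval_eq {R A ι : Type*} [CommSemiring R] [CommRing A] [Algebra R A]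
    [Algebra R L] [Algebra A L] [IsScalarTower R A L] {v : ι → L} (hv : IsTranscendenceBasis A v)
    (φ : MvPolynomial ι A ≃ₐ[R] MvPolynomial ι A) :
    ∃ σ : L ≃ₐ[R] L, ∀ p, σ (MvPolynomial.aeval v p) = MvPolynomial.aeval v (φ p) := by
  let := IsAlgClosed.isAlgClosure_of_transcendence_basis v hv
  let e := hv.1.aevalEquiv.toRingEquiv
  let σ : L ≃+* L := IsAlgClosure.equivOfEquiv L L ((e.symm.trans φ.toRingEquiv).trans e)
  have hσ (p : MvPolynomial ι A) :
      σ (MvPolynomial.aeval v p) = MvPolynomial.aeval v (φ p) := by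
    simp only [σ, ← hv.1.algebraMap_aevalEquiv, IsAlgClosure.equivOfEquiv_algebraMap]
    simp [e]
  refine ⟨AlgEquiv.ofRingEquiv (f := σ) fun r ↦ ?_, hσ⟩
  have aeval_algebraMap : MvPolynomial.aeval v (algebraMap R (MvPolynomial ι A) r) =
      algebraMap R L r := by
    rw [IsScalarTower.algebraMap_apply R A (MvPolynomial ι A), AlgHom.commutes,
      ← IsScalarTower.algebraMap_apply]
  simpa only [φ.commutes, aeval_algebraMap] using hσ (algebraMap R (MvPolynomial ι A) r)

lemma exists_algEquiv_extending {R A : Type*} [CommSemiring R] [Field A] [Algebra R A]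
    [Algebra R L] [Algebra A L] [IsScalarTower R A L] (τ : A ≃ₐ[R] A) :
    ∃ σ : L ≃ₐ[R] L, ∀ a, σ (algebraMap A L a) = algebraMap A L (τ a) := by
  obtain ⟨B, hB⟩ := exists_isTranscendenceBasis A L
  obtain ⟨σ, hσ⟩ := exists_algEquiv_aeval_eq hB (MvPolynomial.mapAlgEquiv B τ)
  exact ⟨σ, fun a ↦ by simpa using hσ (MvPolynomial.C a)⟩

lemma exists_algEquiv_apply_eq_add {t : L} (ht : Transcendental K t) (c : K) :
    ∃ σ : L ≃ₐ[K] L, σ t = t + algebraMap K L c := by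
  have ht' : AlgebraicIndepOn K id {t} := by
    simpa [AlgebraicIndepOn, algebraicIndependent_unique_type_iff] using ht
  obtain ⟨B, htB, hB⟩ := exists_isTranscendenceBasis_superset ht'
  let translation : MvPolynomial B K ≃ₐ[K] MvPolynomial B K := AlgEquiv.ofAlgHom
    (MvPolynomial.aeval fun i ↦ MvPolynomial.X i + MvPolynomial.C c)
    (MvPolynomial.aeval fun i ↦ MvPolynomial.X i - MvPolynomial.C c)
    (by ext1 i; simp [MvPolynomial.algebraMap_eq]) (by ext1 i; simp [MvPolynomial.algebraMap_eq])
  obtain ⟨σ, hσ⟩ := exists_algEquiv_aeval_eq hB translation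
  exact ⟨σ, by simpa [translation] using hσ (MvPolynomial.X ⟨t, htB rfl⟩)⟩

lemma mem_range_algebraMap_of_forall_algEquiv_apply_eq [PerfectField K] {c : L}
    (hc : ∀ σ : L ≃ₐ[K] L, σ c = c) : c ∈ Set.range (algebraMap K L) := by
  by_cases hcK : IsAlgebraic K c
  · have : IsAlgClosure K (algebraicClosure K L) := algebraicClosure.isAlgClosure K L
    have : IsGalois K (algebraicClosure K L) := {}
    obtain ⟨r, hr⟩ := (InfiniteGalois.mem_range_algebraMap_iff_fixed
        (⟨c, mem_algebraicClosure_iff.2 hcK⟩ : algebraicClosure K L)).2 fun τ ↦ by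
      obtain ⟨σ, hσ⟩ := exists_algEquiv_extending (R := K) (L := L) τ
      exact Subtype.ext ((hσ _).symm.trans (hc σ))
    exact ⟨r, congrArg Subtype.val hr⟩
  · obtain ⟨σ, hσ⟩ := exists_algEquiv_apply_eq_add hcK 1
    simp [hc] at hσ

end Automorphisms

/-! ### Positivity of the involution `g ↦ g⁻¹` -/

section Antipode

open HopfAlgebra

variable {R G : Type*} [Group G]

lemma antipode_antipode_monoidAlgebra [CommSemiring R] (x : MonoidAlgebra R G) :
    antipode R (antipode R x) = x := by
  induction x using MonoidAlgebra.induction_linear with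
  | zero => simp
  | add x y hx hy => simp [hx, hy]
  | single g r => simp

lemma coeff_one_antipode_mul [CommSemiring R] (x y : MonoidAlgebra R G) :
    (antipode R x * y).coeff 1 = x.coeff.sum fun g r ↦ r * y.coeff g := by
  induction x using MonoidAlgebra.induction_linear with
  | zero => simp
  | add x₁ x₂ h₁ h₂ =>
    rw [map_add, add_mul, coeff_add, Finsupp.add_apply, h₁, h₂, coeff_add,
      Finsupp.sum_add_index'] <;> simp [add_mul]
  | single g r => simp

variable [CommRing R] [LinearOrder R] [IsStrictOrderedRing R]

lemma antipode_mul_self_ne_zero {x : MonoidAlgebra R G} (hx : x ≠ 0) : antipode R x * x ≠ 0 := by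
  contrapose! hx
  have hsum : ∑ g ∈ x.coeff.support, x.coeff g * x.coeff g = 0 := by
    simpa [hx, Finsupp.sum] using (coeff_one_antipode_mul x x).symm
  rw [Finset.sum_eq_zero_iff_of_nonneg fun _ _ ↦ mul_self_nonneg _] at hsum
  ext g
  by_contra hg
  exact hg (mul_self_eq_zero.1 (hsum g (Finsupp.mem_support_iff.2 hg)))

lemma not_isNilpotent_of_antipode_eq {b : MonoidAlgebra R G} (hb : antipode R b = b)
    (hb₀ : b ≠ 0) : ¬ IsNilpotent b := by
  have two_pow (n : ℕ) : antipode R (b ^ 2 ^ n) = b ^ 2 ^ n ∧ b ^ 2 ^ n ≠ 0 := by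
    induction n with
    | zero => simpa using ⟨hb, hb₀⟩
    | succ n ih =>
      rw [pow_succ 2 n, pow_mul, pow_two, antipode_mul_antidistrib, ih.1]
      exact ⟨rfl, by simpa [ih.1] using antipode_mul_self_ne_zero ih.2⟩
  rintro ⟨m, hm⟩
  exact (two_pow m).2 (pow_eq_zero_of_le Nat.lt_two_pow_self.le hm)

lemma not_isNilpotent_antipode_mul_self {x : MonoidAlgebra R G} (hx : x ≠ 0) :
    ¬ IsNilpotent (antipode R x * x) :=
  not_isNilpotent_of_antipode_eq
    (by rw [antipode_mul_antidistrib, antipode_antipode_monoidAlgebra])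
    (antipode_mul_self_ne_zero hx)

end Antipode

/-! ### The Jacobson radical under extension of scalars -/

section Jacobson

lemma mem_ringJacobson_iff_exists_left_inverse {R : Type*} [Ring R] {a : R} :
    a ∈ Ring.jacobson R ↔ ∀ y, ∃ z, z * (1 + y * a) = 1 := by
  simp only [← Ideal.jacobson_bot, Ideal.mem_jacobson_iff, Ideal.mem_bot, sub_eq_zero, mul_add,
    mul_one, ← mul_assoc, add_comm]

lemma eq_top_of_sup_jacobson_eq_top {R M : Type*} [Ring R] [AddCommGroup M] [Module R M]
    [Module.Finite R M] {N : Submodule R M} (hN : N ⊔ Module.jacobson R M = ⊤) : N = ⊤ := by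
  by_contra hne
  obtain ⟨P, hP, hNP⟩ := (eq_top_or_exists_le_coatom N).resolve_left hne
  exact hP.1 (top_le_iff.1 (hN ▸ sup_le hNP (sInf_le hP)))

section CentralizingExtension

variable {R S : Type*} [Ring R] [Ring S] [Module R S] [IsScalarTower R S S] {E : Set S} {a : R}

lemma mul_smul_one_mem_jacobson (hspan : Submodule.span R E = ⊤)
    (hcomm : ∀ e ∈ E, ∀ r : R, e * r • (1 : S) = r • e) (ha : a ∈ Ring.jacobson R) (s : S) :
    s * a • (1 : S) ∈ Module.jacobson R S := by
  have hs : s ∈ Submodule.span R E := hspan ▸ Submodule.mem_top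
  induction hs using Submodule.span_induction with
  | mem e he =>
    rw [hcomm e he]
    exact Ring.jacobson_smul_top_le R S (Submodule.smul_mem_smul ha trivial)
  | zero => simp
  | add x y _ _ hx hy => simpa [add_mul] using add_mem hx hy
  | smul r x _ hx => simpa only [smul_mul_assoc] using Submodule.smul_mem _ r hx

-- Modulo the radical of the `R`-module `S`, right multiplication by `1 + y a` is the identity.
lemma smul_one_mem_ringJacobson (hE : E.Finite) (hspan : Submodule.span R E = ⊤)
    (hcomm : ∀ e ∈ E, ∀ r : R, e * r • (1 : S) = r • e) (ha : a ∈ Ring.jacobson R) :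
    a • (1 : S) ∈ Ring.jacobson S := by
  refine mem_ringJacobson_iff_exists_left_inverse.2 fun y ↦ ?_
  have : Module.Finite R S := ⟨Submodule.fg_def.2 ⟨E, hE, hspan⟩⟩
  let mulRight : S →ₗ[R] S :=
    { toFun s := s * (1 + y * a • (1 : S))
      map_add' s t := add_mul s t _
      map_smul' r s := smul_mul_assoc r s _ }
  suffices LinearMap.range mulRight = ⊤ from LinearMap.range_eq_top.1 this 1
  refine eq_top_of_sup_jacobson_eq_top (eq_top_iff.2 fun s _ ↦ ?_)
  have hs : s = mulRight s + -(s * y) * a • (1 : S) := by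
    simp only [mulRight, LinearMap.coe_mk, AddHom.coe_mk]
    noncomm_ring
  rw [hs]
  exact Submodule.add_mem_sup ⟨s, rfl⟩ (mul_smul_one_mem_jacobson hspan hcomm ha _)

end CentralizingExtension

variable {k K L M : Type*} [CommRing k] [CommRing K] [CommRing L] [Algebra k K] [Algebra k L]
  [Monoid M]

lemma mapRingHom_mem_ringJacobson_of_finite [Module.Finite k K] {a : MonoidAlgebra k M}
    (ha : a ∈ Ring.jacobson (MonoidAlgebra k M)) :
    mapRingHom M (algebraMap k K) a ∈ Ring.jacobson (MonoidAlgebra K M) := by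
  let f := mapRingHom M (algebraMap k K)
  let : Module (MonoidAlgebra k M) (MonoidAlgebra K M) := Module.compHom _ f
  have smul_def (r : MonoidAlgebra k M) (s : MonoidAlgebra K M) : r • s = f r * s := rfl
  have : IsScalarTower (MonoidAlgebra k M) (MonoidAlgebra K M) (MonoidAlgebra K M) :=
    ⟨fun _ _ _ ↦ mul_assoc _ _ _⟩
  obtain ⟨E, hE, hspan⟩ := Submodule.fg_def.1 (Module.Finite.fg_top (R := k) (M := K))
  have single_mem (m : M) (c : K) :
      single m c ∈ Submodule.span (MonoidAlgebra k M) (single (1 : M) '' E) := by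
    have hc : c ∈ Submodule.span k E := hspan ▸ Submodule.mem_top
    induction hc using Submodule.span_induction with
    | mem e he =>
      have : single m e = single m (1 : k) • single (1 : M) e := by simp [smul_def, f]
      exact this ▸ Submodule.smul_mem _ _ (Submodule.subset_span ⟨e, he, rfl⟩)
    | zero => simp
    | add x y _ _ hx hy => simpa [single_add] using add_mem hx hy
    | smul r x _ hx =>
      have : single m (r • x) = single (1 : M) r • single m x := by
        simp [smul_def, f, Algebra.smul_def]
      exact this ▸ Submodule.smul_mem _ _ hx
  have := smul_one_mem_ringJacobson (hE.image (single (1 : M)))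
    (eq_top_iff.2 fun s _ ↦ by
      induction s using MonoidAlgebra.induction_linear with
      | zero => exact zero_mem _
      | add x y hx hy => exact add_mem (hx trivial) (hy trivial)
      | single m c => exact single_mem m c)
    (by
      rintro _ ⟨e, _, rfl⟩ r
      simpa [smul_def] using Algebra.commutes e (f r)) ha
  simpa [smul_def, f] using this

lemma exists_finite_subalgebra_mem_range_mapRingHom [Algebra.IsIntegral k L]
    (y : MonoidAlgebra L M) : ∃ A : Subalgebra k L, Module.Finite k A ∧
      y ∈ Set.range (mapRingHom M (algebraMap A L)) := by
  let A := Algebra.adjoin k (Set.range y.coeff)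
  have hfin : Module.Finite k A := Module.Finite.iff_fg.2 <|
    fg_adjoin_of_finite y.coeff.finite_range fun c _ ↦ Algebra.IsIntegral.isIntegral c
  refine ⟨A, hfin, ?_⟩
  rw [coe_mapRingHom, range_map]
  exact fun m ↦ ⟨⟨y.coeff m, Algebra.subset_adjoin ⟨m, rfl⟩⟩, rfl⟩

lemma mapRingHom_mem_ringJacobson_of_isIntegral [Algebra.IsIntegral k L] {a : MonoidAlgebra k M}
    (ha : a ∈ Ring.jacobson (MonoidAlgebra k M)) :
    mapRingHom M (algebraMap k L) a ∈ Ring.jacobson (MonoidAlgebra L M) := by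
  refine mem_ringJacobson_iff_exists_left_inverse.2 fun y ↦ ?_
  obtain ⟨A, _, y, rfl⟩ := exists_finite_subalgebra_mem_range_mapRingHom (k := k) y
  obtain ⟨z, hz⟩ := mem_ringJacobson_iff_exists_left_inverse.1
    (mapRingHom_mem_ringJacobson_of_finite (K := A) ha) y
  refine ⟨mapRingHom M (algebraMap A L) z, ?_⟩
  rw [IsScalarTower.algebraMap_eq k A L, mapRingHom_comp, RingHom.comp_apply]
  simpa only [map_mul, map_add, map_one] using congrArg (mapRingHom M (algebraMap A L)) hz

lemma ringJacobson_monoidAlgebra_eq_bot_of_isIntegral [Algebra.IsIntegral k L] [FaithfulSMul k L]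
    (h : Ring.jacobson (MonoidAlgebra L M) = ⊥) : Ring.jacobson (MonoidAlgebra k M) = ⊥ := by
  refine eq_bot_iff.2 fun a ha ↦ ?_
  have ha' := mapRingHom_mem_ringJacobson_of_isIntegral (L := L) ha
  rw [h, Ideal.mem_bot] at ha'
  exact map_injective _ (FaithfulSMul.algebraMap_injective k L)
    (ha'.trans (MonoidAlgebra.map_zero _).symm)

end Jacobson

/-! ### Galois descent of the radical -/

section Descent

lemma exists_ne_zero_mem_forall_apply_coeff_eq {F M T : Type*} [DivisionRing F] (σ : T → F →+* F)
    {W : Submodule F (MonoidAlgebra F M)} (hσW : ∀ i, ∀ x ∈ W, map (σ i : F →+ F) x ∈ W)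
    (hW : W ≠ ⊥) : ∃ x ∈ W, x ≠ 0 ∧ ∀ i m, σ i (x.coeff m) = x.coeff m := by
  obtain ⟨x, ⟨hxW, hx₀⟩, hmin⟩ := exists_minimalFor_of_wellFoundedLT (fun x ↦ x ∈ W ∧ x ≠ 0)
    (fun x ↦ x.coeff.support) (W.exists_mem_ne_zero_of_ne_bot hW)
  obtain ⟨m₀, hm₀⟩ : ∃ m, x.coeff m ≠ 0 := by
    by_contra! h
    exact hx₀ (by ext m; simpa using h m)
  let y := (x.coeff m₀)⁻¹ • x
  have hyW : y ∈ W := W.smul_mem _ hxW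
  have hym₀ : y.coeff m₀ = 1 := by simp [y, hm₀]
  refine ⟨y, hyW, fun hy ↦ by simp [hy] at hym₀, fun i m ↦ ?_⟩
  -- The support of `σ i y - y` is contained in that of `x` and misses `m₀`.
  let d := map (σ i : F →+ F) y - y
  have hd (m : M) : d.coeff m = σ i (y.coeff m) - y.coeff m := by simp [d]
  have hd₀ : d = 0 := by
    by_contra hne
    have hsub : d.coeff.support ⊆ x.coeff.support := fun m hm ↦ by
      rw [Finsupp.mem_support_iff, hd] at hm
      refine Finsupp.mem_support_iff.2 fun hxm ↦ hm ?_
      simp [y, hxm]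
    have := hmin ⟨W.sub_mem (hσW i y hyW) hyW, hne⟩ hsub (Finsupp.mem_support_iff.2 hm₀)
    simp [hd, hym₀, -coeff_sub, d] at this
  exact sub_eq_zero.1 (by rw [← hd, hd₀, coeff_zero, Finsupp.zero_apply])

lemma exists_ne_zero_mapRingHom_mem_ringJacobson {K L M : Type*} [Field K] [PerfectField K]
    [Field L] [Algebra K L] [IsAlgClosed L] [Monoid M]
    (h : Ring.jacobson (MonoidAlgebra L M) ≠ ⊥) :
    ∃ q : MonoidAlgebra K M, q ≠ 0 ∧
      mapRingHom M (algebraMap K L) q ∈ Ring.jacobson (MonoidAlgebra L M) := by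
  obtain ⟨x, hxJ, hx₀, hx⟩ := exists_ne_zero_mem_forall_apply_coeff_eq
    (fun σ : L ≃ₐ[K] L ↦ (σ : L →+* L))
    (W := (Ring.jacobson (MonoidAlgebra L M)).restrictScalars L)
    (fun σ _ hx ↦ Ring.le_comap_jacobson
      (mapRingEquiv M (σ : L ≃+* L) : MonoidAlgebra L M →+* MonoidAlgebra L M) hx)
    (by simpa using h)
  obtain ⟨q, rfl⟩ : x ∈ Set.range (mapRingHom M (algebraMap K L)) := by
    rw [coe_mapRingHom, range_map]
    exact fun m ↦ mem_range_algebraMap_of_forall_algEquiv_apply_eq fun σ ↦ hx σ m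
  exact ⟨q, fun hq ↦ hx₀ (by rw [hq, map_zero]), hxJ⟩

end Descent

/-! ### Algebraic elements of the radical -/

section Algebraic

open Polynomial

variable {F A : Type*} [Field F] [Ring A] [Algebra F A] {b : A}

-- Multiplying a dependence relation by `∏ (b - s j)` gives a polynomial relation for `b`.
lemma isAlgebraic_of_not_linearIndependent_resolvent {ι : Type*} {s : ι → F}
    (hs : Function.Injective s) {u : ι → A} (hu : ∀ i, u i * (b - algebraMap F A (s i)) = 1)
    (hdep : ¬ LinearIndependent F u) : IsAlgebraic F b := by
  classical
  rw [not_linearIndependent_iff] at hdep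
  obtain ⟨I, c, hc, i, hi, hci⟩ := hdep
  let p : F[X] := ∑ j ∈ I, C (c j) * Lagrange.nodal (I.erase j) s
  have eval_p : p.eval (s i) = c i * (Lagrange.nodal (I.erase i) s).eval (s i) := by
    rw [eval_finsetSum, Finset.sum_eq_single_of_mem i hi, eval_mul, eval_C]
    intro j _ hji
    rw [eval_mul, Lagrange.eval_nodal_at_node (Finset.mem_erase.2 ⟨hji.symm, hi⟩), mul_zero]
  refine ⟨p, fun hp ↦ ?_, ?_⟩
  · refine mul_ne_zero hci (Lagrange.eval_nodal_not_at_node fun j hj ↦ ?_)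
      (eval_p.symm.trans (by rw [hp, eval_zero]))
    exact hs.ne (Finset.ne_of_mem_erase hj).symm
  · have aeval_term (j : ι) (hj : j ∈ I) : aeval b (C (c j) * Lagrange.nodal (I.erase j) s) =
        c j • u j * aeval b (Lagrange.nodal I s) := by
      rw [Lagrange.nodal_eq_mul_nodal_erase hj]
      simp only [map_mul, map_sub, aeval_X, aeval_C]
      rw [← mul_assoc, smul_mul_assoc, hu, Algebra.smul_def, mul_one]
    rw [map_sum, Finset.sum_congr rfl aeval_term, ← Finset.sum_mul, hc, zero_mul]

lemma exists_mul_aeval_eq_one_of_mem_ringJacobson (hb : b ∈ Ring.jacobson A) {p : F[X]}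
    (hp : p.coeff 0 ≠ 0) : ∃ z, z * aeval b p = 1 := by
  let y := (p.coeff 0)⁻¹ • aeval b p.divX
  obtain ⟨z, hz⟩ := mem_ringJacobson_iff_exists_left_inverse.1 hb y
  have hpb : aeval b p = p.coeff 0 • (1 + y * b) := by
    conv_lhs => rw [← divX_mul_X_add p]
    simp [y, smul_inv_smul₀ hp, Algebra.algebraMap_eq_smul_one, add_comm]
  exact ⟨(p.coeff 0)⁻¹ • z, by rw [hpb, smul_mul_smul_comm, inv_mul_cancel₀ hp, hz, one_smul]⟩

lemma isNilpotent_of_isAlgebraic_of_mem_ringJacobson (hb : b ∈ Ring.jacobson A)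
    (halg : IsAlgebraic F b) : IsNilpotent b := by
  obtain ⟨p, hp₀, hpb⟩ := halg
  obtain ⟨q, hpq, hq⟩ := exists_eq_pow_rootMultiplicity_mul_and_not_dvd p hp₀ 0
  rw [map_zero, sub_zero] at hpq hq
  obtain ⟨z, hz⟩ := exists_mul_aeval_eq_one_of_mem_ringJacobson hb (mt X_dvd_iff.2 hq)
  set n := p.rootMultiplicity 0
  refine ⟨n, ?_⟩
  calc b ^ n = z * aeval b q * b ^ n := by rw [hz, one_mul]
    _ = z * aeval b (X ^ n * q) := by
      rw [mul_comm (X ^ n), map_mul, map_pow, aeval_X, mul_assoc]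
    _ = 0 := by rw [← hpq, hpb, mul_zero]

end Algebraic

/-! ### Semiprimitivity -/

section Semiprimitive

variable {K L : Type*} [Field K] [Field L] [Algebra K L]

lemma not_linearIndependent_mapRingHom {T F M : Type*} [Infinite T] [Field F] [Monoid M]
    (σ : T → F →+* F) (z : MonoidAlgebra F M) :
    ¬ LinearIndependent F fun i ↦ mapRingHom M (σ i) z := by
  have hcomb (i : T) : mapRingHom M (σ i) z = Fintype.linearCombination F
      (fun m : z.coeff.support ↦ single (m : M) (1 : F)) fun m ↦ σ i (z.coeff m) := by
    conv_lhs => rw [← sum_coeff_single z, Finsupp.sum, map_sum, ← Finset.sum_coe_sort]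
    simp [Fintype.linearCombination_apply]
  intro h
  simp_rw [hcomb] at h
  have := (h.of_comp _).finite
  exact not_finite T

lemma isNilpotent_of_mapRingHom_mem_ringJacobson {M : Type*} [Infinite K] [IsAlgClosed L]
    [Monoid M] {t : L} (ht : Transcendental K t) {b : MonoidAlgebra K M}
    (hb : mapRingHom M (algebraMap K L) b ∈ Ring.jacobson (MonoidAlgebra L M)) :
    IsNilpotent b := by
  set b' := mapRingHom M (algebraMap K L) b with hb'
  have ht₀ : (Polynomial.X - Polynomial.C t).coeff 0 ≠ 0 := by
    simpa using fun h : t = 0 ↦ ht (h ▸ isAlgebraic_zero)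
  obtain ⟨z, hz⟩ := exists_mul_aeval_eq_one_of_mem_ringJacobson hb ht₀
  rw [map_sub, Polynomial.aeval_X, Polynomial.aeval_C] at hz
  choose σ hσ using exists_algEquiv_apply_eq_add ht
  let Φ (c : K) := mapRingHom M (σ c : L →+* L)
  have hΦb (c : K) : Φ c b' = b' := by
    ext m
    simp [Φ, hb']
  have hΦt (c : K) : Φ c (algebraMap L _ t) = algebraMap L _ (t + algebraMap K L c) := by
    simp [Φ, hσ]
  have hΦz (c : K) : Φ c z * (b' - algebraMap L _ (t + algebraMap K L c)) = 1 := by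
    simpa only [map_mul, map_sub, map_one, hΦb, hΦt] using congrArg (Φ c) hz
  have halg : IsAlgebraic L b' := isAlgebraic_of_not_linearIndependent_resolvent
    ((add_right_injective t).comp (algebraMap K L).injective) hΦz
    (not_linearIndependent_mapRingHom _ z)
  exact (IsNilpotent.map_iff (map_injective _ (algebraMap K L).injective)).1
    (isNilpotent_of_isAlgebraic_of_mem_ringJacobson hb halg)

theorem ringJacobson_monoidAlgebra_eq_bot_of_isAlgClosed [LinearOrder K] [IsStrictOrderedRing K]
    [IsAlgClosed L] {t : L} (ht : Transcendental K t) (G : Type*) [Group G] :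
    Ring.jacobson (MonoidAlgebra L G) = ⊥ := by
  by_contra hJ
  obtain ⟨q, hq₀, hq⟩ := exists_ne_zero_mapRingHom_mem_ringJacobson (K := K) hJ
  refine not_isNilpotent_antipode_mul_self hq₀
    (isNilpotent_of_mapRingHom_mem_ringJacobson ht ?_)
  rw [map_mul]
  exact Ideal.mul_mem_left _ _ hq

end Semiprimitive

/-- If `k` is a field of characteristic 0 containing an element transcendental over `ℚ`,
then for every group `Γ` the group algebra `k[Γ]` is semiprimitive: its Jacobson radical,
the intersection of all maximal left ideals, is zero. -/
theorem monoidAlgebra_semiprimitive (k : Type*) [Field k] [CharZero k]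
    (ht : ∃ t : k, Transcendental ℚ t) (Γ : Type*) [Group Γ] :
    (⊥ : Ideal (MonoidAlgebra k Γ)).jacobson = ⊥ := by
  obtain ⟨t, ht⟩ := ht
  have ht' : Transcendental ℚ (algebraMap k (AlgebraicClosure k) t) :=
    (transcendental_algebraMap_iff (algebraMap k (AlgebraicClosure k)).injective).2 ht
  rw [Ideal.jacobson_bot]
  exact ringJacobson_monoidAlgebra_eq_bot_of_isIntegral
    (ringJacobson_monoidAlgebra_eq_bot_of_isAlgClosed ht' Γ)
end

section
/- Let k be a field and let Γ be a polycyclic-by-finite group. Then the group algebra k[Γ] is a Noetherian ring. -/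
/-!
A skew Laurent version of Hilbert's basis theorem does the work. Let `R` be a left Noetherian
subring of `S` and `x` a unit of `S` with `x R x⁻¹ = R` whose powers span `S` over `R`. To a left
ideal `I` of `S` attach the left ideals `Lₙ(I) = R ∩ (I + R x + ⋯ + R x ^ (n - 1))` of `R`, which
increase with `n` and with `I`. If `I ≤ J` and `Lₙ(I) = Lₙ(J)` for all `n`, then `I = J`: after
multiplication by a power of `x` an element of `J` has no negative powers of `x`, its constant term
can be cancelled using an element of `I`, and dividing the rest by `x` lowers the degree. Hence the
left ideals of `S` map strictly monotonically to the increasing sequences of left ideals of `R`,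
which satisfy the ascending chain condition.

For `N` normal in `G` with `G ⧸ N` cyclic, this passes from `k[N]` to `k[G]`. In a polycyclic group
the derived series is climbed from the trivial subgroup by adjoining the finitely many generators of
each term one at a time: every subgroup between `⁅D, D⁆` and `D` is normalized by `D`. Finally, for
`H` of finite index in `G`, the ring `k[G]` is a finitely generated left `k[H]`-module.
-/

/-- A group is polycyclic if it is solvable and every subgroup is finitely generated. -/
def IsPolycyclic (G : Type*) [Group G] : Prop :=
  IsSolvable G ∧ ∀ H : Subgroup G, H.FG

/-- A group is polycyclic-by-finite if it has a polycyclic normal subgroup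
of finite index. -/
def IsPolycyclicByFinite (G : Type*) [Group G] : Prop :=
  ∃ N : Subgroup G, N.Normal ∧ IsPolycyclic N ∧ Finite (G ⧸ N)

instance wellFoundedGT_orderHom_nat {α : Type*} [PartialOrder α] [WellFoundedGT α] :
    WellFoundedGT (ℕ →o α) := by
  -- The diagonal of a chain settles all late columns; the finitely many other columns form a chain
  -- in a finite power of `α`.
  refine wellFoundedGT_iff_monotone_chain_condition.2 fun a => ?_
  obtain ⟨N, hN⟩ := WellFoundedGT.monotone_chain_condition
    (⟨fun n => a n n, fun i j hij => (a.mono hij i).trans ((a j).mono hij)⟩ : ℕ →o α)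
  have eq_diagonal : ∀ i j, N ≤ i → N ≤ j → a i j = a N N := fun i j hi hj => by
    refine le_antisymm ?_ ((a.mono hi N).trans ((a i).mono hj))
    calc a i j ≤ a (max i j) (max i j) :=
          (a.mono (le_max_left i j) j).trans ((a _).mono (le_max_right i j))
      _ = a N N := (hN _ (hi.trans (le_max_left i j))).symm
  have : WellFoundedGT (Fin N → α) := inferInstanceAs (WellFoundedLT (Fin N → αᵒᵈ))
  obtain ⟨M, hM⟩ := WellFoundedGT.monotone_chain_condition
    (⟨fun i (j : Fin N) => a i j, fun _ _ hij j => a.mono hij j⟩ : ℕ →o (Fin N → α))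
  refine ⟨max N M, fun i hi => OrderHom.ext _ _ (funext fun j => ?_)⟩
  rcases lt_or_ge j N with hj | hj
  · have eq_initial : ∀ i, M ≤ i → a M j = a i j := fun i hi => congrFun (hM i hi) ⟨j, hj⟩
    exact (eq_initial _ (le_max_right N M)).symm.trans
      (eq_initial i ((le_max_right N M).trans hi))
  · rw [eq_diagonal _ j (le_max_left N M) hj, eq_diagonal i j ((le_max_left N M).trans hi) hj]

section SkewLaurent

variable {S : Type*} [Ring S] (R : Subring S) (x : Sˣ)

/-- The left `R`-submodule of `S` spanned by the powers `x ^ i` with `i ∈ A`: skew Laurent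
polynomials in `x` with exponents in `A` and coefficients in `R` written on the left. The powers of
`x` need not be linearly independent over `R`, so `x` may have finite order. -/
def zpowSpan (A : Set ℤ) : Submodule R S :=
  Submodule.span R ((fun i : ℤ => (↑(x ^ i) : S)) '' A)

/-- The left ideals `R ∩ (I + R x + ⋯ + R x ^ (n - 1))` of constant terms of the elements of `I`
that are skew polynomials in `x` of degree less than `n`, as an increasing sequence in `n`. The
intersection with `R` is encoded as the preimage under `r ↦ r • 1`. As `x` is a unit, constant terms
do the work of the leading coefficients in Hilbert's basis theorem; they form left ideals increasing
in `n` without any twisting by conjugation with `x`. -/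
def constantTermIdeal (I : Ideal S) : ℕ →o Ideal R where
  toFun n := (I.restrictScalars R ⊔ zpowSpan R x (Set.Ioo 0 n)).comap
    (LinearMap.toSpanSingleton R S 1)
  monotone' m n hmn := Submodule.comap_mono <| sup_le_sup_left
    (Submodule.span_mono <| Set.image_mono <| Set.Ioo_subset_Ioo_right <| by exact_mod_cast hmn) _

variable {R x}

lemma mem_constantTermIdeal {I : Ideal S} {n : ℕ} {r : R} :
    r ∈ constantTermIdeal R x I n ↔ ∃ s ∈ I, s - r ∈ zpowSpan R x (Set.Ioo 0 n) := by
  change r • (1 : S) ∈ I.restrictScalars R ⊔ zpowSpan R x (Set.Ioo 0 n) ↔ _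
  rw [Subring.smul_def, smul_eq_mul, mul_one, Submodule.mem_sup]
  constructor
  · rintro ⟨s, hs, p, hp, hsp⟩
    exact ⟨s, hs, by simpa [← hsp] using hp⟩
  · rintro ⟨s, hs, hsr⟩
    exact ⟨s, hs, _, neg_mem hsr, by simp⟩

lemma constantTermIdeal_mono : Monotone (constantTermIdeal R x) := by
  intro I J hIJ n r hr
  obtain ⟨s, hs, hsr⟩ := mem_constantTermIdeal.1 hr
  exact mem_constantTermIdeal.2 ⟨s, hIJ hs, hsr⟩

lemma exists_mem_zpowSpan_Ico (h : zpowSpan R x Set.univ = ⊤) (s : S) :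
    ∃ (a : ℤ) (n : ℕ), s ∈ zpowSpan R x (Set.Ico a (a + n)) := by
  classical
  have hs : s ∈ zpowSpan R x Set.univ := h ▸ Submodule.mem_top
  obtain ⟨T, hT, hsT⟩ := Submodule.mem_span_finite_of_mem_span hs
  obtain ⟨A, -, rfl⟩ := Finset.subset_set_image_iff.1 hT
  obtain ⟨a, ha⟩ := A.bddBelow
  obtain ⟨b, hb⟩ := A.bddAbove
  refine ⟨a, (b + 1 - a).toNat, Submodule.span_mono ?_ hsT⟩
  rw [Finset.coe_image]
  refine Set.image_mono fun i hi => ⟨ha hi, ?_⟩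
  have := hb hi
  lia

section Normalizing

variable (hx : ∀ i : ℤ, ∀ r ∈ R, (↑(x ^ i) * r * ↑(x ^ i)⁻¹ : S) ∈ R)

include hx

lemma zpow_mul_mem_zpowSpan {A : Set ℤ} {s : S} (hs : s ∈ zpowSpan R x A) (j : ℤ) :
    ↑(x ^ j) * s ∈ zpowSpan R x ((j + ·) '' A) := by
  induction hs using Submodule.span_induction with
  | mem s hs =>
    obtain ⟨i, hi, rfl⟩ := hs
    exact Submodule.subset_span ⟨j + i, ⟨i, hi, rfl⟩, by simp [zpow_add]⟩
  | zero => simp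
  | add s t _ _ hs ht => simpa only [mul_add] using add_mem hs ht
  | smul r s _ hs =>
    have : (↑(x ^ j) * r • s : S) = (⟨_, hx j r r.2⟩ : R) • (↑(x ^ j) * s) := by
      simp only [Subring.smul_def, smul_eq_mul, mul_assoc, Units.inv_mul_cancel_left]
    exact this ▸ Submodule.smul_mem _ _ hs

/-- Subtracting from a skew polynomial in `J` an element of `I` with the same constant term leaves
`x` times a skew polynomial of smaller degree, which again lies in `J` since `x` is a unit. -/
lemma mem_of_mem_zpowSpan_of_constantTermIdeal_le {I J : Ideal S} (hIJ : I ≤ J)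
    (h : constantTermIdeal R x J ≤ constantTermIdeal R x I) (n : ℕ) {s : S} (hsJ : s ∈ J)
    (hs : s ∈ zpowSpan R x (Set.Ico 0 n)) : s ∈ I := by
  induction n generalizing s with
  | zero =>
    obtain rfl : s = 0 := by simpa [zpowSpan] using hs
    exact zero_mem I
  | succ n ih =>
    obtain ⟨r, hr⟩ : ∃ r : R, s - r ∈ zpowSpan R x (Set.Ioo 0 (n + 1 : ℕ)) := by
      rw [zpowSpan, ← Set.Ioo_insert_left (by positivity), Set.image_insert_eq,
        Submodule.mem_span_insert] at hs
      obtain ⟨r, q, hq, rfl⟩ := hs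
      exact ⟨r, by simpa [Subring.smul_def, zpowSpan] using hq⟩
    obtain ⟨t, htI, ht⟩ :=
      mem_constantTermIdeal.1 (h (n + 1) (mem_constantTermIdeal.2 ⟨s, hsJ, hr⟩))
    have hst : s - t ∈ zpowSpan R x (Set.Ioo 0 (n + 1 : ℕ)) := by
      simpa using sub_mem hr ht
    have hshift : ↑(x ^ (-1 : ℤ)) * (s - t) ∈ zpowSpan R x (Set.Ico 0 n) := by
      refine Submodule.span_mono (Set.image_mono ?_) (zpow_mul_mem_zpowSpan hx hst (-1))
      rintro _ ⟨i, ⟨hi₀, hi₁⟩, rfl⟩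
      constructor <;> grind
    have hstI : s - t ∈ I := by
      have := ih (J.mul_mem_left _ (sub_mem hsJ (hIJ htI))) hshift
      simpa using I.mul_mem_left (x : S) this
    simpa using add_mem hstI htI

lemma constantTermIdeal_strictMono (hS : zpowSpan R x Set.univ = ⊤) :
    StrictMono (constantTermIdeal R x) := fun I J hIJ => by
  refine lt_of_le_not_ge (constantTermIdeal_mono hIJ.le) fun h => hIJ.not_ge fun s hs => ?_
  obtain ⟨a, n, hsa⟩ := exists_mem_zpowSpan_Ico hS s
  have hshift : ↑(x ^ (-a)) * s ∈ zpowSpan R x (Set.Ico 0 n) := by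
    simpa using zpow_mul_mem_zpowSpan hx hsa (-a)
  have := mem_of_mem_zpowSpan_of_constantTermIdeal_le hx hIJ.le h n (J.mul_mem_left _ hs) hshift
  simpa [← mul_assoc, ← Units.val_mul] using I.mul_mem_left ↑(x ^ a) this

theorem isNoetherianRing_of_zpowSpan_univ_eq_top [IsNoetherianRing R]
    (hS : zpowSpan R x Set.univ = ⊤) : IsNoetherianRing S :=
  have : WellFoundedGT (Ideal R) := isNoetherian_iff'.1 ‹_›
  isNoetherian_iff'.2 (constantTermIdeal_strictMono hx hS).wellFoundedGT

end Normalizing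

end SkewLaurent

section GroupRing

variable {k G : Type*} [Ring k] [Group G]

variable (k) in
/-- The group ring `k[H]` of a subgroup `H` of `G`, as a subring of `k[G]`. -/
noncomputable def subgroupRing (H : Subgroup G) : Subring (MonoidAlgebra k G) :=
  (MonoidAlgebra.mapDomainRingHom k H.subtype).range

instance isNoetherianRing_subgroupRing (H : Subgroup G) [IsNoetherianRing (MonoidAlgebra k H)] :
    IsNoetherianRing (subgroupRing k H) :=
  isNoetherianRing_range _

lemma single_mem_subgroupRing {H : Subgroup G} {h : G} (hh : h ∈ H) (c : k) :
    MonoidAlgebra.single h c ∈ subgroupRing k H :=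
  ⟨MonoidAlgebra.single ⟨h, hh⟩ c, by simp⟩

lemma conj_mem_subgroupRing {N : Subgroup G} [N.Normal] (g : G) {r : MonoidAlgebra k G}
    (hr : r ∈ subgroupRing k N) :
    MonoidAlgebra.of k G g * r * MonoidAlgebra.of k G g⁻¹ ∈ subgroupRing k N := by
  obtain ⟨a, rfl⟩ := hr
  induction a using MonoidAlgebra.induction_linear with
  | zero => simp
  | add a b ha hb => simpa only [map_add, mul_add, add_mul] using add_mem ha hb
  | single h c =>
    simpa using single_mem_subgroupRing (‹N.Normal›.conj_mem h h.2 g) c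

lemma span_subgroupRing_eq_top {H : Subgroup G} {T : Set G}
    (hT : ∀ y, ∃ t ∈ T, y * t⁻¹ ∈ H) :
    Submodule.span (subgroupRing k H) (MonoidAlgebra.of k G '' T) = ⊤ := by
  refine eq_top_iff.2 fun s _ => ?_
  induction s using MonoidAlgebra.induction_linear with
  | zero => exact zero_mem _
  | add a b ha hb => exact add_mem (ha trivial) (hb trivial)
  | single y c =>
    obtain ⟨t, ht, hyt⟩ := hT y
    have : MonoidAlgebra.single y c =
        (⟨_, single_mem_subgroupRing hyt c⟩ : subgroupRing k H) • MonoidAlgebra.of k G t := by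
      simp [Subring.smul_def]
    exact this ▸ Submodule.smul_mem _ _ (Submodule.subset_span ⟨t, ht, rfl⟩)

theorem isNoetherianRing_monoidAlgebra_of_finiteIndex (H : Subgroup G) [H.FiniteIndex]
    [IsNoetherianRing (MonoidAlgebra k H)] : IsNoetherianRing (MonoidAlgebra k G) := by
  let T : Set G := Set.range fun q : G ⧸ H => q.out⁻¹
  have hT : ∀ y, ∃ t ∈ T, y * t⁻¹ ∈ H := fun y => by
    have := H.inv_mem (QuotientGroup.eq.1 (QuotientGroup.out_eq' ((y⁻¹ : G) : G ⧸ H)))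
    exact ⟨_, ⟨_, rfl⟩, by simpa using this⟩
  have : Module.Finite (subgroupRing k H) (MonoidAlgebra k G) :=
    ⟨Submodule.fg_def.2 ⟨_, (Set.finite_range _).image _, span_subgroupRing_eq_top hT⟩⟩
  exact IsNoetherianRing.of_finite (subgroupRing k H) (MonoidAlgebra k G)

theorem isNoetherianRing_monoidAlgebra_of_isCyclic_quotient (N : Subgroup G) [N.Normal]
    [IsCyclic (G ⧸ N)] [IsNoetherianRing (MonoidAlgebra k N)] :
    IsNoetherianRing (MonoidAlgebra k G) := by
  obtain ⟨q, hq⟩ := exists_zpow_surjective (G ⧸ N)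
  obtain ⟨g, rfl⟩ := QuotientGroup.mk_surjective q
  let x : (MonoidAlgebra k G)ˣ := (MonoidAlgebra.of k G).toHomUnits g
  have hxpow : ∀ i : ℤ, x ^ i = (MonoidAlgebra.of k G).toHomUnits (g ^ i) := fun i =>
    (map_zpow _ g i).symm
  have hxN : ∀ i : ℤ, ∀ r ∈ subgroupRing k N,
      (↑(x ^ i) * r * ↑(x ^ i)⁻¹ : MonoidAlgebra k G) ∈ subgroupRing k N := fun i r hr => by
    rw [hxpow, ← map_inv]
    exact conj_mem_subgroupRing (g ^ i) hr
  refine isNoetherianRing_of_zpowSpan_univ_eq_top hxN ?_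
  have hT : ∀ y, ∃ t ∈ (Subgroup.zpowers g : Set G), y * t⁻¹ ∈ N := fun y => by
    obtain ⟨i, hi⟩ := hq y
    refine ⟨g ^ i, ⟨i, rfl⟩, ?_⟩
    rw [← QuotientGroup.eq_one_iff]
    simp [← hi]
  rw [zpowSpan, Set.image_univ, ← span_subgroupRing_eq_top hT, Subgroup.coe_zpowers,
    ← Set.range_comp]
  simp only [hxpow]
  rfl

theorem isNoetherianRing_monoidAlgebra_zpowers_sup {H : Subgroup G} {g : G}
    (hg : g ∈ Subgroup.normalizer (H : Set G)) [IsNoetherianRing (MonoidAlgebra k H)] :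
    IsNoetherianRing (MonoidAlgebra k ↥(Subgroup.zpowers g ⊔ H)) := by
  have hle : Subgroup.zpowers g ≤ Subgroup.normalizer (H : Set G) := Subgroup.zpowers_le.2 hg
  let N := H.subgroupOf (Subgroup.zpowers g ⊔ H)
  have : (H.subgroupOf (Subgroup.zpowers g)).Normal :=
    Subgroup.normal_subgroupOf_of_le_normalizer hle
  have : N.Normal := Subgroup.normal_subgroupOf_sup_of_le_normalizer hle
  have : IsCyclic (↥(Subgroup.zpowers g ⊔ H) ⧸ N) :=
    (QuotientGroup.quotientInfEquivProdNormalizerQuotient _ H hle).isCyclic.1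
      (isCyclic_of_surjective _ (QuotientGroup.mk'_surjective _))
  have : IsNoetherianRing (MonoidAlgebra k N) :=
    isNoetherianRing_of_ringEquiv _ (MonoidAlgebra.mapDomainRingEquiv k
      (Subgroup.subgroupOfEquivOfLe (le_sup_right : H ≤ Subgroup.zpowers g ⊔ H)).symm)
  exact isNoetherianRing_monoidAlgebra_of_isCyclic_quotient N

end GroupRing

section Polycyclic

variable {G : Type*} [Group G]

lemma le_normalizer_of_commutator_le {D K : Subgroup G} (hDK : ⁅D, D⁆ ≤ K) (hKD : K ≤ D) :
    D ≤ Subgroup.normalizer (K : Set G) :=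
  Subgroup.le_normalizer_iff_commutator_le_left.2 ((Subgroup.commutator_mono hKD le_rfl).trans hDK)

variable {P : Subgroup G → Prop}
  (zpowers_sup : ∀ (H : Subgroup G) (g : G), g ∈ Subgroup.normalizer (H : Set G) → P H →
    P (Subgroup.zpowers g ⊔ H))

include zpowers_sup

lemma subgroup_induction_of_commutator {D : Subgroup G} (hD : D.FG) (commutator : P ⁅D, D⁆) :
    P D := by
  classical
  have closure_sup : ∀ T : Finset G, (T : Set G) ⊆ D →
      P (Subgroup.closure T ⊔ ⁅D, D⁆) := by
    intro T
    induction T using Finset.induction_on with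
    | empty => simpa using commutator
    | insert g T _ ih =>
      intro hT
      rw [Finset.coe_insert, Set.insert_subset_iff] at hT
      rw [Finset.coe_insert, Set.insert_eq, Subgroup.closure_union,
        ← Subgroup.zpowers_eq_closure, sup_assoc]
      refine zpowers_sup _ g (le_normalizer_of_commutator_le le_sup_right ?_ hT.1) (ih hT.2)
      exact sup_le ((Subgroup.closure_le D).2 hT.2) (Subgroup.commutator_le_self D)
  obtain ⟨T, rfl⟩ := hD
  simpa [Subgroup.commutator_le_self] using closure_sup T Subgroup.subset_closure

theorem IsPolycyclic.subgroup_induction (hG : IsPolycyclic G) (bot : P ⊥) : P ⊤ := by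
  obtain ⟨⟨n, hn⟩, hfg⟩ := hG
  have descend : ∀ m, P (derivedSeries G m) → P (derivedSeries G 0) := by
    intro m
    induction m with
    | zero => exact id
    | succ m ih => exact fun hm => ih (subgroup_induction_of_commutator zpowers_sup (hfg _) hm)
  exact descend n (hn ▸ bot)

end Polycyclic

theorem isNoetherianRing_monoidAlgebra_of_isPolycyclic {k G : Type*} [Ring k] [IsNoetherianRing k]
    [Group G] (hG : IsPolycyclic G) : IsNoetherianRing (MonoidAlgebra k G) := by
  have htop : IsNoetherianRing (MonoidAlgebra k (⊤ : Subgroup G)) :=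
    hG.subgroup_induction (P := fun H => IsNoetherianRing (MonoidAlgebra k H))
      (fun _ _ hg _ => isNoetherianRing_monoidAlgebra_zpowers_sup hg)
      (isNoetherianRing_of_ringEquiv k (MonoidAlgebra.uniqueRingEquiv _).symm)
  exact isNoetherianRing_of_ringEquiv _
    (MonoidAlgebra.mapDomainRingEquiv k (Subgroup.topEquiv : (⊤ : Subgroup G) ≃* G))

theorem monoidAlgebra_noetherian_of_polycyclicByFinite_general {k Γ : Type*} [Ring k]
    [IsNoetherianRing k] [Group Γ] (hΓ : IsPolycyclicByFinite Γ) :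
    IsNoetherianRing (MonoidAlgebra k Γ) := by
  obtain ⟨N, -, hN, _⟩ := hΓ
  have : N.FiniteIndex := Subgroup.finiteIndex_of_finite_quotient
  have : IsNoetherianRing (MonoidAlgebra k N) := isNoetherianRing_monoidAlgebra_of_isPolycyclic hN
  exact isNoetherianRing_monoidAlgebra_of_finiteIndex N

/-- (P. Hall) The group algebra of a polycyclic-by-finite group over any field
is Noetherian. -/
theorem monoidAlgebra_noetherian_of_polycyclicByFinite (k : Type*) [Field k]
    (Γ : Type*) [Group Γ] (hΓ : IsPolycyclicByFinite Γ) :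
    IsNoetherianRing (MonoidAlgebra k Γ) :=
  monoidAlgebra_noetherian_of_polycyclicByFinite_general hΓ
end

section
/- Let k be a field and Γ a group. If the group algebra k[Γ] is a Noetherian ring, then every subgroup of Γ is finitely generated. -/
/-!
To a subgroup `H` attach the left ideal `I(H)` of `k[Γ]` generated by the elements `h - 1` with
`h ∈ H`. It lies in the kernel of the additive map `k[Γ] → k[Γ ⧸ H]`, which sends `g - 1` to
`gH - H`; hence `I(H)` contains `g - 1` only when `g ∈ H`. So `H` is recovered from `I(H)`, and
strictly ascending chains of subgroups give strictly ascending chains of left ideals.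
-/

lemma subgroup_fg_of_wellFoundedGT {G : Type*} [Group G] [WellFoundedGT (Subgroup G)]
    (H : Subgroup G) : H.FG := by
  obtain ⟨K, ⟨hKfg, hKH⟩, hKmax⟩ := exists_maximal_of_wellFoundedGT
    (fun K : Subgroup G ↦ K.FG ∧ K ≤ H) ⟨⊥, Subgroup.FG.bot, bot_le⟩
  suffices H ≤ K from le_antisymm this hKH ▸ hKfg
  intro h hh
  have hfg : (K ⊔ Subgroup.zpowers h).FG := hKfg.sup ⟨{h}, by simp [Subgroup.zpowers_eq_closure]⟩
  have hle : K ⊔ Subgroup.zpowers h ≤ H := sup_le hKH (Subgroup.zpowers_le.2 hh)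
  exact hKmax ⟨hfg, hle⟩ le_sup_left (Subgroup.mem_sup_right (Subgroup.mem_zpowers h))

section RelativeAugmentationIdeal

open MonoidAlgebra

lemma monoidAlgebra_mapDomain_sub {R M N : Type*} [Ring R] (f : M → N) (x y : MonoidAlgebra R M) :
    mapDomain f (x - y) = mapDomain f x - mapDomain f y :=
  map_sub (AddMonoidHom.mk' (mapDomain f) (mapDomain_add f)) x y

lemma mapDomain_quotientMk_mul_single {R G : Type*} [Semiring R] [Group G] {H : Subgroup G}
    {h : G} (hh : h ∈ H) (x : MonoidAlgebra R G) :
    mapDomain (QuotientGroup.mk : G → G ⧸ H) (x * single h 1) = mapDomain QuotientGroup.mk x := by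
  induction x using MonoidAlgebra.induction_linear with
  | zero => simp
  | add x y hx hy => simp only [add_mul, mapDomain_add, hx, hy]
  | single g r =>
    simp only [single_mul_single, mul_one, mapDomain_single, QuotientGroup.mk_mul_of_mem g hh]

variable (R : Type*) [Ring R] {G : Type*} [Group G] {H K : Subgroup G}

/-- The left ideal of `R[G]` generated by the elements `h - 1` with `h ∈ H`. For `H = ⊤` it is the
augmentation ideal of `R[G]`. -/
noncomputable def relativeAugmentationIdeal (H : Subgroup G) : Ideal (MonoidAlgebra R G) :=
  Ideal.span ((fun h ↦ single h 1 - 1) '' (H : Set G))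

variable {R}

lemma mapDomain_quotientMk_eq_zero_of_mem {x : MonoidAlgebra R G}
    (hx : x ∈ relativeAugmentationIdeal R H) :
    mapDomain (QuotientGroup.mk : G → G ⧸ H) x = 0 := by
  induction hx using Submodule.closure_induction with
  | zero => exact mapDomain_zero _
  | add x y _ _ hx hy => rw [mapDomain_add, hx, hy, add_zero]
  | smul_mem a _ hs =>
    obtain ⟨h, hh, rfl⟩ := hs
    rw [smul_eq_mul, mul_sub, mul_one, monoidAlgebra_mapDomain_sub,
      mapDomain_quotientMk_mul_single hh, sub_self]

variable [Nontrivial R]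

lemma single_sub_one_mem_relativeAugmentationIdeal_iff {g : G} :
    single g (1 : R) - 1 ∈ relativeAugmentationIdeal R H ↔ g ∈ H := by
  refine ⟨fun hg ↦ ?_, fun hg ↦ Ideal.subset_span ⟨g, hg, rfl⟩⟩
  have hcoset : single (g : G ⧸ H) (1 : R) = single ((1 : G) : G ⧸ H) 1 := by
    simpa only [one_def, monoidAlgebra_mapDomain_sub, mapDomain_single, sub_eq_zero] using
      mapDomain_quotientMk_eq_zero_of_mem hg
  simpa using QuotientGroup.eq.1 ((single_left_inj one_ne_zero).1 hcoset).symm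

lemma relativeAugmentationIdeal_le_iff :
    relativeAugmentationIdeal R H ≤ relativeAugmentationIdeal R K ↔ H ≤ K := by
  simp only [relativeAugmentationIdeal, Ideal.span_le, Set.image_subset_iff]
  exact forall₂_congr fun _ _ ↦ single_sub_one_mem_relativeAugmentationIdeal_iff

lemma strictMono_relativeAugmentationIdeal :
    StrictMono (relativeAugmentationIdeal R : Subgroup G → Ideal (MonoidAlgebra R G)) :=
  strictMono_of_le_iff_le fun _ _ ↦ relativeAugmentationIdeal_le_iff.symm

end RelativeAugmentationIdeal

theorem subgroup_fg_of_monoidAlgebra_noetherian_general (k : Type*) [Ring k] [Nontrivial k]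
    (Γ : Type*) [Group Γ] (h : IsNoetherianRing (MonoidAlgebra k Γ)) :
    ∀ H : Subgroup Γ, H.FG := by
  have : WellFoundedGT (Subgroup Γ) :=
    (strictMono_relativeAugmentationIdeal (R := k)).wellFoundedGT
  exact subgroup_fg_of_wellFoundedGT

/-- If the group algebra `k[Γ]` is Noetherian, then every subgroup of `Γ`
is finitely generated. -/
theorem subgroup_fg_of_monoidAlgebra_noetherian (k : Type*) [Field k]
    (Γ : Type*) [Group Γ] (h : IsNoetherianRing (MonoidAlgebra k Γ)) :
    ∀ H : Subgroup Γ, H.FG :=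
  subgroup_fg_of_monoidAlgebra_noetherian_general k Γ h
end

section
/- (Tits alternative) Let k be a field of characteristic 0, n a natural number, and G a finitely generated subgroup of GL(n, k). Then either G has a solvable subgroup of finite index, or there exists an injective group homomorphism from the free group on two generators into G. -/
/-!
The group is defined over a finitely generated extension `k` of `ℚ`, which is countable and contains
only a finite extension of `ℚ` as its field of constants. After passing to a subgroup of finite
index, the group is irreducible in the Zariski topology, that is, its algebra of regular functions
is a domain. This property survives extensions of the field of coefficients, and it provides general
position: finitely many nonzero regular functions have a common point of nonvanishing.

Suppose first that, under all embeddings of `k` into `ℂ` and into the algebraic closures of the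
fields `ℚ_p`, the elements of the commutator subgroup have only eigenvalues of norm at most one.
Their traces are then bounded under all these embeddings, so there are finitely many of them: this
is the finiteness of the set of algebraic integers of a number field with bounded conjugates. By
irreducibility the trace on the commutator subgroup satisfies `trace (d * e) = trace e`; in
characteristic zero this puts all `d - 1` into the nilpotent Jacobson radical of the enveloping
algebra, and the group is solvable.

Otherwise some `g` in the commutator subgroup has, over one of these fields `L`, an eigenvalue of
norm greater than one. Let `r` be the number of such eigenvalues, with multiplicity. On the `r`-th
exterior power `g` has a single dominant eigenvalue `δ`, so that `δ⁻ᵐ gᵐ` tends to a matrix of rank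
one. Exterior powers enter only through one matrix coefficient, the function
`c x = det (α * ρ x * a)`, and the representation used is right translation on the span of the
translates of `c`. It is irreducible, and its dimension is at least two because a character is
trivial on commutators. Then `g ^ m * h * g⁻¹ ^ m` and its inverse are both projectively close to
matrices of rank one for suitable `h` and large `m`; a translate of this element and one of its
conjugates play ping-pong in projective space and generate a free group.
-/

namespace TitsAlternative

open Matrix Topology

/-- `H` contains a free subgroup of rank two. -/
def HasFreeSubgroup (H : Type*) [Group H] : Prop :=
  ∃ φ : FreeGroup (Fin 2) →* H, Function.Injective φ

lemma HasFreeSubgroup.of_injective {H G : Type*} [Group H] [Group G] {f : H →* G}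
    (hf : Function.Injective f) : HasFreeSubgroup H → HasFreeSubgroup G
  | ⟨φ, hφ⟩ => ⟨f.comp φ, hf.comp hφ⟩

/-! ### Regular functions on a linear group -/

section RegularFunctions

variable {k ι Γ : Type*} [Field k] [Fintype ι] [DecidableEq ι] [Group Γ]

/-- The regular functions on `Γ` in the representation `ρ`: the algebra of functions generated by
the matrix entries of `ρ x` and of `ρ x⁻¹`. -/
def regularFunctions (ρ : Γ →* GL ι k) : Subalgebra k (Γ → k) :=
  Algebra.adjoin k (Set.range (fun (ij : ι × ι) x => (ρ x).1 ij.1 ij.2) ∪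
    Set.range fun (ij : ι × ι) x => (ρ x⁻¹).1 ij.1 ij.2)

/-- Substitution of `e` into functions, as a homomorphism of algebras. -/
def precomp (k : Type*) [Field k] {X Y : Type*} (e : X → Y) : (Y → k) →ₐ[k] (X → k) :=
  AlgHom.pi fun x => Pi.evalAlgHom k _ (e x)

variable (ρ : Γ →* GL ι k)

lemma entry_mem_regularFunctions (i j : ι) : (fun x => (ρ x).1 i j) ∈ regularFunctions ρ :=
  Algebra.subset_adjoin (Or.inl ⟨(i, j), rfl⟩)

lemma entry_inv_mem_regularFunctions (i j : ι) : (fun x => (ρ x⁻¹).1 i j) ∈ regularFunctions ρ :=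
  Algebra.subset_adjoin (Or.inr ⟨(i, j), rfl⟩)

lemma const_mem_regularFunctions (c : k) : (fun _ => c) ∈ regularFunctions ρ :=
  (regularFunctions ρ).algebraMap_mem c

lemma sum_mem_regularFunctions {κ : Type*} {s : Finset κ} {a : κ → Γ → k}
    (ha : ∀ i ∈ s, a i ∈ regularFunctions ρ) :
    (fun x => ∑ i ∈ s, a i x) ∈ regularFunctions ρ := by
  simpa only [← Finset.sum_fn] using Subalgebra.sum_mem _ ha

lemma prod_mem_regularFunctions {κ : Type*} {s : Finset κ} {a : κ → Γ → k}
    (ha : ∀ i ∈ s, a i ∈ regularFunctions ρ) :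
    (fun x => ∏ i ∈ s, a i x) ∈ regularFunctions ρ := by
  simpa only [← Finset.prod_fn] using Subalgebra.prod_mem _ ha

lemma matrix_mul_mem_regularFunctions {p q r : Type*} [Fintype q] {M : Γ → Matrix p q k}
    {N : Γ → Matrix q r k} (hM : ∀ i j, (fun x => M x i j) ∈ regularFunctions ρ)
    (hN : ∀ i j, (fun x => N x i j) ∈ regularFunctions ρ) (i : p) (j : r) :
    (fun x => (M x * N x) i j) ∈ regularFunctions ρ := by
  simp only [Matrix.mul_apply]
  exact sum_mem_regularFunctions ρ fun l _ => mul_mem (hM i l) (hN l j)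

lemma det_mem_regularFunctions {p : Type*} [Fintype p] [DecidableEq p] {M : Γ → Matrix p p k}
    (hM : ∀ i j, (fun x => M x i j) ∈ regularFunctions ρ) :
    (fun x => (M x).det) ∈ regularFunctions ρ := by
  simp only [Matrix.det_apply']
  exact sum_mem_regularFunctions ρ fun σ _ => mul_mem (const_mem_regularFunctions ρ _)
    (prod_mem_regularFunctions ρ fun i _ => hM (σ i) i)

lemma trace_mem_regularFunctions {p : Type*} [Fintype p] {M : Γ → Matrix p p k}
    (hM : ∀ i j, (fun x => M x i j) ∈ regularFunctions ρ) :
    (fun x => (M x).trace) ∈ regularFunctions ρ :=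
  sum_mem_regularFunctions ρ fun i _ => hM i i

lemma regularFunctions_comp {Δ : Type*} [Group Δ] (φ : Δ →* Γ) :
    regularFunctions (ρ.comp φ) = (regularFunctions ρ).map (precomp k φ) := by
  simp only [regularFunctions, AlgHom.map_adjoin, Set.image_union, ← Set.range_comp]
  simp only [Function.comp_def, MonoidHom.comp_apply, map_inv]
  rfl

lemma comp_mem_regularFunctions {e : Γ → Γ}
    (he : ∀ i j, (fun x => (ρ (e x)).1 i j) ∈ regularFunctions ρ)
    (he' : ∀ i j, (fun x => (ρ (e x)⁻¹).1 i j) ∈ regularFunctions ρ) {a : Γ → k}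
    (ha : a ∈ regularFunctions ρ) : (fun x => a (e x)) ∈ regularFunctions ρ := by
  suffices h : regularFunctions ρ ≤ (regularFunctions ρ).comap (precomp k e) from h ha
  refine Algebra.adjoin_le (Set.union_subset ?_ ?_) <;> rintro _ ⟨ij, rfl⟩
  exacts [he ij.1 ij.2, he' ij.1 ij.2]

lemma mul_left_mem_regularFunctions (g : Γ) {a : Γ → k} (ha : a ∈ regularFunctions ρ) :
    (fun x => a (g * x)) ∈ regularFunctions ρ := by
  refine comp_mem_regularFunctions ρ ?_ ?_ ha <;>
    simp only [_root_.mul_inv_rev, map_mul, Units.val_mul] <;>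
    apply matrix_mul_mem_regularFunctions
  exacts [fun _ _ => const_mem_regularFunctions ρ _, entry_mem_regularFunctions ρ,
    entry_inv_mem_regularFunctions ρ, fun _ _ => const_mem_regularFunctions ρ _]

lemma mul_right_mem_regularFunctions (g : Γ) {a : Γ → k} (ha : a ∈ regularFunctions ρ) :
    (fun x => a (x * g)) ∈ regularFunctions ρ := by
  refine comp_mem_regularFunctions ρ ?_ ?_ ha <;>
    simp only [_root_.mul_inv_rev, map_mul, Units.val_mul] <;>
    apply matrix_mul_mem_regularFunctions
  exacts [entry_mem_regularFunctions ρ, fun _ _ => const_mem_regularFunctions ρ _,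
    fun _ _ => const_mem_regularFunctions ρ _, entry_inv_mem_regularFunctions ρ]

lemma inv_mem_regularFunctions {a : Γ → k} (ha : a ∈ regularFunctions ρ) :
    (fun x => a x⁻¹) ∈ regularFunctions ρ := by
  refine comp_mem_regularFunctions ρ (entry_inv_mem_regularFunctions ρ) ?_ ha
  simpa only [inv_inv] using entry_mem_regularFunctions ρ

instance : IsNoetherianRing (regularFunctions ρ) :=
  have : Algebra.FiniteType k (regularFunctions ρ) := (regularFunctions ρ).fg_iff_finiteType.1 <|
    Subalgebra.fg_def.2 ⟨_, (Set.finite_range _).union (Set.finite_range _), rfl⟩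
  Algebra.FiniteType.isNoetherianRing k _

instance : MulSemiringAction Γ (regularFunctions ρ) where
  smul g a := ⟨fun x => a.1 (g⁻¹ * x), mul_left_mem_regularFunctions ρ g⁻¹ a.2⟩
  one_smul a := Subtype.ext <| funext fun x => congr_arg a.1 (by simp)
  mul_smul g h a := Subtype.ext <| funext fun x => congr_arg a.1 (by simp [mul_assoc])
  smul_zero _ := rfl
  smul_add _ _ _ := rfl
  smul_one _ := rfl
  smul_mul _ _ _ := rfl

lemma regularFunctions_smul_apply (g : Γ) (a : regularFunctions ρ) (x : Γ) :
    (g • a).1 x = a.1 (g⁻¹ * x) := rfl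

/-- The ideal of the regular functions that vanish on `S`. -/
def vanishingIdeal (S : Set Γ) : Ideal (regularFunctions ρ) where
  carrier := {a | ∀ x ∈ S, a.1 x = 0}
  add_mem' ha hb x hx := by simp [ha x hx, hb x hx]
  zero_mem' _ _ := rfl
  smul_mem' c a ha x hx := by simp [ha x hx]

variable {ρ} in
lemma mem_vanishingIdeal {S : Set Γ} {a : regularFunctions ρ} :
    a ∈ vanishingIdeal ρ S ↔ ∀ x ∈ S, a.1 x = 0 := Iff.rfl

open Pointwise in
lemma smul_vanishingIdeal (g : Γ) (S : Set Γ) :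
    g • vanishingIdeal ρ S = vanishingIdeal ρ (g • S) := by
  ext a
  rw [Ideal.mem_pointwise_smul_iff_inv_smul_mem, mem_vanishingIdeal, mem_vanishingIdeal,
    ← Set.image_smul, Set.forall_mem_image]
  simp only [regularFunctions_smul_apply, inv_inv, smul_eq_mul]

lemma isPrime_vanishingIdeal_singleton (x : Γ) : (vanishingIdeal ρ {x}).IsPrime where
  ne_top' h := one_ne_zero ((Ideal.eq_top_iff_one _).1 h x rfl)
  mem_or_mem' {a b} h := by
    simpa [mem_vanishingIdeal] using h

open Pointwise in
lemma smul_mem_minimalPrimes {G R : Type*} [Group G] [CommRing R] [MulSemiringAction G R]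
    {P : Ideal R} (hP : P ∈ minimalPrimes R) (g : G) : g • P ∈ minimalPrimes R := by
  rw [minimalPrimes_eq_minimals] at hP ⊢
  refine ⟨(Ideal.IsPrime.smul_iff g).2 hP.1, fun Q hQ hle => ?_⟩
  rw [Ideal.subset_pointwise_smul_iff] at hle
  rw [Ideal.pointwise_smul_subset_iff]
  exact hP.2 ((Ideal.IsPrime.smul_iff g⁻¹).2 hQ) hle

open Pointwise in
lemma finiteIndex_stabilizer_of_mem_minimalPrimes {G R : Type*} [Group G] [CommRing R]
    [IsNoetherianRing R] [MulSemiringAction G R] {P : Ideal R} (hP : P ∈ minimalPrimes R) :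
    (MulAction.stabilizer G P).FiniteIndex := by
  have horbit : (MulAction.orbit G P).Finite := (minimalPrimes.finite_of_isNoetherianRing R).subset
    (Set.range_subset_iff.2 fun g => smul_mem_minimalPrimes hP g)
  refine ⟨?_⟩
  rw [MulAction.index_stabilizer]
  exact ((Set.ncard_pos horbit).2 (MulAction.nonempty_orbit P)).ne'

lemma noZeroDivisors_of_isPrime_vanishingIdeal {H : Subgroup Γ}
    (hH : (vanishingIdeal ρ (H : Set Γ)).IsPrime) :
    NoZeroDivisors (regularFunctions (ρ.comp H.subtype)) where
  eq_zero_or_eq_zero_of_mul_eq_zero := by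
    rintro ⟨a', ha'⟩ ⟨b', hb'⟩ hab
    obtain ⟨a, ha, rfl⟩ := regularFunctions_comp ρ H.subtype ▸ ha'
    obtain ⟨b, hb, rfl⟩ := regularFunctions_comp ρ H.subtype ▸ hb'
    have hmem : (⟨a, ha⟩ * ⟨b, hb⟩ : regularFunctions ρ) ∈ vanishingIdeal ρ (H : Set Γ) :=
      fun x hx => congr_fun (congr_arg Subtype.val hab) ⟨x, hx⟩
    exact (hH.mem_or_mem hmem).imp (fun h => Subtype.ext (funext fun x => h x x.2))
      (fun h => Subtype.ext (funext fun x => h x x.2))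

open Pointwise in
/-- The translates of `I(H)` meet in zero, so a minimal prime contained in the ideal of `1` lies
between `I(H)` and one of these translates when `H` is its stabilizer. -/
theorem exists_finiteIndex_noZeroDivisors :
    ∃ H : Subgroup Γ, H.FiniteIndex ∧ NoZeroDivisors (regularFunctions (ρ.comp H.subtype)) := by
  have := isPrime_vanishingIdeal_singleton ρ 1
  obtain ⟨P, hP, hP1⟩ := Ideal.exists_minimalPrimes_le (bot_le (a := vanishingIdeal ρ {1}))
  have hPprime : P.IsPrime := hP.1.1
  let H := MulAction.stabilizer Γ P
  have hindex : H.FiniteIndex := finiteIndex_stabilizer_of_mem_minimalPrimes hP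
  refine ⟨H, hindex, noZeroDivisors_of_isPrime_vanishingIdeal ρ ?_⟩
  have hPH : P ≤ vanishingIdeal ρ (H : Set Γ) := fun a ha h hh => by
    have hmem : h⁻¹ • a ∈ P := by
      rw [← (inv_mem hh : h⁻¹ • P = P)]
      exact Ideal.smul_mem_pointwise_smul _ _ _ ha
    simpa [regularFunctions_smul_apply] using hP1 hmem 1 rfl
  have := Fintype.ofFinite (Γ ⧸ H)
  have hcover : Finset.univ.inf (fun q : Γ ⧸ H => vanishingIdeal ρ (q.out • (H : Set Γ))) ≤ P := by
    intro a ha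
    suffices a = 0 from this ▸ P.zero_mem
    refine Subtype.ext (funext fun x => ?_)
    have hx : x ∈ (x : Γ ⧸ H).out • (H : Set Γ) :=
      Set.mem_smul_set_iff_inv_smul_mem.2 (QuotientGroup.eq.1 (QuotientGroup.out_eq' _))
    exact (Submodule.mem_finsetInf.1 ha _ (Finset.mem_univ _)) x hx
  obtain ⟨q, -, hq⟩ := hPprime.inf_le'.1 hcover
  rw [← smul_vanishingIdeal] at hq
  have hle : q.out • P ≤ q.out • vanishingIdeal ρ (H : Set Γ) :=
    Ideal.pointwise_smul_le_pointwise_smul_iff.2 hPH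
  have heq : q.out • vanishingIdeal ρ (H : Set Γ) = P :=
    hq.antisymm ((hP.2 ⟨(Ideal.IsPrime.smul_iff _).2 hPprime, bot_le⟩ (hle.trans hq)).trans hle)
  exact (Ideal.IsPrime.smul_iff q.out).1 (heq ▸ hPprime)

section Irreducible

variable [NoZeroDivisors (regularFunctions ρ)]

lemma exists_forall_ne_zero {κ : Type*} (s : Finset κ) {a : κ → Γ → k}
    (ha : ∀ i ∈ s, a i ∈ regularFunctions ρ) (hne : ∀ i ∈ s, ∃ x, a i x ≠ 0) :
    ∃ x, ∀ i ∈ s, a i x ≠ 0 := by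
  by_contra! hzero
  have hprod : ∏ i ∈ s.attach, (⟨a i.1, ha i.1 i.2⟩ : regularFunctions ρ) = 0 := by
    refine Subtype.ext (funext fun x => ?_)
    obtain ⟨i, hi, hix⟩ := hzero x
    rw [SubmonoidClass.coe_finsetProd, Finset.prod_apply]
    exact Finset.prod_eq_zero (Finset.mem_attach s ⟨i, hi⟩) hix
  obtain ⟨i, -, hi⟩ := Finset.prod_eq_zero_iff.1 hprod
  obtain ⟨x, hx⟩ := hne i.1 i.2
  exact hx (congr_fun (congr_arg Subtype.val hi) x)

lemma eq_of_finite_range {a : Γ → k} (ha : a ∈ regularFunctions ρ) (hfin : (Set.range a).Finite)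
    (x y : Γ) : a x = a y := by
  by_contra hne
  obtain ⟨z, hz⟩ := exists_forall_ne_zero ρ hfin.toFinset (a := fun c x => a x - c)
    (fun c _ => sub_mem ha (const_mem_regularFunctions ρ c)) fun c _ => by
      by_contra! h
      exact hne ((sub_eq_zero.1 (h x)).trans (sub_eq_zero.1 (h y)).symm)
  exact hz (a z) (by simp) (sub_self _)

end Irreducible

section BaseChange

variable {L : Type*} [Field L] [Algebra k L]

lemma functional_comp_mem_regularFunctions {F : Γ → L}
    (hF : F ∈ regularFunctions ((Matrix.GeneralLinearGroup.map (algebraMap k L)).comp ρ))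
    (l : L →ₗ[k] k) : (fun x => l (F x)) ∈ regularFunctions ρ := by
  have hclosure : Submonoid.closure
      (Set.range (fun (ij : ι × ι) x => algebraMap k L ((ρ x).1 ij.1 ij.2)) ∪
        Set.range fun (ij : ι × ι) x => algebraMap k L ((ρ x⁻¹).1 ij.1 ij.2)) ≤
      (regularFunctions ρ).toSubmonoid.map ((algebraMap k L).compLeft Γ) :=
    Submonoid.closure_le.2 <| Set.union_subset
      (Set.range_subset_iff.2 fun ij => ⟨_, entry_mem_regularFunctions ρ ij.1 ij.2, rfl⟩)
      (Set.range_subset_iff.2 fun ij => ⟨_, entry_inv_mem_regularFunctions ρ ij.1 ij.2, rfl⟩)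
  rw [regularFunctions, ← Subalgebra.mem_toSubmodule, Algebra.adjoin_eq_span] at hF
  induction hF using Submodule.span_induction generalizing l with
  | mem F hF =>
    obtain ⟨a, ha, rfl⟩ := hclosure hF
    have hl : ∀ c, l (algebraMap k L c) = c * l 1 := fun c => by
      rw [Algebra.algebraMap_eq_smul_one, map_smul, smul_eq_mul]
    simp only [RingHom.compLeft_apply, Function.comp_apply, hl]
    exact (regularFunctions ρ).mul_mem ha (const_mem_regularFunctions ρ (l 1))
  | zero => simpa using const_mem_regularFunctions ρ 0
  | add F F' _ _ hF hF' =>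
    simp only [Pi.add_apply, map_add]
    exact add_mem (hF l) (hF' l)
  | smul c _ _ hF => exact hF (l ∘ₗ LinearMap.mulLeft k c)

/-- Linear functionals turn functions with values in `L` into functions with values in `k`. -/
lemma noZeroDivisors_regularFunctions_map [NoZeroDivisors (regularFunctions ρ)] :
    NoZeroDivisors
      (regularFunctions ((Matrix.GeneralLinearGroup.map (algebraMap k L)).comp ρ)) where
  eq_zero_or_eq_zero_of_mul_eq_zero := by
    rintro ⟨F, hF⟩ ⟨F', hF'⟩ h
    have exists_functional : ∀ {E : Γ → L}, E ≠ 0 → ∃ l : L →ₗ[k] k, ∃ x, l (E x) ≠ 0 := by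
      intro E hE
      obtain ⟨x, hx⟩ := Function.ne_iff.1 hE
      obtain ⟨l, hl⟩ := Module.Projective.exists_dual_ne_zero k hx
      exact ⟨l, x, hl⟩
    by_contra! hne
    obtain ⟨l, hl⟩ := exists_functional fun h => hne.1 (Subtype.ext h)
    obtain ⟨l', hl'⟩ := exists_functional fun h => hne.2 (Subtype.ext h)
    obtain ⟨z, hz⟩ := exists_forall_ne_zero ρ Finset.univ
      (a := fun b : Bool => b.rec (fun x => l (F x)) fun x => l' (F' x))
      (Bool.rec (fun _ => functional_comp_mem_regularFunctions ρ hF l)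
        fun _ => functional_comp_mem_regularFunctions ρ hF' l')
      (Bool.rec (fun _ => hl) fun _ => hl')
    have hFz : F z * F' z = 0 := congr_fun (congr_arg Subtype.val h) z
    rcases mul_eq_zero.1 hFz with hFz | hFz
    · exact hz false (Finset.mem_univ _) (by simp [hFz])
    · exact hz true (Finset.mem_univ _) (by simp [hFz])

end BaseChange

end RegularFunctions

/-! ### Solvability from traces -/

section Idempotent

open Polynomial

variable {R A : Type*} [CommRing R] [Ring A] [Algebra R A]

lemma exists_isIdempotentElem_of_isCoprime {f g : R[X]} (hfg : IsCoprime f g) {x : A}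
    (hx : aeval x (f * g) = 0) :
    ∃ c : R[X], IsIdempotentElem (aeval x (c * g)) ∧ aeval x f * aeval x (c * g) = 0 ∧
      aeval x g * (1 - aeval x (c * g)) = 0 := by
  obtain ⟨d, c, hcop⟩ := hfg
  have hone : 1 - aeval x (c * g) = aeval x (d * f) := by
    rw [sub_eq_iff_eq_add, ← map_add, hcop, map_one]
  have hvanish : ∀ p q r : R[X], r = p * q * (f * g) → aeval x r = 0 := by
    rintro p q _ rfl
    rw [map_mul, hx, mul_zero]
  refine ⟨c, ?_, ?_, ?_⟩
  · rw [IsIdempotentElem, eq_comm, ← sub_eq_zero, ← mul_one_sub, hone, ← map_mul]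
    exact hvanish c d _ (by ring)
  · rw [← map_mul]
    exact hvanish c 1 _ (by ring)
  · rw [hone, ← map_mul]
    exact hvanish d 1 _ (by ring)

end Idempotent

section Trace

variable {k ι : Type*} [Field k] [Fintype ι]

lemma eq_zero_of_isIdempotentElem_of_trace_eq_zero [CharZero k] {e : Matrix ι ι k}
    (he : IsIdempotentElem e) (htr : e.trace = 0) : e = 0 := by
  classical
  have hidem : IsIdempotentElem (Matrix.toLin' e) := by
    rw [IsIdempotentElem, Module.End.mul_eq_comp, ← Matrix.toLin'_mul, he.eq]
  exact (Matrix.toLin' (R := k)).map_eq_zero_iff.1 <|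
    LinearMap.IsIdempotentElem.eq_zero_of_trace_eq_zero hidem
      (by rw [Matrix.trace_toLin'_eq, htr])

variable [DecidableEq ι]

open Polynomial in
lemma trace_aeval_mul_X_eq_zero {M : Matrix ι ι k} (hM : ∀ j : ℕ, (M ^ (j + 1)).trace = 0)
    (p : k[X]) : (aeval M (p * X)).trace = 0 := by
  induction p using Polynomial.induction_on' with
  | add p q hp hq => rw [add_mul, map_add, Matrix.trace_add, hp, hq, add_zero]
  | monomial i c =>
    rw [monomial_mul_X, aeval_monomial, ← Algebra.smul_def, Matrix.trace_smul, hM, smul_zero]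

open Polynomial in
/-- The spectral idempotent for the nonzero eigenvalues is a polynomial in `M` without constant
term, so its trace, which is its rank, is zero. -/
lemma isNilpotent_of_trace_pow_eq_zero [CharZero k] {M : Matrix ι ι k}
    (hM : ∀ j : ℕ, (M ^ (j + 1)).trace = 0) : IsNilpotent M := by
  obtain ⟨q, hq, hdvd⟩ := exists_eq_pow_rootMultiplicity_mul_and_not_dvd M.charpoly
    M.charpoly_monic.ne_zero 0
  rw [C_0, sub_zero] at hq hdvd
  set m := M.charpoly.rootMultiplicity 0
  have hcop : IsCoprime q (X ^ (m + 1)) :=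
    (IsCoprime.pow_left (irreducible_X.coprime_iff_not_dvd.2 hdvd)).symm
  have hzero : aeval M (q * X ^ (m + 1)) = 0 := by
    rw [pow_succ, ← mul_assoc, mul_comm q, ← hq, map_mul, Matrix.aeval_self_charpoly, zero_mul]
  obtain ⟨c, hidem, -, hMe⟩ := exists_isIdempotentElem_of_isCoprime hcop hzero
  have he : aeval M (c * X ^ (m + 1)) = 0 := by
    refine eq_zero_of_isIdempotentElem_of_trace_eq_zero hidem ?_
    rw [pow_succ, ← mul_assoc]
    exact trace_aeval_mul_X_eq_zero hM _
  exact ⟨m + 1, by simpa [he] using hMe⟩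

end Trace

section CongruenceSubgroup

open scoped commutatorElement

variable {A D : Type*} [Ring A] [Group D]

/-- The congruence subgroup of the left ideal `I`: the elements whose image under `f` is congruent
to `1` modulo `I`. -/
def congruenceSubgroup (f : D →* A) (I : Ideal A) : Subgroup D where
  carrier := {d | f d - 1 ∈ I}
  one_mem' := by simp
  mul_mem' {a b} ha hb := by
    have h : f (a * b) - 1 = f a * (f b - 1) + (f a - 1) := by rw [map_mul]; noncomm_ring
    rw [Set.mem_ofPred_eq, h]
    exact add_mem (I.mul_mem_left _ hb) ha
  inv_mem' {a} ha := by
    have h : f a⁻¹ - 1 = -(f a⁻¹ * (f a - 1)) := by simp [mul_sub, ← map_mul]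
    rw [Set.mem_ofPred_eq, h]
    exact neg_mem (I.mul_mem_left _ ha)

lemma mem_congruenceSubgroup {f : D →* A} {I : Ideal A} {d : D} :
    d ∈ congruenceSubgroup f I ↔ f d - 1 ∈ I := Iff.rfl

lemma map_commutatorElement_sub_one (f : D →* A) (d e : D) :
    f ⁅d, e⁆ - 1 = f d * f e * ((f d⁻¹ - 1) * (f e⁻¹ - 1) - (f e⁻¹ - 1) * (f d⁻¹ - 1)) := by
  have hcomm : f d * f e * (f d⁻¹ * f e⁻¹) = f ⁅d, e⁆ := by
    simp only [← map_mul, commutatorElement_def, mul_assoc]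
  have hone : f d * f e * (f e⁻¹ * f d⁻¹) = 1 := by simp [← map_mul]
  calc f ⁅d, e⁆ - 1 = f d * f e * (f d⁻¹ * f e⁻¹) - f d * f e * (f e⁻¹ * f d⁻¹) := by
        rw [hcomm, hone]
    _ = _ := by noncomm_ring

lemma commutator_congruenceSubgroup_le (f : D →* A) (I : Ideal A) :
    ⁅congruenceSubgroup f I, congruenceSubgroup f I⁆ ≤ congruenceSubgroup f (I * I) := by
  rw [Subgroup.commutator_le]
  intro d hd e he
  rw [mem_congruenceSubgroup, map_commutatorElement_sub_one]
  exact Ideal.mul_mem_left _ _ (sub_mem (Ideal.mul_mem_mul (inv_mem hd) (inv_mem he))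
    (Ideal.mul_mem_mul (inv_mem he) (inv_mem hd)))

lemma derivedSeries_le_congruenceSubgroup {f : D →* A} {I : Ideal A} [I.IsTwoSided]
    (hI : ∀ d, f d - 1 ∈ I) (m : ℕ) : derivedSeries D m ≤ congruenceSubgroup f (I ^ 2 ^ m) := by
  induction m with
  | zero => exact fun d _ => by simpa [mem_congruenceSubgroup, Submodule.pow_one] using hI d
  | succ m ih =>
    rw [derivedSeries_succ, pow_succ, mul_two, Ideal.IsTwoSided.pow_add]
    exact (Subgroup.commutator_mono ih ih).trans (commutator_congruenceSubgroup_le f _)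

lemma isSolvable_of_isNilpotent {f : D →* A} (hf : Function.Injective f) {I : Ideal A}
    [I.IsTwoSided] (hnil : IsNilpotent I) (hI : ∀ d, f d - 1 ∈ I) : Group.IsSolvable D := by
  obtain ⟨s, hs⟩ := hnil
  refine ⟨⟨s, eq_bot_iff.2 fun d hd => hf ?_⟩⟩
  have hmem := Ideal.pow_le_pow_right s.lt_two_pow_self.le
    (derivedSeries_le_congruenceSubgroup hI s hd)
  rwa [hs, Ideal.zero_eq_bot, Ideal.mem_bot, sub_eq_zero, ← map_one f] at hmem

end CongruenceSubgroup

section TraceForm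

variable {k ι : Type*} [Field k] [Fintype ι] [DecidableEq ι]

lemma adjoin_range_eq_span {R A D : Type*} [CommRing R] [Ring A] [Algebra R A] [Monoid D]
    (f : D →* A) :
    Subalgebra.toSubmodule (Algebra.adjoin R (Set.range f)) = Submodule.span R (Set.range f) := by
  rw [Algebra.adjoin_eq_span, ← MonoidHom.coe_mrange, Submonoid.closure_eq]

lemma mem_jacobson_of_trace_mul_eq_zero [CharZero k] {A : Subalgebra k (Matrix ι ι k)} {a : A}
    (ha : ∀ y : A, (a * y : A).1.trace = 0) : a ∈ Ring.jacobson A := by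
  rw [← Ideal.jacobson_bot, Ideal.mem_jacobson_iff]
  intro y
  have hnil : IsNilpotent (y * a).1 := isNilpotent_of_trace_pow_eq_zero fun j => by
    rw [← SubmonoidClass.coe_pow, pow_succ, ← mul_assoc, MulMemClass.coe_mul,
      Matrix.trace_mul_comm]
    exact ha ((y * a) ^ j * y)
  obtain ⟨m, hm⟩ := hnil
  obtain ⟨u, hu⟩ := IsNilpotent.isUnit_one_add (r := y * a) ⟨m, Subtype.ext (by simpa using hm)⟩
  refine ⟨(u⁻¹ : Aˣ), ?_⟩
  have hinv : (u⁻¹ : Aˣ).1 * (1 + y * a) = 1 := by rw [← hu, Units.inv_mul]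
  rw [Ideal.mem_bot, sub_eq_zero, mul_assoc, ← mul_add_one, add_comm, hinv]

/-- The differences `ρ d - 1` lie in the Jacobson radical of the enveloping algebra, because they
are orthogonal to it for the trace form. -/
lemma isSolvable_of_trace_mul_eq [CharZero k] {D : Type*} [Group D] {ρ : D →* GL ι k}
    (hρ : Function.Injective ρ) (htr : ∀ d e : D, (ρ (d * e)).1.trace = (ρ e).1.trace) :
    Group.IsSolvable D := by
  let M : D →* Matrix ι ι k := (Units.coeHom _).comp ρ
  let A := Algebra.adjoin k (Set.range M)
  let f : D →* A := M.codRestrict A fun d => Algebra.subset_adjoin ⟨d, rfl⟩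
  have : IsArtinianRing A := IsArtinianRing.of_finite k A
  have horth : ∀ d, ∀ y ∈ A, ((M d - 1) * y).trace = 0 := by
    intro d y hy
    rw [← Subalgebra.mem_toSubmodule, adjoin_range_eq_span] at hy
    induction hy using Submodule.span_induction with
    | mem y hy =>
      obtain ⟨e, rfl⟩ := hy
      rw [sub_mul, one_mul, ← map_mul, Matrix.trace_sub, sub_eq_zero]
      exact htr d e
    | zero => rw [mul_zero, Matrix.trace_zero]
    | add x y _ _ hx hy => rw [mul_add, Matrix.trace_add, hx, hy, add_zero]
    | smul c x _ hx => rw [mul_smul_comm, Matrix.trace_smul, hx, smul_zero]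
  have hf : Function.Injective f := fun d e h => hρ (Units.ext (congr_arg Subtype.val h))
  exact isSolvable_of_isNilpotent hf IsSemiprimaryRing.isNilpotent fun d =>
    mem_jacobson_of_trace_mul_eq_zero fun y => horth d y y.2

end TraceForm

section FiniteTrace

open scoped commutatorElement

variable {k ι Γ : Type*} [Field k] [Fintype ι] [DecidableEq ι] [Group Γ] {ρ : Γ →* GL ι k}
  [NoZeroDivisors (regularFunctions ρ)]

lemma trace_commutatorElement_mul
    (hfin : ((fun x => (ρ x).1.trace) '' (commutator Γ : Set Γ)).Finite) (x y : Γ) {d : Γ}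
    (hd : d ∈ commutator Γ) : (ρ (⁅x, y⁆ * d)).1.trace = (ρ d).1.trace := by
  have hreg : (fun z => (ρ (⁅z, y⁆ * d)).1.trace) ∈ regularFunctions ρ := by
    have hprod : ∀ z,
        (ρ (⁅z, y⁆ * d)).1 = (ρ z).1 * ((ρ y).1 * ((ρ z⁻¹).1 * (ρ (y⁻¹ * d)).1)) := fun z => by
      simp only [← Units.val_mul, ← map_mul, commutatorElement_def, mul_assoc]
    simp only [hprod]
    exact trace_mem_regularFunctions ρ <| matrix_mul_mem_regularFunctions ρ
      (entry_mem_regularFunctions ρ) <| matrix_mul_mem_regularFunctions ρ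
      (fun _ _ => const_mem_regularFunctions ρ _) <| matrix_mul_mem_regularFunctions ρ
      (entry_inv_mem_regularFunctions ρ) fun _ _ => const_mem_regularFunctions ρ _
  have hrange : (Set.range fun z => (ρ (⁅z, y⁆ * d)).1.trace).Finite :=
    hfin.subset <| Set.range_subset_iff.2 fun z => ⟨_, mul_mem (Subgroup.commutator_mem_commutator
      (Subgroup.mem_top z) (Subgroup.mem_top y)) hd, rfl⟩
  simpa using eq_of_finite_range ρ hreg hrange x 1

lemma trace_mul_of_mem_commutator
    (hfin : ((fun x => (ρ x).1.trace) '' (commutator Γ : Set Γ)).Finite) {d e : Γ}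
    (hd : d ∈ commutator Γ) (he : e ∈ commutator Γ) :
    (ρ (d * e)).1.trace = (ρ e).1.trace := by
  rw [commutator_eq_closure] at hd
  induction hd using Subgroup.closure_induction generalizing e with
  | mem d hd =>
    obtain ⟨x, y, rfl⟩ := hd
    exact trace_commutatorElement_mul hfin x y he
  | one => rw [one_mul]
  | mul d d' _ hd' ih ih' =>
    rw [← commutator_eq_closure] at hd'
    rw [mul_assoc, ih (mul_mem hd' he), ih' he]
  | inv d hd ih =>
    rw [← commutator_eq_closure] at hd
    rw [← ih (mul_mem (inv_mem hd) he), mul_inv_cancel_left]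

theorem isSolvable_of_finite_trace [CharZero k] (hρ : Function.Injective ρ)
    (hfin : ((fun x => (ρ x).1.trace) '' (commutator Γ : Set Γ)).Finite) :
    Group.IsSolvable Γ := by
  have : Group.IsSolvable (commutator Γ) :=
    isSolvable_of_trace_mul_eq (ρ := ρ.comp (commutator Γ).subtype)
      (hρ.comp Subtype.val_injective) fun d e => trace_mul_of_mem_commutator hfin d.2 e.2
  exact Group.isSolvable_of_ker_le_range (commutator Γ).subtype (Abelianization.of (G := Γ))
    (by rw [Abelianization.ker_of, Subgroup.range_subtype])

end FiniteTrace

/-! ### Elements bounded at all places -/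

section Constants

variable {F k : Type*} [Field F] [Field k] [Algebra F k]

lemma linearIndependent_adjoin {ι κ : Type*} {x : κ → k} (hx : AlgebraicIndependent F x)
    {b : ι → algebraicClosure F k} (hb : LinearIndependent F b) :
    LinearIndependent (Algebra.adjoin F (Set.range x)) fun i => (b i : k) := by
  rw [linearIndependent_iff']
  intro s g hg i hi
  have hp (i : ι) : ∃ p : MvPolynomial κ F, MvPolynomial.aeval x p = (g i : k) :=
    (Algebra.adjoin_range_eq_range_aeval F x).le (g i).2
  choose p hp using hp
  have hsum : ∑ i ∈ s, MvPolynomial.C (b i) *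
      MvPolynomial.map (algebraMap F (algebraicClosure F k)) (p i) = 0 := by
    refine (injective_iff_map_eq_zero _).1 (hx.extendScalars (algebraicClosure F k)) _ ?_
    rw [← hg, map_sum]
    refine Finset.sum_congr rfl fun i _ => ?_
    rw [map_mul, MvPolynomial.aeval_C, MvPolynomial.aeval_map_algebraMap, hp, mul_comm]
    rfl
  have hpi : p i = 0 := by
    ext m
    refine linearIndependent_iff'.1 hb s (fun i => (p i).coeff m) ?_ i hi
    simpa [MvPolynomial.coeff_sum, MvPolynomial.coeff_map, Algebra.smul_def,
      mul_comm (algebraMap _ _ _)] using congr_arg (·.coeff m) hsum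
  exact Subtype.ext (by rw [← hp, hpi, map_zero, ZeroMemClass.coe_zero])

open scoped IntermediateField.algebraAdjoinAdjoin in
lemma finiteDimensional_algebraicClosure [Algebra.EssFiniteType F k] :
    FiniteDimensional F (algebraicClosure F k) := by
  obtain ⟨s, hs⟩ := exists_isTranscendenceBasis F k
  let A := Algebra.adjoin F (Set.range ((↑) : s → k))
  let E := IntermediateField.adjoin F (Set.range ((↑) : s → k))
  have := hs.isAlgebraic_field
  have : Algebra.EssFiniteType E k := Algebra.EssFiniteType.of_comp F E k
  have : Module.Finite E k := Algebra.finite_of_essFiniteType_of_isAlgebraic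
  let b := Module.Free.chooseBasis F (algebraicClosure F k)
  have hb : LinearIndependent E fun i => (b i : k) :=
    (LinearIndependent.iff_fractionRing (R := A) (K := E)).1
      (linearIndependent_adjoin hs.1 b.linearIndependent)
  have := hb.finite
  exact Module.Finite.of_basis b

end Constants

section Embedding

open Cardinal Polynomial IntermediateField

universe u v w

lemma exists_comp_algebraMap_eq {F : Type u} {k : Type v} {L : Type w} [Field F] [Countable F]
    [Field k] [Algebra F k] [Field L] [IsAlgClosed L] (hkL : lift.{w} #k ≤ lift.{v} #L)
    (hL : ℵ₀ < #L) (φ : F →+* L) : ∃ σ : k →+* L, σ.comp (algebraMap F k) = φ := by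
  let _ : Algebra F L := φ.toAlgebra
  obtain ⟨s, hs⟩ := exists_isTranscendenceBasis F k
  obtain ⟨t, ht⟩ := exists_isTranscendenceBasis F L
  have hLt : #L = #t := lift_injective
    (IsAlgClosed.cardinal_eq_cardinal_transcendence_basis_of_aleph0_lt _ ht mk_le_aleph0 hL)
  obtain ⟨e⟩ : Nonempty (s ↪ t) := by
    rw [← lift_mk_le', ← hLt]
    exact (lift_le.2 (mk_set_le s)).trans hkL
  let ψ : Algebra.adjoin F (Set.range ((↑) : s → k)) →ₐ[F] L :=
    (MvPolynomial.aeval fun i => (e i : L)).comp hs.1.aevalEquiv.symm.toAlgHom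
  have hψ : Function.Injective ψ :=
    (algebraicIndependent_iff_injective_aeval.1 (ht.1.comp e e.injective)).comp
      hs.1.aevalEquiv.symm.injective
  let _ : Algebra (Algebra.adjoin F (Set.range ((↑) : s → k))) L := ψ.toRingHom.toAlgebra
  have : Module.IsTorsionFree (Algebra.adjoin F (Set.range ((↑) : s → k))) L := by
    rwa [Module.isTorsionFree_iff_faithfulSMul, faithfulSMul_iff_algebraMap_injective]
  have := hs.isAlgebraic
  let σ : k →ₐ[Algebra.adjoin F (Set.range ((↑) : s → k))] L := IsAlgClosed.lift
  exact ⟨σ, RingHom.ext fun c => (σ.commutes (algebraMap F _ c)).trans (ψ.commutes c)⟩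

lemma exists_algHom_adjoin_apply_gen {F k L : Type*} [Field F] [Field k] [Field L] [Algebra F k]
    [Algebra F L] {τ : k} (hτ : Transcendental F τ) {μ : L} (hμ : Transcendental F μ) :
    ∃ φ : F⟮τ⟯ →ₐ[F] L, φ (AdjoinSimple.gen F τ) = μ :=
  ⟨(val F⟮μ⟯).comp ((RatFunc.algEquivOfTranscendental μ hμ).toAlgHom.comp
    (RatFunc.algEquivOfTranscendental τ hτ).symm.toAlgHom), by simp⟩

variable {k : Type v} {L : Type w} [Field k] [CharZero k] [Field L] [CharZero L] [IsAlgClosed L]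

lemma exists_ringHom_eq_of_algHom_adjoin (hkL : lift.{w} #k ≤ lift.{v} #L) (hL : ℵ₀ < #L) {τ : k}
    (φ : ℚ⟮τ⟯ →ₐ[ℚ] L) : ∃ σ : k →+* L, σ τ = φ (AdjoinSimple.gen ℚ τ) := by
  have : Countable ℚ⟮τ⟯ := by
    rw [← mk_le_aleph0_iff]
    simpa using lift_cardinalMk_adjoin_le ℚ {τ}
  obtain ⟨σ, hσ⟩ := exists_comp_algebraMap_eq hkL hL φ.toRingHom
  exact ⟨σ, RingHom.congr_fun hσ (AdjoinSimple.gen ℚ τ)⟩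

lemma exists_ringHom_eq_of_mem_aroots (hkL : lift.{w} #k ≤ lift.{v} #L) (hL : ℵ₀ < #L) {τ : k}
    (hτ : IsIntegral ℚ τ) {μ : L} (hμ : μ ∈ (minpoly ℚ τ).aroots L) : ∃ σ : k →+* L, σ τ = μ := by
  obtain ⟨σ, hσ⟩ := exists_ringHom_eq_of_algHom_adjoin hkL hL
    ((algHomAdjoinIntegralEquiv ℚ hτ).symm ⟨μ, hμ⟩)
  exact ⟨σ, hσ.trans (algHomAdjoinIntegralEquiv_symm_apply_gen ℚ hτ ⟨μ, hμ⟩)⟩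

lemma exists_ringHom_eq_of_transcendental (hkL : lift.{w} #k ≤ lift.{v} #L) (hL : ℵ₀ < #L) {τ : k}
    (hτ : Transcendental ℚ τ) {μ : L} (hμ : Transcendental ℚ μ) : ∃ σ : k →+* L, σ τ = μ := by
  obtain ⟨φ, rfl⟩ := exists_algHom_adjoin_apply_gen hτ hμ
  exact exists_ringHom_eq_of_algHom_adjoin hkL hL φ

end Embedding

section Bounded

open Cardinal Polynomial

lemma continuum_le_mk_padicAlgCl (p : ℕ) [Fact p.Prime] : 𝔠 ≤ #(PadicAlgCl p) :=
  (continuum_le_cardinal_of_nontriviallyNormedField ℚ_[p]).trans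
    (mk_le_of_injective (algebraMap ℚ_[p] (PadicAlgCl p)).injective)

lemma exists_transcendental_lt_norm (B : ℝ) : ∃ μ : ℂ, Transcendental ℚ μ ∧ B < ‖μ‖ := by
  obtain ⟨μ, hB, hμ⟩ := ((Algebraic.countable ℚ ℂ).dense_compl ℂ).inter_open_nonempty
    {μ : ℂ | B < ‖μ‖} (isOpen_lt continuous_const continuous_norm)
    (NormedField.exists_lt_norm ℂ B)
  exact ⟨μ, hμ, hB⟩

lemma coeff_mem_of_aroots_subset {R L : Type*} [CommRing R] [Field L] [IsAlgClosed L]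
    [Algebra R L] (S : Subring L) {f : R[X]} (hf : f.Monic) (hS : ∀ μ ∈ f.aroots L, μ ∈ S)
    (i : ℕ) : algebraMap R L (f.coeff i) ∈ S := by
  have hprod : ((f.aroots L).map (X - C ·)).prod ∈ liftsRing S.subtype := by
    refine Subring.multiset_prod_mem _ _ fun q hq => ?_
    obtain ⟨μ, hμ, rfl⟩ := Multiset.mem_map.1 hq
    exact sub_mem ⟨X, map_X _⟩ ⟨C ⟨μ, hS μ hμ⟩, map_C _⟩
  have hfac : f.map (algebraMap R L) = ((f.aroots L).map (X - C ·)).prod :=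
    (IsAlgClosed.splits _).eq_prod_roots_of_monic (hf.map _)
  obtain ⟨q, hq⟩ := hprod
  rw [← coeff_map, hfac, ← hq, coe_mapRingHom, coeff_map]
  exact (q.coeff i).2

lemma not_dvd_den_of_norm_le_one {p : ℕ} [Fact p.Prime] {c : ℚ} (hc : ‖(c : ℚ_[p])‖ ≤ 1) :
    ¬p ∣ c.den := by
  have := PadicInt.isUnit_iff.1 (PadicInt.isUnit_den c hc)
  rw [PadicInt.norm_natCast_eq_one_iff] at this
  rwa [← (Fact.out : p.Prime).coprime_iff_not_dvd]

lemma isIntegral_int_of_coeff_minpoly {k : Type*} [Field k] [CharZero k] {τ : k}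
    (hτ : IsIntegral ℚ τ) (h : ∀ i, ((minpoly ℚ τ).coeff i).den = 1) : IsIntegral ℤ τ := by
  obtain ⟨q, hq, -, hmonic⟩ := lifts_and_natDegree_eq_and_monic
    ((lifts_iff_coeff_lifts (f := algebraMap ℤ ℚ) (minpoly ℚ τ)).2
      fun i => ⟨_, (Rat.den_eq_one_iff _).1 (h i)⟩) (minpoly.monic hτ)
  refine ⟨q, hmonic, ?_⟩
  rw [← aeval_def, ← aeval_map_algebraMap ℚ, hq, minpoly.aeval]

variable {k : Type*} [Field k] [CharZero k]

lemma isIntegral_int_of_forall_norm_le_one (hk : #k ≤ 𝔠) {τ : k} (hτ : IsIntegral ℚ τ)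
    (h : ∀ (p : ℕ) [Fact p.Prime] (σ : k →+* PadicAlgCl p), ‖σ τ‖ ≤ 1) : IsIntegral ℤ τ := by
  refine isIntegral_int_of_coeff_minpoly hτ fun i => ?_
  by_contra hden
  obtain ⟨p, hp, hdvd⟩ := Nat.exists_prime_and_dvd hden
  have : Fact p.Prime := ⟨hp⟩
  refine not_dvd_den_of_norm_le_one (p := p) ?_ hdvd
  have hmem := coeff_mem_of_aroots_subset (L := PadicAlgCl p) NormedField.valuation.integer
    (minpoly.monic hτ) (fun μ hμ => by
      obtain ⟨σ, rfl⟩ := exists_ringHom_eq_of_mem_aroots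
        (by simpa using hk.trans (continuum_le_lift.2 (continuum_le_mk_padicAlgCl p)))
        (aleph0_lt_continuum.trans_le (continuum_le_mk_padicAlgCl p)) hτ hμ
      exact h p σ) i
  have hcast : algebraMap ℚ (PadicAlgCl p) ((minpoly ℚ τ).coeff i) =
    algebraMap ℚ_[p] (PadicAlgCl p) ((minpoly ℚ τ).coeff i : ℚ_[p]) := by simp
  rw [hcast] at hmem
  exact (norm_algebraMap' (PadicAlgCl p) _).symm.trans_le hmem

/-- Such an element is algebraic, because a transcendental one could be sent to any transcendental
complex number. -/
lemma finite_setOf_forall_norm_le [FiniteDimensional ℚ (algebraicClosure ℚ k)] (hk : #k ≤ 𝔠)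
    (B : ℝ) : {τ : k | (∀ σ : k →+* ℂ, ‖σ τ‖ ≤ B) ∧
      ∀ (p : ℕ) [Fact p.Prime] (σ : k →+* PadicAlgCl p), ‖σ τ‖ ≤ 1}.Finite := by
  have : NumberField (algebraicClosure ℚ k) := {}
  have hkC : lift #k ≤ lift #ℂ := by simpa using hk
  have hC : ℵ₀ < #ℂ := mk_complex ▸ aleph0_lt_continuum
  refine ((NumberField.Embeddings.finite_of_norm_le (algebraicClosure ℚ k) ℂ B).image
    (algebraMap _ k)).subset fun τ ⟨hcomplex, hpadic⟩ => ?_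
  have hτ : IsAlgebraic ℚ τ := by
    by_contra hτ
    obtain ⟨μ, hμ, hB⟩ := exists_transcendental_lt_norm B
    obtain ⟨σ, rfl⟩ := exists_ringHom_eq_of_transcendental hkC hC hτ hμ
    exact (hcomplex σ).not_gt hB
  have hint := isIntegral_int_of_forall_norm_le_one hk hτ.isIntegral hpadic
  refine ⟨⟨τ, mem_algebraicClosure_iff.2 hτ⟩,
    ⟨(isIntegral_algebraMap_iff (algebraMap (algebraicClosure ℚ k) k).injective).1 hint,
      fun φ => ?_⟩, rfl⟩
  have : Countable (algebraicClosure ℚ k) := mk_le_aleph0_iff.1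
    (by simpa using Algebra.IsAlgebraic.lift_cardinalMk_le_max ℚ (algebraicClosure ℚ k))
  obtain ⟨σ, rfl⟩ := exists_comp_algebraMap_eq hkC hC φ
  exact hcomplex σ

end Bounded

section Trace

variable {L ι : Type*} [NormedField L] [IsAlgClosed L] [Fintype ι] [DecidableEq ι]
  {M : Matrix ι ι L}

lemma norm_trace_le_card (h : ∀ μ ∈ M.charpoly.roots, ‖μ‖ ≤ 1) :
    ‖M.trace‖ ≤ Fintype.card ι := by
  rw [Matrix.trace_eq_sum_roots_charpoly]
  calc ‖M.charpoly.roots.sum‖ ≤ (M.charpoly.roots.map (‖·‖)).sum := norm_multiset_sum_le _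
    _ ≤ (M.charpoly.roots.map (‖·‖)).card • (1 : ℝ) :=
      Multiset.sum_le_card_nsmul _ _ (Multiset.forall_mem_map_iff.2 h)
    _ ≤ Fintype.card ι := by simpa using M.charpoly.card_roots'

lemma norm_trace_le_one [IsUltrametricDist L] (h : ∀ μ ∈ M.charpoly.roots, ‖μ‖ ≤ 1) :
    ‖M.trace‖ ≤ 1 := by
  rw [Matrix.trace_eq_sum_roots_charpoly]
  exact multiset_sum_mem (S := (NormedField.valuation (K := L)).integer) _ h

end Trace

/-! ### Ping-pong -/

lemma injective_lift_of_mapsTo {κ H X : Type*} [Group H] [MulAction H X] {γ : κ → H}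
    {U : κ × Bool → Set X} {x₀ : X} (hx₀ : ∀ p, x₀ ∉ U p)
    (hU₀ : ∀ p, cond p.2 (γ p.1) (γ p.1)⁻¹ • x₀ ∈ U p)
    (hU : ∀ p q : κ × Bool, (p.1 = q.1 → p.2 = q.2) →
      Set.MapsTo (cond p.2 (γ p.1) (γ p.1)⁻¹ • ·) (U q) (U p)) :
    Function.Injective (FreeGroup.lift γ) := by
  classical
  have hmem (w : List (κ × Bool)) (p : κ × Bool) (hw : FreeGroup.IsReduced (p :: w)) :
      FreeGroup.lift γ (FreeGroup.mk (p :: w)) • x₀ ∈ U p := by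
    induction w generalizing p with
    | nil => simpa using hU₀ p
    | cons q w ih =>
      rw [FreeGroup.isReduced_cons_cons] at hw
      simpa [mul_smul] using hU p q hw.1 (ih q hw.2)
  rw [injective_iff_map_eq_one]
  intro a ha
  rw [← FreeGroup.toWord_eq_nil_iff]
  cases hw : a.toWord with
  | nil => rfl
  | cons p w =>
    refine absurd (hmem w p (hw ▸ FreeGroup.isReduced_toWord)) ?_
    rw [← hw, FreeGroup.mk_toWord, ha, one_smul]
    exact hx₀ p

section Projective

open Filter Metric

variable {ι L α : Type*} [NormedField L] {l : Filter α}

/-- Convergence of the matrices `M m` to `Q` along `l` up to nonzero scalars. -/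
def ProjTendsto (M : α → Matrix ι ι L) (l : Filter α) (Q : Matrix ι ι L) : Prop :=
  ∃ s : α → L, (∀ m, s m ≠ 0) ∧ Tendsto (fun m => s m • M m) l (𝓝 Q)

lemma projTendsto_const (l : Filter α) (Q : Matrix ι ι L) : ProjTendsto (fun _ => Q) l Q :=
  ⟨1, fun _ => one_ne_zero, by simpa using tendsto_const_nhds⟩

variable {M N : α → Matrix ι ι L} {P Q : Matrix ι ι L}

lemma ProjTendsto.mono {l' : Filter α} (hM : ProjTendsto M l Q) (h : l' ≤ l) :
    ProjTendsto M l' Q :=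
  let ⟨s, hs, hM⟩ := hM
  ⟨s, hs, hM.mono_left h⟩

variable [Fintype ι] {a b f x₀ : ι → L}

lemma ProjTendsto.mul (hM : ProjTendsto M l P) (hN : ProjTendsto N l Q) :
    ProjTendsto (fun m => M m * N m) l (P * Q) := by
  obtain ⟨s, hs, hM⟩ := hM
  obtain ⟨t, ht, hN⟩ := hN
  refine ⟨s * t, fun m => mul_ne_zero (hs m) (ht m), ?_⟩
  simpa only [smul_mul_smul_comm, Pi.mul_apply] using hM.mul hN

/-- The vectors that have a nonzero multiple in the ball with centre `a` and radius `ε`: a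
neighbourhood of the line through `a` in projective space. -/
def projBall (a : ι → L) (ε : ℝ) : Set (ι → L) :=
  {w | ∃ c : L, c ≠ 0 ∧ c • w ∈ ball a ε}

lemma eventually_notMem_projBall {η : ι → L} (ha : a ≠ 0) (hηa : η ⬝ᵥ a = 0)
    (hη : η ⬝ᵥ x₀ ≠ 0) : ∀ᶠ ε in 𝓝 (0 : ℝ), x₀ ∉ projBall a ε := by
  have hcont : Continuous fun w => (η ⬝ᵥ x₀) • w - (η ⬝ᵥ w) • x₀ := by
    have : Continuous fun w => η ⬝ᵥ w := continuous_const.dotProduct continuous_id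
    fun_prop
  have hne : (η ⬝ᵥ x₀) • a - (η ⬝ᵥ a) • x₀ ≠ 0 := by
    rw [hηa, zero_smul, sub_zero]
    exact smul_ne_zero hη ha
  filter_upwards [eventually_closedBall_subset (hcont.continuousAt.eventually_ne hne)]
    with ε hε ⟨c, _, hc⟩
  refine hε (ball_subset_closedBall hc) ?_
  rw [dotProduct_smul, smul_smul, smul_eq_mul, mul_comm, sub_self]

open scoped Matrix.Norms.Operator in
lemma eventually_mapsTo_projBall_of_le {ε r : ℝ} (hr : 0 < r)
    (hf : ∀ w ∈ ball b ε, r ≤ ‖f ⬝ᵥ w‖) (hM : ProjTendsto M l (vecMulVec a f)) :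
    ∀ᶠ m in l, Set.MapsTo (M m *ᵥ ·) (projBall b ε) (projBall a ε) := by
  obtain ⟨s, hs, hM⟩ := hM
  have hnorm : Tendsto (fun m => ‖s m • M m - vecMulVec a f‖ * (‖b‖ + ε)) l (𝓝 0) := by
    simpa using (hM.sub_const (vecMulVec a f)).norm.mul_const (‖b‖ + ε)
  rcases le_or_gt ε 0 with hε | hε
  · exact Eventually.of_forall fun m w ⟨c, _, hc⟩ => by simp [ball_eq_empty.2 hε] at hc
  filter_upwards [hnorm.eventually_lt_const (mul_pos hr hε)] with m hm w ⟨c, hc, hw⟩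
  have hfw := hf _ hw
  have hne : f ⬝ᵥ (c • w) ≠ 0 := norm_pos_iff.1 (hr.trans_le hfw)
  refine ⟨(f ⬝ᵥ (c • w))⁻¹ * s m * c, mul_ne_zero (mul_ne_zero (inv_ne_zero hne) (hs m)) hc, ?_⟩
  have hdiff : ((f ⬝ᵥ (c • w))⁻¹ * s m * c) • (M m *ᵥ w) - a =
      (f ⬝ᵥ (c • w))⁻¹ • ((s m • M m - vecMulVec a f) *ᵥ (c • w)) := by
    rw [sub_mulVec, vecMulVec_mulVec, op_smul_eq_smul, smul_sub, inv_smul_smul₀ hne,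
      smul_mulVec, mulVec_smul, smul_smul, smul_smul, mul_assoc]
  have hwb : ‖c • w‖ ≤ ‖b‖ + ε := by
    simpa [add_comm] using (norm_lt_of_mem_ball hw).le
  rw [mem_ball_iff_norm, hdiff, norm_smul, norm_inv, inv_mul_lt_iff₀ (norm_pos_iff.2 hne)]
  calc ‖(s m • M m - vecMulVec a f) *ᵥ (c • w)‖
      ≤ ‖s m • M m - vecMulVec a f‖ * (‖b‖ + ε) := by
        grw [Matrix.linfty_opNorm_mulVec, hwb]
    _ < r * ε := hm
    _ ≤ ‖f ⬝ᵥ (c • w)‖ * ε := by gcongr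

lemma eventually_mapsTo_projBall (hfb : f ⬝ᵥ b ≠ 0) (hM : ProjTendsto M l (vecMulVec a f)) :
    ∀ᶠ ε in 𝓝 (0 : ℝ), ∀ᶠ m in l, Set.MapsTo (M m *ᵥ ·) (projBall b ε) (projBall a ε) := by
  have hcont : Continuous fun w => ‖f ⬝ᵥ w‖ :=
    (continuous_const.dotProduct continuous_id).norm
  filter_upwards [eventually_closedBall_subset (hcont.continuousAt.eventually_const_le
    (half_lt_self (norm_pos_iff.2 hfb)))] with ε hε
  exact eventually_mapsTo_projBall_of_le (half_pos (norm_pos_iff.2 hfb))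
    (fun w hw => hε (ball_subset_closedBall hw)) hM

lemma exists_injective_lift_of_projTendsto {κ H : Type*} [DecidableEq ι] [Finite κ] [Group H]
    (π : H →* Matrix ι ι L) [l.NeBot] {γ : α → κ → H} {a f η : κ × Bool → ι → L}
    (hγ : ∀ p, ProjTendsto (fun m => π (cond p.2 (γ m p.1) (γ m p.1)⁻¹)) l
      (vecMulVec (a p) (f p)))
    (hfa : ∀ p q : κ × Bool, (p.1 = q.1 → p.2 = q.2) → f p ⬝ᵥ a q ≠ 0)
    (hfx : ∀ p, f p ⬝ᵥ x₀ ≠ 0) (hηa : ∀ p, η p ⬝ᵥ a p = 0) (hηx : ∀ p, η p ⬝ᵥ x₀ ≠ 0) :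
    ∃ m, Function.Injective (FreeGroup.lift (γ m)) := by
  have ha (p) : a p ≠ 0 := fun h => hfa p p (fun _ => rfl) (by rw [h, dotProduct_zero])
  have hmaps : ∀ᶠ ε in 𝓝[>] (0 : ℝ), ∀ p q : κ × Bool, (p.1 = q.1 → p.2 = q.2) → ∀ᶠ m in l,
      Set.MapsTo (π (cond p.2 (γ m p.1) (γ m p.1)⁻¹) *ᵥ ·) (projBall (a q) ε)
        (projBall (a p) ε) := by
    simp only [eventually_all]
    exact fun p q hpq => nhdsWithin_le_nhds (eventually_mapsTo_projBall (hfa p q hpq) (hγ p))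
  have hmaps₀ : ∀ᶠ ε in 𝓝[>] (0 : ℝ), ∀ p, ∀ᶠ m in l,
      Set.MapsTo (π (cond p.2 (γ m p.1) (γ m p.1)⁻¹) *ᵥ ·) (projBall x₀ ε) (projBall (a p) ε) :=
    eventually_all.2 fun p => nhdsWithin_le_nhds (eventually_mapsTo_projBall (hfx p) (hγ p))
  have hfar : ∀ᶠ ε in 𝓝[>] (0 : ℝ), ∀ p, x₀ ∉ projBall (a p) ε :=
    eventually_all.2 fun p =>
      nhdsWithin_le_nhds (eventually_notMem_projBall (ha p) (hηa p) (hηx p))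
  obtain ⟨ε, hmaps, hmaps₀, hfar, hε⟩ :=
    (hmaps.and (hmaps₀.and (hfar.and self_mem_nhdsWithin))).exists
  simp only [← eventually_all] at hmaps hmaps₀
  obtain ⟨m, hm, hm₀⟩ := (hmaps.and hmaps₀).exists
  let _ : MulAction H (ι → L) :=
    MulAction.compHom _ ((Matrix.toLinAlgEquiv' : _ ≃ₐ[L] Module.End L (ι → L)).toMonoidHom.comp π)
  exact ⟨m, injective_lift_of_mapsTo hfar
    (fun p => hm₀ p ⟨1, one_ne_zero, by simpa using hε⟩) hm⟩

end Projective

/-! ### Limits of matrices up to scalars -/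

section Proper

open Filter

variable {ι L α : Type*} [NormedField L]

/-- Every finite subset of `L` lies in a proper subfield, in the sense of proper metric spaces. This
replaces local compactness for the algebraic closure of `ℚ_[p]`. -/
class IsLocallyProper (L : Type*) [NormedField L] : Prop where
  exists_subfield : ∀ S : Set L, S.Finite → ∃ E : Subfield L, S ⊆ E ∧ ProperSpace E

lemma isLocallyProper_of_isAlgebraic (K : Type*) [NontriviallyNormedField K] [ProperSpace K]
    [NormedAlgebra K L] [Algebra.IsAlgebraic K L] : IsLocallyProper L where
  exists_subfield S hS := by
    have := hS.to_subtype
    let E := IntermediateField.adjoin K S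
    have : FiniteDimensional K E :=
      IntermediateField.finiteDimensional_adjoin fun x _ => Algebra.IsIntegral.isIntegral x
    exact ⟨E.toSubfield, IntermediateField.subset_adjoin K S, FiniteDimensional.proper K E⟩

instance : IsLocallyProper ℂ := isLocallyProper_of_isAlgebraic ℝ

instance (p : ℕ) [Fact p.Prime] : IsLocallyProper (PadicAlgCl p) :=
  isLocallyProper_of_isAlgebraic ℚ_[p]

lemma exists_projTendsto_map_subtype [Finite ι] (E : Subfield L) [ProperSpace E]
    {B : α → Matrix ι ι E} (hB : ∀ m, B m ≠ 0) (l : Ultrafilter α) :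
    ∃ Q : Matrix ι ι L, Q ≠ 0 ∧ ProjTendsto (fun m => (B m).map E.subtype) l Q := by
  have := Fintype.ofFinite ι
  let N (m : α) : ι × ι → E := fun ij => B m ij.1 ij.2
  have hN (m) : N m ≠ 0 := fun h => hB m (Matrix.ext fun i j => congr_fun h (i, j))
  have hmax (m) : ∃ ij, ‖N m‖ ≤ ‖N m ij‖ := by
    obtain ⟨ij₀, -⟩ := Function.ne_iff.1 (hN m)
    have : Nonempty (ι × ι) := ⟨ij₀⟩
    obtain ⟨ij, hij⟩ := Finite.exists_max fun ij => ‖N m ij‖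
    exact ⟨ij, (pi_norm_le_iff_of_nonempty _).2 hij⟩
  choose p hp using hmax
  have hp₀ (m) : N m (p m) ≠ 0 := norm_pos_iff.1 ((norm_pos_iff.2 (hN m)).trans_le (hp m))
  have hsphere (m) : (N m (p m))⁻¹ • N m ∈ Metric.sphere (0 : ι × ι → E) 1 := by
    rw [mem_sphere_zero_iff_norm, norm_smul, norm_inv,
      (hp m).antisymm (norm_le_pi_norm (N m) (p m)),
      inv_mul_cancel₀ (norm_ne_zero_iff.2 (hp₀ m))]
  obtain ⟨q, hq, hlim⟩ := (isCompact_sphere (0 : ι × ι → E) 1).ultrafilter_le_nhds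
    (l.map fun m => (N m (p m))⁻¹ • N m) (le_principal_iff.2 (mem_map.2 (univ_mem' hsphere)))
  refine ⟨Matrix.of fun i j => q (i, j), fun h => ?_,
    fun m => (N m (p m) : L)⁻¹, fun m => inv_ne_zero (by simpa using hp₀ m), ?_⟩
  · refine ne_zero_of_mem_unit_sphere ⟨q, hq⟩ (funext fun ij => Subtype.ext ?_)
    exact congr_fun (congr_fun h ij.1) ij.2
  · refine tendsto_pi_nhds.2 fun i => tendsto_pi_nhds.2 fun j => ?_
    exact (continuous_subtype_val.tendsto _).comp ((tendsto_pi_nhds.1 hlim) (i, j))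

lemma exists_projTendsto_pow [Fintype ι] [DecidableEq ι] [IsLocallyProper L]
    {A : Matrix ι ι L} (hA : ∀ m, A ^ m ≠ 0) (l : Ultrafilter ℕ) :
    ∃ Q : Matrix ι ι L, Q ≠ 0 ∧ ProjTendsto (A ^ ·) l Q := by
  obtain ⟨E, hE, _⟩ := IsLocallyProper.exists_subfield
    (Set.range fun ij : ι × ι => A ij.1 ij.2) (Set.finite_range _)
  let B : Matrix ι ι E := Matrix.of fun i j => ⟨A i j, hE ⟨(i, j), rfl⟩⟩
  have hB (m) : (B ^ m).map E.subtype = A ^ m := map_pow E.subtype.mapMatrix B m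
  simp only [← hB]
  refine exists_projTendsto_map_subtype E (fun m h => hA m ?_) l
  rw [← hB, h, Matrix.map_zero _ (map_zero _)]

end Proper

/-! ### Free groups from proximal elements -/

section Proximal

open Filter

variable {ι L H : Type*} [Fintype ι] [DecidableEq ι] [NormedField L] [Group H]
  {π : H →* Matrix ι ι L}

/-- For finitely many nonzero vectors and functionals there is a group element that moves no
vector, neither by itself nor by its inverse, into the kernel of a functional. -/
def GeneralPosition {ι L H : Type*} [Fintype ι] [DecidableEq ι] [Field L] [Group H]
    (π : H →* Matrix ι ι L) : Prop :=
  ∀ F V : Set (ι → L), F.Finite → V.Finite → 0 ∉ F → 0 ∉ V →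
    ∃ u, ∀ f ∈ F, ∀ v ∈ V, f ⬝ᵥ π u *ᵥ v ≠ 0 ∧ f ⬝ᵥ π u⁻¹ *ᵥ v ≠ 0

lemma GeneralPosition.exists_dotProduct_ne_zero {κ κ' : Type*} [Finite κ] [Finite κ']
    (hπ : GeneralPosition π) {f : κ → ι → L} {v : κ' → ι → L} (hf : ∀ i, f i ≠ 0)
    (hv : ∀ j, v j ≠ 0) : ∃ u, ∀ i j, f i ⬝ᵥ π u *ᵥ v j ≠ 0 ∧ f i ⬝ᵥ π u⁻¹ *ᵥ v j ≠ 0 := by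
  obtain ⟨u, hu⟩ := hπ (Set.range f) (Set.range v) (Set.finite_range f) (Set.finite_range v)
    (by simpa using hf) (by simpa using hv)
  exact ⟨u, fun i j => hu _ ⟨i, rfl⟩ _ ⟨j, rfl⟩⟩

lemma exists_ne_zero_dotProduct_eq_zero {ι L : Type*} [Fintype ι] [Nontrivial ι] [Field L]
    (a : ι → L) : ∃ η : ι → L, η ≠ 0 ∧ η ⬝ᵥ a = 0 := by
  classical
  obtain ⟨i, j, hij⟩ := exists_pair_ne ι
  by_cases hai : a i = 0
  · exact ⟨Pi.single i 1, by simp, by simp [hai]⟩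
  · refine ⟨Pi.single j (a i) - Pi.single i (a j), fun h => hai ?_, ?_⟩
    · simpa [hij.symm] using congr_fun h j
    · rw [sub_dotProduct, single_dotProduct, single_dotProduct, mul_comm, sub_self]

lemma exists_projTendsto_conj [IsLocallyProper L] (hπ : GeneralPosition π) {g : H} {c φ : ι → L}
    (hc : c ≠ 0) (hφ : φ ≠ 0) (hg : ProjTendsto (fun m => π (g ^ m)) atTop (vecMulVec c φ)) :
    ∃ (h : H) (ψ : Bool → ι → L), (∀ b, ψ b ≠ 0) ∧
      ∀ b, ProjTendsto (fun m => π (g ^ m * cond b h h⁻¹ * (g ^ m)⁻¹)) (hyperfilter ℕ)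
        (vecMulVec c (ψ b)) := by
  have hpow (m) : π g⁻¹ ^ m ≠ 0 := by
    have : Nontrivial (Matrix ι ι L) := ⟨vecMulVec c φ, 0, vecMulVec_ne_zero hc hφ⟩
    rw [← map_pow]
    exact ((Group.isUnit _).map π).ne_zero
  obtain ⟨Q, hQ, hpowQ⟩ := exists_projTendsto_pow hpow (hyperfilter ℕ)
  obtain ⟨j, hj⟩ : ∃ j, Qᵀ j ≠ 0 := by
    by_contra! h
    exact hQ (Matrix.transpose_eq_zero.1 (funext h))
  obtain ⟨h, hh⟩ := hπ.exists_dotProduct_ne_zero (f := fun _ : Unit => φ)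
    (v := fun _ : Unit => Qᵀ j) (fun _ => hφ) (fun _ => hj)
  refine ⟨h, fun b => φ ᵥ* (π (cond b h h⁻¹) * Q), fun b hψ => ?_, fun b => ?_⟩
  · have hψj : φ ⬝ᵥ π (cond b h h⁻¹) *ᵥ Qᵀ j = 0 := congr_fun hψ j
    cases b
    exacts [(hh () ()).2 hψj, (hh () ()).1 hψj]
  · have hlim := ((hg.mono Nat.hyperfilter_le_atTop).mul
      (projTendsto_const _ (π (cond b h h⁻¹)))).mul hpowQ
    simpa only [vecMulVec_mul, vecMul_vecMul, ← map_pow, ← map_mul, inv_pow] using hlim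

/-- A translate of `g ^ m * h * (g ^ m)⁻¹` is proximal together with its inverse. -/
lemma exists_biproximal [IsLocallyProper L] (hπ : GeneralPosition π) {g : H} {c φ : ι → L}
    (hc : c ≠ 0) (hφ : φ ≠ 0) (hg : ProjTendsto (fun m => π (g ^ m)) atTop (vecMulVec c φ)) :
    ∃ (y : ℕ → H) (a f : Bool → ι → L), (∀ b, f b ⬝ᵥ a b ≠ 0) ∧
      ∀ b, ProjTendsto (fun m => π (cond b (y m) (y m)⁻¹)) (hyperfilter ℕ)
        (vecMulVec (a b) (f b)) := by
  obtain ⟨h, ψ, hψ, hlim⟩ := exists_projTendsto_conj hπ hc hφ hg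
  obtain ⟨t, ht⟩ := hπ.exists_dotProduct_ne_zero (v := fun _ : Unit => c) hψ (fun _ => hc)
  refine ⟨fun m => t * (g ^ m * h * (g ^ m)⁻¹), fun b => cond b (π t *ᵥ c) c,
    fun b => cond b (ψ true) (ψ false ᵥ* π t⁻¹), Bool.forall_bool.2 ⟨?_, ?_⟩,
    Bool.forall_bool.2 ⟨?_, ?_⟩⟩
  · simpa only [cond_false, dotProduct_mulVec] using (ht false ()).2
  · exact (ht true ()).1
  · have := (hlim false).mul (projTendsto_const _ (π t⁻¹))
    simpa only [vecMulVec_mul, ← map_mul, cond_false, _root_.mul_inv_rev, inv_inv, mul_assoc]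
      using this
  · have := (projTendsto_const _ (π t)).mul (hlim true)
    simpa only [mul_vecMulVec, ← map_mul, cond_true] using this

lemma vecMul_dotProduct_mulVec_ne_zero {a f : Bool → ι → L} (hfa : ∀ b, f b ⬝ᵥ a b ≠ 0) {u : H}
    (hu : ∀ b b', f b ⬝ᵥ π u *ᵥ a b' ≠ 0 ∧ f b ⬝ᵥ π u⁻¹ *ᵥ a b' ≠ 0) {p q : Fin 2 × Bool}
    (hpq : p.1 = q.1 → p.2 = q.2) :
    (f p.2 ᵥ* π (![1, u] p.1)⁻¹) ⬝ᵥ (π (![1, u] q.1) *ᵥ a q.2) ≠ 0 := by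
  rw [← dotProduct_mulVec (f p.2), mulVec_mulVec, ← map_mul]
  rcases p with ⟨i, b⟩
  rcases q with ⟨j, b'⟩
  by_cases hij : i = j
  · obtain rfl : b = b' := hpq hij
    simpa [hij] using hfa b
  · fin_cases i <;> fin_cases j
    exacts [absurd rfl hij, by simpa using (hu b b').1, by simpa using (hu b b').2,
      absurd rfl hij]

/-- The two generators are `y m` and a conjugate of it in general position. -/
lemma hasFreeSubgroup_of_biproximal [Nontrivial ι] {α : Type*} {l : Filter α} [l.NeBot]
    (hπ : GeneralPosition π) {y : α → H} {a f : Bool → ι → L} (hfa : ∀ b, f b ⬝ᵥ a b ≠ 0)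
    (hy : ∀ b, ProjTendsto (fun m => π (cond b (y m) (y m)⁻¹)) l (vecMulVec (a b) (f b))) :
    HasFreeSubgroup H := by
  have hf (b) : f b ≠ 0 := fun h => hfa b (by rw [h, zero_dotProduct])
  have ha (b) : a b ≠ 0 := fun h => hfa b (by rw [h, dotProduct_zero])
  obtain ⟨u, hu⟩ := hπ.exists_dotProduct_ne_zero hf ha
  let v : Fin 2 → H := ![1, u]
  let a' (p : Fin 2 × Bool) : ι → L := π (v p.1) *ᵥ a p.2
  let f' (p : Fin 2 × Bool) : ι → L := f p.2 ᵥ* π (v p.1)⁻¹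
  have hfa' (p q : Fin 2 × Bool) (hpq : p.1 = q.1 → p.2 = q.2) : f' p ⬝ᵥ a' q ≠ 0 :=
    vecMul_dotProduct_mulVec_ne_zero hfa hu hpq
  have hf' (p) : f' p ≠ 0 := fun h => hfa' p p (fun _ => rfl) (by rw [h, zero_dotProduct])
  have hlim (p) : ProjTendsto (fun m => π (cond p.2 (v p.1 * y m * (v p.1)⁻¹)
      (v p.1 * y m * (v p.1)⁻¹)⁻¹)) l (vecMulVec (a' p) (f' p)) := by
    have := ((projTendsto_const _ (π (v p.1))).mul (hy p.2)).mul
      (projTendsto_const _ (π (v p.1)⁻¹))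
    rw [mul_vecMulVec, vecMulVec_mul] at this
    convert this using 2 with m
    rw [← map_mul, ← map_mul]
    cases p.2 <;> simp [mul_assoc]
  choose η hη hηa using fun p => exists_ne_zero_dotProduct_eq_zero (a' p)
  obtain ⟨r, hr⟩ := hπ.exists_dotProduct_ne_zero (f := Sum.elim f' η)
    (v := fun _ : Unit => a true) (Sum.rec hf' hη) (fun _ => ha true)
  obtain ⟨m, hm⟩ := exists_injective_lift_of_projTendsto π (l := l)
    (γ := fun m i => v i * y m * (v i)⁻¹) (a := a') (f := f') (η := η) (x₀ := π r *ᵥ a true)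
    hlim hfa' (fun p => (hr (.inl p) ()).1) hηa (fun p => (hr (.inr p) ()).1)
  exact ⟨_, hm⟩

end Proximal

/-! ### Expanding and contracting parts of a matrix -/

section SpectralSplitting

open Polynomial

variable {K ι κ : Type*} [Field K] [Fintype ι]

lemma exists_mul_eq_of_isIdempotentElem {P : Matrix ι ι K} (hP : IsIdempotentElem P) :
    ∃ (r : ℕ) (a : Matrix ι (Fin r) K) (α : Matrix (Fin r) ι K), a * α = P ∧ α * a = 1 := by
  classical
  let p := Matrix.toLin' P
  have hp : IsIdempotentElem p := by
    rw [IsIdempotentElem, Module.End.mul_eq_comp, ← Matrix.toLin'_mul, hP.eq]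
  let b := Module.finBasis K p.range
  let e := Pi.basisFun K ι
  refine ⟨_, LinearMap.toMatrix b e p.range.subtype, LinearMap.toMatrix e b p.rangeRestrict, ?_, ?_⟩
  · rw [← LinearMap.toMatrix_comp, LinearMap.subtype_comp_codRestrict]
    exact LinearMap.toMatrix'_toLin' P
  · rw [← LinearMap.toMatrix_comp, ← LinearMap.toMatrix_id b]
    congr 1
    ext1 w
    exact Subtype.ext (((LinearMap.isProj_range_iff_isIdempotentElem p).2 hp).map_id w w.2)

variable [DecidableEq ι] [Fintype κ] [DecidableEq κ]

lemma aeval_mul_eq_mul_aeval {M : Matrix ι ι K} {D : Matrix κ κ K} {a : Matrix ι κ K}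
    (h : M * a = a * D) (p : K[X]) : aeval M p * a = a * aeval D p := by
  induction p using Polynomial.induction_on with
  | C c => simp [Algebra.algebraMap_eq_smul_one]
  | add p q hp hq => rw [map_add, map_add, Matrix.add_mul, Matrix.mul_add, hp, hq]
  | monomial n c ih =>
    rw [pow_succ, ← mul_assoc, map_mul, aeval_X, Matrix.mul_assoc, h, ← Matrix.mul_assoc, ih,
      Matrix.mul_assoc, map_mul _ (C c * X ^ n), aeval_X]

lemma exists_compression {M P : Matrix ι ι K} (hP : IsIdempotentElem P) (hMP : Commute M P)
    {f : K[X]} (hf : aeval M f * P = 0) :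
    ∃ (r : ℕ) (a : Matrix ι (Fin r) K) (α : Matrix (Fin r) ι K) (D : Matrix (Fin r) (Fin r) K),
      α * a = 1 ∧ aeval D f = 0 ∧ ∀ p : K[X], aeval M p * P = a * aeval D p * α := by
  obtain ⟨r, a, α, rfl, hα⟩ := exists_mul_eq_of_isIdempotentElem hP
  have hD : M * a = a * (α * M * a) := by
    calc M * a = M * (a * α) * a := by rw [Matrix.mul_assoc, Matrix.mul_assoc, hα, Matrix.mul_one]
      _ = a * (α * M * a) := by rw [hMP.eq]; simp only [Matrix.mul_assoc]
  have hcomp := aeval_mul_eq_mul_aeval hD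
  refine ⟨r, a, α, α * M * a, hα, ?_, fun p => by rw [← hcomp, Matrix.mul_assoc]⟩
  calc aeval (α * M * a) f = α * (a * aeval (α * M * a) f) := by
        rw [← Matrix.mul_assoc, hα, Matrix.one_mul]
    _ = α * (aeval M f * (a * α) * a) := by
        rw [← hcomp]; simp only [Matrix.mul_assoc, hα, Matrix.mul_one]
    _ = 0 := by rw [hf, Matrix.zero_mul, Matrix.mul_zero]

lemma isRoot_of_mem_spectrum {M : Matrix ι ι K} {f : K[X]} (hf : aeval M f = 0) {μ : K}
    (hμ : μ ∈ spectrum K M) : f.IsRoot μ := by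
  by_contra hne
  have := spectrum.subset_polynomial_aeval M f ⟨μ, hμ, rfl⟩
  rw [hf, spectrum.mem_iff, sub_zero] at this
  exact this ((isUnit_iff_ne_zero.2 hne).map (algebraMap K _))

lemma exists_isCoprime_mul_eq_charpoly [IsAlgClosed K] (M : Matrix ι ι K) (s : Set K) :
    ∃ f g : K[X], IsCoprime f g ∧ f * g = M.charpoly ∧ (∀ μ, f.IsRoot μ → μ ∈ s) ∧
      ∀ μ, g.IsRoot μ → μ ∉ s := by
  classical
  have hroot (p : K → Prop) [DecidablePred p] (μ)
      (h : ((M.charpoly.roots.filter p).map (X - C ·)).prod.IsRoot μ) : p μ := by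
    rw [IsRoot.def, eval_multiset_prod, Multiset.prod_eq_zero_iff] at h
    simp only [Multiset.mem_map, Multiset.mem_filter] at h
    obtain ⟨_, ⟨ν, ⟨-, hν⟩, rfl⟩, h⟩ := h
    rw [eval_sub, eval_X, eval_C] at h
    rwa [sub_eq_zero.1 h]
  refine ⟨_, _, ?_, ?_, hroot (· ∈ s), hroot (· ∉ s)⟩
  · rw [isCoprime_iff_aeval_ne_zero_of_isAlgClosed K K]
    intro μ
    by_contra! h
    exact hroot _ μ h.2 (hroot _ μ h.1)
  · rw [← Multiset.prod_add, ← Multiset.map_add, Multiset.filter_add_not]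
    exact ((IsAlgClosed.splits _).eq_prod_roots_of_monic M.charpoly_monic).symm

lemma exists_spectral_splitting [IsAlgClosed K] (M : Matrix ι ι K) (s : Set K) :
    ∃ (r q : ℕ) (a : Matrix ι (Fin r) K) (α : Matrix (Fin r) ι K) (D : Matrix (Fin r) (Fin r) K)
      (b : Matrix ι (Fin q) K) (β : Matrix (Fin q) ι K) (E : Matrix (Fin q) (Fin q) K),
      α * a = 1 ∧ (∀ p : K[X], aeval M p = a * aeval D p * α + b * aeval E p * β) ∧
      spectrum K D ⊆ s ∧ spectrum K E ⊆ sᶜ := by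
  obtain ⟨f, g, hfg, hmul, hfs, hgs⟩ := exists_isCoprime_mul_eq_charpoly M s
  obtain ⟨c, hP, hf, hg⟩ := exists_isIdempotentElem_of_isCoprime hfg
    (x := M) (by rw [hmul, Matrix.aeval_self_charpoly])
  have hMP : Commute M (aeval M (c * g)) := by
    simpa using (Commute.all X (c * g)).map (aeval M)
  obtain ⟨r, a, α, D, hα, hD, hDM⟩ := exists_compression hP hMP hf
  obtain ⟨q, b, β, E, -, hE, hEM⟩ := exists_compression hP.one_sub
    ((Commute.one_right M).sub_right hMP) hg
  refine ⟨r, q, a, α, D, b, β, E, hα, fun p => ?_, fun μ hμ => hfs μ (isRoot_of_mem_spectrum hD hμ),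
    fun μ hμ => hgs μ (isRoot_of_mem_spectrum hE hμ)⟩
  rw [← hDM, ← hEM, ← Matrix.mul_add, add_sub_cancel, Matrix.mul_one]

lemma mem_spectrum_or_of_aeval_eq {r q : Type*} [Fintype r] [DecidableEq r] [Fintype q]
    [DecidableEq q] {M : Matrix ι ι K} {a : Matrix ι r K} {α : Matrix r ι K} {D : Matrix r r K}
    {b : Matrix ι q K} {β : Matrix q ι K} {E : Matrix q q K}
    (h : ∀ p : K[X], aeval M p = a * aeval D p * α + b * aeval E p * β) {μ : K}
    (hμ : μ ∈ spectrum K M) : μ ∈ spectrum K D ∨ μ ∈ spectrum K E := by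
  have hann : aeval M (D.charpoly * E.charpoly) = 0 := by
    simp [h, Matrix.aeval_self_charpoly]
  simpa only [Matrix.mem_spectrum_iff_isRoot_charpoly, root_mul] using
    isRoot_of_mem_spectrum hann hμ

end SpectralSplitting

section Decay

open Filter Polynomial

variable {L ι κ : Type*} [NormedField L] [Fintype ι] [DecidableEq ι] [Fintype κ] [DecidableEq κ]

lemma summable_of_le_mul_add {u e : ℕ → ℝ} {θ : ℝ} (hu : ∀ m, 0 ≤ u m) (he₀ : ∀ m, 0 ≤ e m)
    (he : Summable e) (hθ : θ < 1) (h : ∀ m, u (m + 1) ≤ θ * u m + e m) :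
    Summable u := by
  refine summable_of_sum_range_le hu (c := (u 0 + ∑' m, e m) / (1 - θ)) fun N => ?_
  rw [le_div_iff₀ (sub_pos.2 hθ)]
  have hN : ∑ m ∈ Finset.range N, u m ≤ ∑ m ∈ Finset.range (N + 1), u m :=
    Finset.sum_le_sum_of_subset_of_nonneg (by simp) fun m _ _ => hu m
  have hstep : ∑ m ∈ Finset.range (N + 1), u m ≤
      θ * ∑ m ∈ Finset.range N, u m + ∑' m, e m + u 0 := by
    rw [Finset.sum_range_succ', Finset.mul_sum]
    gcongr
    calc ∑ m ∈ Finset.range N, u (m + 1) ≤ ∑ m ∈ Finset.range N, (θ * u m + e m) :=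
          Finset.sum_le_sum fun m _ => h m
      _ ≤ ∑ m ∈ Finset.range N, θ * u m + ∑' m, e m := by
          rw [Finset.sum_add_distrib]
          gcongr
          exact he.sum_le_tsum _ fun m _ => he₀ m
  linarith

lemma summable_norm_pow_mul {A : Type*} [NormedRing A] [NormedAlgebra L A] {x y : A}
    {s : Multiset L} (hs : ∀ μ ∈ s, ‖μ‖ < 1)
    (hxy : aeval x (s.map (X - C ·)).prod * y = 0) : Summable fun m : ℕ => ‖x ^ m * y‖ := by
  induction s using Multiset.induction_on generalizing y with
  | empty =>
    obtain rfl : y = 0 := by simpa using hxy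
    simp [summable_zero]
  | cons μ s ih =>
    have he := ih (fun ν hν => hs ν (Multiset.mem_cons_of_mem hν))
      (y := (x - algebraMap L A μ) * y) (by
        rw [← hxy, Multiset.map_cons, Multiset.prod_cons, mul_comm (X - C μ), map_mul, ← mul_assoc,
          map_sub, aeval_X, aeval_C])
    refine summable_of_le_mul_add (fun _ => norm_nonneg _) (fun _ => norm_nonneg _) he
      (hs μ (Multiset.mem_cons_self μ s)) fun m => ?_
    have hrec : x ^ (m + 1) * y = μ • (x ^ m * y) + x ^ m * ((x - algebraMap L A μ) * y) := by
      rw [sub_mul, ← Algebra.smul_def, mul_sub, mul_smul_comm, ← mul_assoc, ← pow_succ]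
      abel
    rw [hrec]
    exact (norm_add_le _ _).trans (by rw [norm_smul])

open scoped Matrix.Norms.Operator in
lemma tendsto_pow_zero_of_forall_spectrum [IsAlgClosed L] {M : Matrix ι ι L}
    (hM : ∀ μ ∈ spectrum L M, ‖μ‖ < 1) : Tendsto (M ^ ·) atTop (𝓝 0) := by
  have hroots : ∀ μ ∈ M.charpoly.roots, ‖μ‖ < 1 := fun μ hμ =>
    hM μ (Matrix.mem_spectrum_iff_isRoot_charpoly.2 (isRoot_of_mem_roots hμ))
  have hsum := summable_norm_pow_mul (x := M) (y := 1) hroots (by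
    rw [← (IsAlgClosed.splits _).eq_prod_roots_of_monic M.charpoly_monic,
      Matrix.aeval_self_charpoly, zero_mul])
  simp only [mul_one] at hsum
  exact tendsto_zero_iff_norm_tendsto_zero.2 hsum.tendsto_atTop_zero

lemma tendsto_smul_pow_zero [IsAlgClosed L] {A : Matrix ι ι L} {t : L} (ht : t ≠ 0)
    (hA : ∀ μ ∈ spectrum L A, ‖μ‖ < ‖t‖⁻¹) : Tendsto ((t • A) ^ ·) atTop (𝓝 0) := by
  refine tendsto_pow_zero_of_forall_spectrum fun μ hμ => ?_
  rw [← mul_inv_cancel_left₀ ht μ] at hμ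
  have := hA _ (spectrum.smul_mem_smul_iff (r := Units.mk0 t ht).1 hμ)
  rwa [norm_mul, norm_inv, inv_mul_lt_iff₀ (norm_pos_iff.2 ht),
    mul_inv_cancel₀ (norm_ne_zero_iff.2 ht)] at this

/-- A square root of the smallest eigenvalue of `D` separates the two spectra. -/
lemma exists_tendsto_smul_pow_zero [IsAlgClosed L] {D : Matrix ι ι L} {E : Matrix κ κ L}
    (hne : (spectrum L D).Nonempty) (hD : ∀ μ ∈ spectrum L D, 1 < ‖μ‖)
    (hE : ∀ μ ∈ spectrum L E, ‖μ‖ ≤ 1) :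
    ∃ t : L, t ≠ 0 ∧ Tendsto ((t • D⁻¹) ^ ·) atTop (𝓝 0) ∧
      Tendsto ((t⁻¹ • E) ^ ·) atTop (𝓝 0) := by
  obtain ⟨ν, hν, hmin⟩ := Set.exists_min_image _ norm (Matrix.finite_spectrum D) hne
  obtain ⟨t, rfl⟩ := IsAlgClosed.exists_pow_nat_eq ν two_pos
  rw [norm_pow] at hmin
  have ht : 1 < ‖t‖ := by simpa using hD _ hν
  have ht₀ : t ≠ 0 := norm_pos_iff.1 (zero_lt_one.trans ht)
  refine ⟨t, ht₀, tendsto_smul_pow_zero ht₀ fun μ hμ => ?_,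
    tendsto_smul_pow_zero (inv_ne_zero ht₀) fun μ hμ => ?_⟩
  · have hμD : μ⁻¹ ∈ spectrum L D := by
      obtain ⟨D, rfl⟩ : IsUnit D := spectrum.isUnit_of_zero_notMem L fun h =>
        absurd (hD 0 h) (by simp)
      rwa [← Matrix.coe_units_inv, ← spectrum.map_inv] at hμ
    rw [← inv_inv μ, norm_inv]
    exact inv_strictAnti₀ (zero_lt_one.trans ht)
      ((lt_self_pow₀ ht one_lt_two).trans_le (hmin _ hμD))
  · rw [norm_inv, inv_inv]
    exact (hE μ hμ).trans_lt ht

lemma det_fromBlocks_zero_neg_zero {R : Type*} [CommRing R] (X Y : Matrix ι ι R) :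
    (fromBlocks 0 Y (-X) 0).det = X.det * Y.det := by
  have hfactor : fromBlocks 0 Y (-X) 0 = fromBlocks Y 0 0 X *
      (fromBlocks 1 1 0 1 * fromBlocks 1 0 (-1) 1 * fromBlocks 1 1 0 1) := by
    simp [fromBlocks_multiply]
  simp [hfactor, mul_comm]

/-- Up to scalars the block matrix with diagonal blocks `D⁻¹ ^ m` and `X₂ * E ^ m * Y₂` tends to
an off-diagonal one; its determinant is computed by the Schur complement. -/
lemma tendsto_det {D : Matrix ι ι L} {E : Matrix κ κ L} {t : L} (hD : IsUnit D.det) (ht : t ≠ 0)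
    (hDt : Tendsto ((t • D⁻¹) ^ ·) atTop (𝓝 0)) (hEt : Tendsto ((t⁻¹ • E) ^ ·) atTop (𝓝 0))
    (X₁ Y₁ : Matrix ι ι L) (X₂ : Matrix ι κ L) (Y₂ : Matrix κ ι L) :
    Tendsto (fun m => (D.det ^ m)⁻¹ * (X₁ * D ^ m * Y₁ + X₂ * E ^ m * Y₂).det) atTop
      (𝓝 (X₁.det * Y₁.det)) := by
  let B (AZ : Matrix ι ι L × Matrix κ κ L) := fromBlocks AZ.1 Y₁ (-X₁) (X₂ * AZ.2 * Y₂)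
  have hB : Continuous fun AZ => (B AZ).det :=
    (continuous_fst.matrix_fromBlocks continuous_const continuous_const (by fun_prop)).matrix_det
  have hlim := (hB.tendsto (0, 0)).comp (hDt.prodMk_nhds hEt)
  have hB₀ : (B (0, 0)).det = X₁.det * Y₁.det := by
    simp only [B, Matrix.mul_zero, Matrix.zero_mul, det_fromBlocks_zero_neg_zero]
  rw [hB₀] at hlim
  refine hlim.congr fun m => ?_
  have hinv : (t • D⁻¹) ^ m * (t⁻¹ • D) ^ m = 1 := by
    have hcomm : Commute (t • D⁻¹) (t⁻¹ • D) := by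
      simp only [Commute, SemiconjBy, smul_mul_smul_comm, nonsing_inv_mul D hD,
        mul_nonsing_inv D hD, mul_comm]
    rw [← hcomm.mul_pow, smul_mul_smul_comm, mul_inv_cancel₀ ht, nonsing_inv_mul D hD, one_smul,
      one_pow]
  have : Invertible ((t • D⁻¹) ^ m) := invertibleOfRightInverse _ _ hinv
  rw [Function.comp_apply, det_fromBlocks₁₁, invOf_eq_right_inv hinv]
  have hschur : X₂ * (t⁻¹ • E) ^ m * Y₂ - -X₁ * (t⁻¹ • D) ^ m * Y₁ =
      (t⁻¹ ^ m) • (X₁ * D ^ m * Y₁ + X₂ * E ^ m * Y₂) := by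
    simp only [_root_.smul_pow, Matrix.mul_smul, Matrix.smul_mul, Matrix.neg_mul]
    rw [smul_neg, sub_neg_eq_add, smul_add, add_comm]
  have hscale : t⁻¹ ^ m • (t • D⁻¹) ^ m = D⁻¹ ^ m := by
    rw [← _root_.smul_pow, inv_smul_smul₀ ht]
  rw [hschur, ← det_mul, Matrix.mul_smul, ← Matrix.smul_mul, hscale, det_mul, det_pow,
    det_nonsing_inv, Ring.inverse_eq_inv', inv_pow]

lemma one_lt_norm_det [IsAlgClosed L] {D : Matrix ι ι L} (hne : (spectrum L D).Nonempty)
    (hD : ∀ μ ∈ spectrum L D, 1 < ‖μ‖) : 1 < ‖D.det‖ := by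
  obtain ⟨ν, hν⟩ := hne
  rw [Matrix.mem_spectrum_iff_isRoot_charpoly, ← mem_roots D.charpoly_monic.ne_zero] at hν
  have hroots : ∀ μ ∈ D.charpoly.roots, 1 < ‖μ‖ := fun μ hμ =>
    hD μ (Matrix.mem_spectrum_iff_isRoot_charpoly.2 (isRoot_of_mem_roots hμ))
  obtain ⟨s, hs⟩ := Multiset.exists_cons_of_mem hν
  rw [Matrix.det_eq_prod_roots_charpoly]
  rw [hs] at hroots ⊢
  have hnorm : ‖s.prod‖ = (s.map norm).prod := map_multiset_prod normHom s
  rw [Multiset.prod_cons, norm_mul, hnorm]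
  exact one_lt_mul_of_lt_of_le (hroots ν (Multiset.mem_cons_self ν s))
    (Multiset.one_le_prod_map fun μ hμ => (hroots μ (Multiset.mem_cons_of_mem hμ)).le)

lemma exists_tendsto_det [IsAlgClosed L] (M : Matrix ι ι L) {μ : L} (hμ : μ ∈ spectrum L M)
    (hμ₁ : 1 < ‖μ‖) :
    ∃ (r : ℕ) (a : Matrix ι (Fin r) L) (α : Matrix (Fin r) ι L) (δ : L), α * a = 1 ∧ 1 < ‖δ‖ ∧
      ∀ (X : Matrix (Fin r) ι L) (Y : Matrix ι (Fin r) L),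
        Tendsto (fun m => (δ ^ m)⁻¹ * (X * M ^ m * Y).det) atTop
          (𝓝 ((X * a).det * (α * Y).det)) := by
  obtain ⟨r, q, a, α, D, b, β, E, hα, hM, hD, hE⟩ := exists_spectral_splitting M {μ | 1 < ‖μ‖}
  have hne : (spectrum L D).Nonempty :=
    ⟨μ, (mem_spectrum_or_of_aeval_eq hM hμ).resolve_right fun h => hE h hμ₁⟩
  have hdet := one_lt_norm_det hne hD
  obtain ⟨t, ht, hDt, hEt⟩ := exists_tendsto_smul_pow_zero hne hD fun μ hμ => not_lt.1 (hE hμ)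
  refine ⟨r, a, α, D.det, hα, hdet, fun X Y => ?_⟩
  refine (tendsto_det (isUnit_iff_ne_zero.2 (norm_pos_iff.1 (zero_lt_one.trans hdet))) ht hDt hEt
    (X * a) (α * Y) (X * b) (β * Y)).congr fun m => ?_
  have hpow : M ^ m = a * D ^ m * α + b * E ^ m * β := by
    simpa using hM (Polynomial.X ^ m)
  rw [hpow, Matrix.mul_add, Matrix.add_mul]
  simp only [Matrix.mul_assoc]

end Decay

/-! ### The representation generated by a function -/

section TranslateRep

variable {L H : Type*} [Field L] [Group H]

/-- The right regular representation of `H` on the space of all functions. -/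
def rightTranslation (L H : Type*) [Field L] [Group H] : Representation L H (H → L) where
  toFun h := LinearMap.funLeft L L (· * h)
  map_one' := by ext; simp
  map_mul' _ _ := by ext; simp [LinearMap.funLeft, mul_assoc]

@[simp]
lemma rightTranslation_apply (h : H) (c : H → L) (x : H) :
    rightTranslation L H h c x = c (x * h) := rfl

/-- The space spanned by the right translates of `c`. -/
def translateSpan (c : H → L) : Submodule L (H → L) :=
  Submodule.span L (Set.range fun h => rightTranslation L H h c)

lemma translateSpan_le_iff {c : H → L} {W : Submodule L (H → L)} :
    translateSpan c ≤ W ↔ ∀ h, (fun x => c (x * h)) ∈ W := by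
  rw [translateSpan, Submodule.span_le, Set.range_subset_iff]
  rfl

lemma translate_mem_translateSpan (c : H → L) (h : H) : (fun x => c (x * h)) ∈ translateSpan c :=
  translateSpan_le_iff.1 le_rfl h

/-- The subrepresentation of the right regular representation generated by `c`. -/
def translateRep (c : H → L) : Representation L H (translateSpan c) :=
  (rightTranslation L H).subrepresentation (translateSpan c) fun g =>
    translateSpan_le_iff.2 fun h => by
      have hgh : rightTranslation L H g (fun x => c (x * h)) = fun x => c (x * (g * h)) := by
        ext x
        rw [rightTranslation_apply, mul_assoc]
      rw [Submodule.mem_comap, hgh]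
      exact translate_mem_translateSpan c (g * h)

@[simp]
lemma translateRep_apply (c : H → L) (h : H) (w : translateSpan c) (x : H) :
    (translateRep c h w).1 x = w.1 (x * h) := rfl

/-- The function `c` as an element of the representation it generates. -/
def translateGen (c : H → L) : translateSpan c :=
  ⟨c, by simpa using translate_mem_translateSpan c 1⟩

lemma translateGen_ne_zero {c : H → L} (hc : c 1 = 1) : translateGen c ≠ 0 := fun h0 =>
  one_ne_zero (hc.symm.trans (congr_fun (congr_arg Subtype.val h0) 1))

lemma mul_apply_of_finrank_eq_one {c : H → L} (hc : c 1 = 1)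
    (h1 : Module.finrank L (translateSpan c) = 1) (x h : H) : c (x * h) = c x * c h := by
  obtain ⟨a, ha⟩ := (finrank_eq_one_iff_of_nonzero' _ (translateGen_ne_zero hc)).1 h1
    (translateRep c h (translateGen c))
  have happly (y) : a * c y = c (y * h) := congr_fun (congr_arg Subtype.val ha) y
  have ha_eq : a = c h := by simpa [hc] using happly 1
  rw [← happly, ha_eq, mul_comm]

lemma span_range_translateRep (c : H → L) :
    Submodule.span L (Set.range fun h => translateRep c h (translateGen c)) = ⊤ := by
  apply Submodule.map_injective_of_injective (translateSpan c).injective_subtype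
  rw [Submodule.map_span, Submodule.map_subtype_top, ← Set.range_comp]
  rfl

lemma span_range_eval_eq_top {X : Type*} (W : Submodule L (X → L)) [FiniteDimensional L W] :
    Submodule.span L (Set.range fun x => LinearMap.proj x ∘ₗ W.subtype) =
      (⊤ : Submodule L (Module.Dual L W)) := by
  refine Submodule.span_eq_top_of_ne_zero fun w hw => ?_
  by_contra! h
  exact hw (Subtype.ext (funext fun x => h _ ⟨x, rfl⟩))

lemma apply_translateRep_mem_regularFunctions {ι : Type*} [Fintype ι] [DecidableEq ι]
    {ρ : H →* GL ι L} {c : H → L} [FiniteDimensional L (translateSpan c)]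
    (hc : c ∈ regularFunctions ρ) (F : Module.Dual L (translateSpan c)) (w : translateSpan c) :
    (fun u => F (translateRep c u w)) ∈ regularFunctions ρ := by
  have hw : w.1 ∈ Subalgebra.toSubmodule (regularFunctions ρ) :=
    translateSpan_le_iff.2 (fun h => mul_right_mem_regularFunctions ρ h hc) w.2
  have hF : F ∈ Submodule.span L _ := span_range_eval_eq_top (translateSpan c) ▸ Submodule.mem_top
  induction hF using Submodule.span_induction with
  | mem F h =>
    obtain ⟨x, rfl⟩ := h
    exact mul_left_mem_regularFunctions ρ x hw
  | zero => exact (regularFunctions ρ).zero_mem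
  | add F F' _ _ h h' => exact (regularFunctions ρ).add_mem h h'
  | smul a F _ h => exact (regularFunctions ρ).smul_mem h a

end TranslateRep

section MatrixRep

variable {L H V ι κ : Type*} [Group H] [AddCommGroup V] [Fintype κ] [DecidableEq κ]

/-- The matrices of a representation in a basis. -/
noncomputable def matrixRep [Field L] [Module L V] (T : Representation L H V)
    (b : Module.Basis κ L V) : H →* Matrix κ κ L :=
  (LinearMap.toMatrixAlgEquiv b : Module.End L V →* Matrix κ κ L).comp T

lemma dotProduct_matrixRep_mulVec [Field L] [Module L V] (T : Representation L H V)
    (b : Module.Basis κ L V) (f v : κ → L) (h : H) :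
    f ⬝ᵥ matrixRep T b h *ᵥ v = b.constr L f (T h (b.equivFun.symm v)) := by
  have hv : matrixRep T b h *ᵥ v = b.equivFun (T h (b.equivFun.symm v)) := by
    conv_lhs => rw [← b.equivFun.apply_symm_apply v]
    exact LinearMap.toMatrix_mulVec_repr b b (T h) _
  rw [hv, dotProduct_comm, Module.Basis.constr_apply_fintype]
  rfl

lemma generalPosition_matrixRep [Field L] [Module L V] [Fintype ι] [DecidableEq ι]
    {ρ : H →* GL ι L} [NoZeroDivisors (regularFunctions ρ)] {T : Representation L H V}
    (hreg : ∀ (F : Module.Dual L V) w, (fun u => F (T u w)) ∈ regularFunctions ρ)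
    (hirr : ∀ (F : Module.Dual L V) w, F ≠ 0 → w ≠ 0 → ∃ u, F (T u w) ≠ 0)
    (b : Module.Basis κ L V) : GeneralPosition (matrixRep T b) := by
  intro F V hF hV hF0 hV0
  let a (p : ((κ → L) × (κ → L)) × Bool) (u : H) : L :=
    p.1.1 ⬝ᵥ matrixRep T b (cond p.2 u u⁻¹) *ᵥ p.1.2
  have ha (p) : a p ∈ regularFunctions ρ := by
    obtain ⟨⟨f, v⟩, _ | _⟩ := p
    · simp only [a, dotProduct_matrixRep_mulVec, cond_false]
      exact inv_mem_regularFunctions ρ (hreg _ _)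
    · simp only [a, dotProduct_matrixRep_mulVec, cond_true]
      exact hreg _ _
  have hne : ∀ p ∈ (hF.toFinset ×ˢ hV.toFinset) ×ˢ Finset.univ, ∃ u, a p u ≠ 0 := by
    rintro ⟨⟨f, v⟩, e⟩ hfv
    simp only [Finset.mem_product, Set.Finite.mem_toFinset] at hfv
    obtain ⟨u, hu⟩ := hirr (b.constr L f) (b.equivFun.symm v)
      ((b.constr L).map_ne_zero_iff.2 (ne_of_mem_of_not_mem hfv.1.1 hF0))
      (b.equivFun.symm.map_ne_zero_iff.2 (ne_of_mem_of_not_mem hfv.1.2 hV0))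
    refine ⟨cond e u u⁻¹, ?_⟩
    cases e <;> simpa [a, dotProduct_matrixRep_mulVec] using hu
  obtain ⟨u, hu⟩ := exists_forall_ne_zero ρ _ (fun p _ => ha p) hne
  exact ⟨u, fun f hf v hv => ⟨hu ((f, v), true) (by simp [hf, hv]),
    hu ((f, v), false) (by simp [hf, hv])⟩⟩

end MatrixRep

section Contracts

open Filter

variable {L H : Type*} [NormedField L] [Group H] {c : H → L} {g : H} {δ : L}

/-- The normalised powers of `g` contract the space of translates of `c` to the line of `c`. -/
def Contracts (g : H) (δ : L) (c : H → L) : Prop :=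
  ∀ x h, Tendsto (fun m => (δ ^ m)⁻¹ * c (x * g ^ m * h)) atTop (𝓝 (c x * c h))

lemma Contracts.tendsto_eval (hg : Contracts g δ c) (w : translateSpan c) (x : H) :
    Tendsto (fun m => (δ ^ m)⁻¹ * w.1 (x * g ^ m)) atTop (𝓝 (w.1 1 * c x)) := by
  obtain ⟨w, hw⟩ := w
  induction hw using Submodule.span_induction with
  | mem w h =>
    obtain ⟨h, rfl⟩ := h
    simpa [mul_comm] using hg x h
  | zero => simp
  | add v w _ _ h h' => simpa [mul_add, add_mul] using h.add h'
  | smul a w _ h => simpa [mul_left_comm, mul_assoc] using h.const_mul a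

variable [FiniteDimensional L (translateSpan c)]

lemma Contracts.tendsto_dual (hg : Contracts g δ c) (F : Module.Dual L (translateSpan c))
    (w : translateSpan c) :
    Tendsto (fun m => (δ ^ m)⁻¹ * F (translateRep c (g ^ m) w)) atTop
      (𝓝 (w.1 1 * F (translateGen c))) := by
  have hF : F ∈ Submodule.span L _ := span_range_eval_eq_top (translateSpan c) ▸ Submodule.mem_top
  induction hF using Submodule.span_induction with
  | mem F h =>
    obtain ⟨x, rfl⟩ := h
    exact hg.tendsto_eval w x
  | zero => simp
  | add F F' _ _ h h' => simpa [mul_add] using h.add h'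
  | smul a F _ h => simpa [mul_left_comm, mul_assoc] using h.const_mul a

/-- The representation is irreducible: a subrepresentation containing `w ≠ 0` contains in the
limit a multiple `w y • c`. -/
lemma Contracts.exists_apply_translateRep_ne_zero (hg : Contracts g δ c)
    {F : Module.Dual L (translateSpan c)} (hF : F ≠ 0) {w : translateSpan c} (hw : w ≠ 0) :
    ∃ u, F (translateRep c u w) ≠ 0 := by
  by_contra! h
  obtain ⟨y, hy⟩ : ∃ y, w.1 y ≠ 0 := Function.ne_iff.1 fun h0 => hw (Subtype.ext h0)
  refine hF (LinearMap.ext_on_range (span_range_translateRep c) fun x => ?_)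
  have hlim := hg.tendsto_dual (F ∘ₗ translateRep c x) (translateRep c y w)
  have hzero (m : ℕ) : (F ∘ₗ translateRep c x) (translateRep c (g ^ m) (translateRep c y w)) =
      0 := by
    rw [LinearMap.comp_apply, ← Module.End.mul_apply, ← Module.End.mul_apply, ← map_mul, ← map_mul]
    exact h _
  simp only [hzero, mul_zero, translateRep_apply, one_mul] at hlim
  exact (mul_eq_zero.1 (tendsto_nhds_unique hlim tendsto_const_nhds)).resolve_left hy

/-- A one-dimensional representation would be a character, trivial on commutators. -/
lemma Contracts.one_lt_finrank (hg : Contracts g δ c) (hc : c 1 = 1) (hgH : g ∈ commutator H)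
    (hδ : 1 < ‖δ‖) : 1 < Module.finrank L (translateSpan c) := by
  by_contra! hle
  let χ : H →* L :=
    { toFun := c
      map_one' := hc
      map_mul' := mul_apply_of_finrank_eq_one hc
        (hle.antisymm (Module.finrank_pos_iff_exists_ne_zero.2 ⟨_, translateGen_ne_zero hc⟩)) }
  have hχ : χ g = 1 := congr_arg Units.val (Abelianization.commutator_subset_ker χ.toHomUnits hgH)
  have hpow (m : ℕ) : c (g ^ m) = 1 := (map_pow χ g m).trans (by rw [hχ, one_pow])
  have hlim := hg 1 1
  simp only [one_mul, mul_one, hpow, hc, ← inv_pow] at hlim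
  refine zero_ne_one (tendsto_nhds_unique (tendsto_pow_atTop_nhds_zero_of_norm_lt_one ?_) hlim)
  rw [norm_inv]
  exact inv_lt_one_of_one_lt₀ hδ

lemma Contracts.projTendsto_matrixRep {κ : Type*} [Fintype κ] [DecidableEq κ]
    (hg : Contracts g δ c) (hδ : δ ≠ 0) (b : Module.Basis κ L (translateSpan c)) :
    ProjTendsto (fun m => matrixRep (translateRep c) b (g ^ m)) atTop
      (vecMulVec (b.equivFun (translateGen c)) fun j => (b j).1 1) := by
  refine ⟨fun m => (δ ^ m)⁻¹, fun m => inv_ne_zero (pow_ne_zero m hδ),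
    tendsto_pi_nhds.2 fun i => tendsto_pi_nhds.2 fun j => ?_⟩
  rw [vecMulVec_apply, mul_comm]
  refine (hg.tendsto_dual (b.coord i) (b j)).congr fun m => ?_
  rw [Matrix.smul_apply, smul_eq_mul]
  congr 1
  exact (LinearMap.toMatrixAlgEquiv_apply b _ i j).symm

lemma Contracts.hasFreeSubgroup [IsLocallyProper L] {ι : Type*} [Fintype ι] [DecidableEq ι]
    {ρ : H →* GL ι L} [NoZeroDivisors (regularFunctions ρ)]
    (hg : Contracts g δ c) (hcρ : c ∈ regularFunctions ρ)
    (hc : c 1 = 1) (hgH : g ∈ commutator H) (hδ : 1 < ‖δ‖) : HasFreeSubgroup H := by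
  let b := Module.finBasis L (translateSpan c)
  have hdim := hg.one_lt_finrank hc hgH hδ
  have : Nontrivial (Fin (Module.finrank L (translateSpan c))) := Fin.nontrivial_iff_two_le.2 hdim
  have hev : (fun j => (b j).1 1) ≠ 0 := fun h0 => by
    have : LinearMap.proj 1 ∘ₗ (translateSpan c).subtype = 0 := b.ext fun j => congr_fun h0 j
    exact zero_ne_one ((LinearMap.congr_fun this (translateGen c)).symm.trans hc)
  have hπ := generalPosition_matrixRep (apply_translateRep_mem_regularFunctions hcρ)
    (fun F w hF hw => hg.exists_apply_translateRep_ne_zero hF hw) b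
  obtain ⟨y, a, f, hfa, hy⟩ := exists_biproximal hπ
    (b.equivFun.map_ne_zero_iff.2 (translateGen_ne_zero hc)) hev
    (hg.projTendsto_matrixRep (norm_pos_iff.1 (zero_lt_one.trans hδ)) b)
  exact hasFreeSubgroup_of_biproximal hπ hfa hy

end Contracts

/-! ### Eigenvalues outside the unit disc -/

section LocallyFinite

variable {k ι Γ : Type*} [Field k] [Fintype ι] [DecidableEq ι] [Group Γ]

lemma finiteDimensional_translateSpan {ρ : Γ →* GL ι k} {c : Γ → k}
    (hc : c ∈ regularFunctions ρ) : FiniteDimensional k (translateSpan c) := by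
  suffices h : ∃ W : Submodule k (Γ → k), W.FG ∧ ∀ h, (fun x => c (x * h)) ∈ W by
    obtain ⟨W, hW, hcW⟩ := h
    have := Submodule.fg_iff_finiteDimensional W |>.1 hW
    exact Submodule.finiteDimensional_of_le (translateSpan_le_iff.2 hcW)
  have hspan (e : ι → Γ → k) : (Submodule.span k (Set.range e)).FG :=
    Submodule.fg_span (Set.finite_range e)
  induction hc using Algebra.adjoin_induction with
  | mem c hc =>
    rcases hc with ⟨⟨i, j⟩, rfl⟩ | ⟨⟨i, j⟩, rfl⟩
    · refine ⟨_, hspan fun l x => (ρ x).1 i l, fun h => ?_⟩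
      have hsum : (fun x => (ρ (x * h)).1 i j) = ∑ l, (ρ h).1 l j • fun x => (ρ x).1 i l := by
        ext x
        simp [Matrix.mul_apply, mul_comm]
      rw [hsum]
      exact Submodule.sum_smul_mem _ _ fun l _ => Submodule.subset_span ⟨l, rfl⟩
    · refine ⟨_, hspan fun l x => (ρ x⁻¹).1 l j, fun h => ?_⟩
      have hsum : (fun x => (ρ (x * h)⁻¹).1 i j) =
          ∑ l, (ρ h⁻¹).1 i l • fun x => (ρ x⁻¹).1 l j := by
        ext x
        simp [Matrix.mul_apply]
      rw [hsum]
      exact Submodule.sum_smul_mem _ _ fun l _ => Submodule.subset_span ⟨l, rfl⟩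
  | algebraMap a => exact ⟨_, Submodule.fg_span_singleton (algebraMap k (Γ → k) a),
      fun _ => Submodule.mem_span_singleton_self _⟩
  | add a b _ _ ha hb =>
    obtain ⟨W, hW, haW⟩ := ha
    obtain ⟨W', hW', hbW'⟩ := hb
    exact ⟨W ⊔ W', hW.sup hW', fun h => Submodule.add_mem_sup (haW h) (hbW' h)⟩
  | mul a b _ _ ha hb =>
    obtain ⟨W, hW, haW⟩ := ha
    obtain ⟨W', hW', hbW'⟩ := hb
    exact ⟨W * W', hW.mul hW', fun h => Submodule.mul_mem_mul (haW h) (hbW' h)⟩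

end LocallyFinite

section Eigenvalue

variable {k L ι H : Type*} [Field k] [NormedField L] [IsAlgClosed L] [IsLocallyProper L]
  [Fintype ι] [DecidableEq ι] [Group H]

lemma hasFreeSubgroup_of_one_lt_norm {ρ : H →* GL ι L} [NoZeroDivisors (regularFunctions ρ)]
    {g : H} (hg : g ∈ commutator H) {μ : L} (hμ : μ ∈ spectrum L (ρ g).1) (hμ₁ : 1 < ‖μ‖) :
    HasFreeSubgroup H := by
  obtain ⟨r, a, α, δ, hα, hδ, hlim⟩ := exists_tendsto_det (ρ g).1 hμ hμ₁
  let c (x : H) : L := (α * (ρ x).1 * a).det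
  have hc : c ∈ regularFunctions ρ :=
    det_mem_regularFunctions ρ <| matrix_mul_mem_regularFunctions ρ
      (matrix_mul_mem_regularFunctions ρ (fun _ _ => const_mem_regularFunctions ρ _)
        (entry_mem_regularFunctions ρ)) fun _ _ => const_mem_regularFunctions ρ _
  have hcontr : Contracts g δ c := fun x h => by
    simpa only [c, map_mul, map_pow, Units.val_mul, Units.val_pow_eq_pow_val, Matrix.mul_assoc]
      using hlim (α * (ρ x).1) ((ρ h).1 * a)
  have := finiteDimensional_translateSpan hc
  exact hcontr.hasFreeSubgroup hc (by simp [c, hα]) hg hδ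

lemma norm_le_one_of_not_hasFreeSubgroup {ρ : H →* GL ι k} [NoZeroDivisors (regularFunctions ρ)]
    (hfree : ¬HasFreeSubgroup H) (σ : k →+* L) {g : H} (hg : g ∈ commutator H) :
    ∀ μ ∈ ((ρ g).1.map σ).charpoly.roots, ‖μ‖ ≤ 1 := by
  intro μ hμ
  algebraize [σ]
  have := noZeroDivisors_regularFunctions_map (L := L) ρ
  by_contra! hμ₁
  exact hfree (hasFreeSubgroup_of_one_lt_norm hg
    (ρ := (Matrix.GeneralLinearGroup.map (algebraMap k L)).comp ρ)
    (Matrix.mem_spectrum_iff_isRoot_charpoly.2 (Polynomial.isRoot_of_mem_roots hμ)) hμ₁)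

end Eigenvalue

/-! ### The alternative -/

section Alternative

open Cardinal

lemma isSolvable_of_not_hasFreeSubgroup {ι k H : Type*} [Fintype ι] [DecidableEq ι] [Field k]
    [CharZero k] [FiniteDimensional ℚ (algebraicClosure ℚ k)] (hk : #k ≤ 𝔠) [Group H]
    {ρ : H →* GL ι k} (hρ : Function.Injective ρ) [NoZeroDivisors (regularFunctions ρ)]
    (hfree : ¬HasFreeSubgroup H) : Group.IsSolvable H := by
  refine isSolvable_of_finite_trace hρ
    ((finite_setOf_forall_norm_le hk (Fintype.card ι)).subset ?_)
  rintro _ ⟨g, hg, rfl⟩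
  refine ⟨fun σ => ?_, fun p _ σ => ?_⟩
  · rw [AddMonoidHom.map_trace]
    exact norm_trace_le_card (norm_le_one_of_not_hasFreeSubgroup hfree σ hg)
  · rw [AddMonoidHom.map_trace]
    exact norm_trace_le_one (norm_le_one_of_not_hasFreeSubgroup hfree σ hg)

lemma mem_range_map_of_entries_mem {ι K k : Type*} [Fintype ι] [DecidableEq ι] [Field K] [Field k]
    [Algebra K k] {A : GL ι k} (hA : ∀ i j, A.1 i j ∈ (algebraMap K k).range) :
    A ∈ (Matrix.GeneralLinearGroup.map (n := ι) (algebraMap K k)).range := by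
  choose M hM using hA
  have hmap : (Matrix.of M).map (algebraMap K k) = A.1 := Matrix.ext hM
  have hdet : (Matrix.of M).det ≠ 0 := fun h => A.det_ne_zero <| by
    rw [← hmap, ← RingHom.mapMatrix_apply, ← RingHom.map_det, h, map_zero]
  exact ⟨Matrix.GeneralLinearGroup.mkOfDetNeZero _ hdet, Units.ext hmap⟩

lemma exists_fg_intermediateField {ι k Γ : Type*} (K : Type*) [Fintype ι] [DecidableEq ι]
    [Field K] [Field k] [Algebra K k] [Group Γ] [Group.FG Γ] {τ : Γ →* GL ι k}
    (hτ : Function.Injective τ) :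
    ∃ F : IntermediateField K k, F.FG ∧ ∃ ρ : Γ →* GL ι F, Function.Injective ρ := by
  obtain ⟨S, hS⟩ := Group.FG.out (G := Γ)
  let E : Set k := ⋃ s ∈ S, Set.range fun ij : ι × ι => (τ s).1 ij.1 ij.2
  have hE : E.Finite := S.finite_toSet.biUnion fun s _ => Set.finite_range _
  let F := IntermediateField.adjoin K E
  let j : GL ι F →* GL ι k := Matrix.GeneralLinearGroup.map (algebraMap F k)
  have hj : Function.Injective j :=
    Units.map_injective (Matrix.map_injective (algebraMap F k).injective)
  have hle : ⊤ ≤ j.range.comap τ := by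
    rw [← hS, Subgroup.closure_le]
    refine fun s hs => mem_range_map_of_entries_mem fun i l => ⟨⟨_, ?_⟩, rfl⟩
    exact IntermediateField.subset_adjoin _ _ (Set.mem_biUnion hs ⟨(i, l), rfl⟩)
  refine ⟨F, IntermediateField.fg_adjoin_of_finite hE,
    (MonoidHom.ofInjective hj).symm.toMonoidHom.comp
      (τ.codRestrict j.range fun x => hle (Subgroup.mem_top x)), ?_⟩
  exact (MonoidHom.ofInjective hj).symm.injective.comp
    ((MonoidHom.injective_codRestrict τ _ _).2 hτ)

lemma countable_of_fg {K k : Type*} [Field K] [Countable K] [Field k] [Algebra K k]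
    {F : IntermediateField K k} (hF : F.FG) : Countable F := by
  obtain ⟨s, rfl⟩ := hF
  rw [← mk_le_aleph0_iff, ← lift_le_aleph0]
  refine (IntermediateField.lift_cardinalMk_adjoin_le K (s : Set k)).trans
    (sup_le (sup_le ?_ ?_) ?_)
  · exact lift_le_aleph0.2 mk_le_aleph0
  · exact lift_le_aleph0.2 mk_le_aleph0
  · exact le_rfl

lemma exists_descent {ι k Γ : Type*} [Fintype ι] [DecidableEq ι] [Field k] [CharZero k]
    [Group Γ] [Group.FG Γ] {τ : Γ →* GL ι k} (hτ : Function.Injective τ) :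
    ∃ F : IntermediateField ℚ k, #F ≤ 𝔠 ∧ FiniteDimensional ℚ (algebraicClosure ℚ F) ∧
      ∃ ρ : Γ →* GL ι F, Function.Injective ρ := by
  obtain ⟨F, hF, hρ⟩ := exists_fg_intermediateField ℚ hτ
  have := countable_of_fg hF
  have : Algebra.EssFiniteType ℚ F := IntermediateField.essFiniteType_iff.2 hF
  exact ⟨F, mk_le_aleph0.trans aleph0_le_continuum, finiteDimensional_algebraicClosure, hρ⟩

end Alternative

end TitsAlternative

open Cardinal in
theorem tits_alternative_general {ι k Γ : Type*} [Fintype ι] [DecidableEq ι] [Field k] [CharZero k]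
    [FiniteDimensional ℚ (algebraicClosure ℚ k)] (hk : #k ≤ 𝔠) [Group Γ]
    (ρ : Γ →* Matrix.GeneralLinearGroup ι k) (hρ : Function.Injective ρ) :
    (∃ H : Subgroup Γ, Group.IsSolvable H ∧ H.FiniteIndex) ∨
      ∃ φ : FreeGroup (Fin 2) →* Γ, Function.Injective φ := by
  refine or_iff_not_imp_right.2 fun hfree => ?_
  obtain ⟨H, hH, _⟩ := TitsAlternative.exists_finiteIndex_noZeroDivisors ρ
  have hρH : Function.Injective (ρ.comp H.subtype) := hρ.comp H.subtype_injective
  exact ⟨H, TitsAlternative.isSolvable_of_not_hasFreeSubgroup hk hρH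
    fun h => hfree (h.of_injective H.subtype_injective), hH⟩

/-- (Tits alternative) A finitely generated subgroup of `GL(n, k)`, `k` a field of
characteristic 0, either has a solvable subgroup of finite index or contains a
non-abelian free subgroup. -/
theorem tits_alternative (k : Type*) [Field k] [CharZero k] (n : ℕ)
    (G : Subgroup (Matrix.GeneralLinearGroup (Fin n) k)) (hG : Group.FG G) :
    (∃ H : Subgroup G, IsSolvable H ∧ H.FiniteIndex) ∨
      (∃ φ : FreeGroup (Fin 2) →* G, Function.Injective φ) := by
  obtain ⟨F, hF, _, ρ, hρ⟩ := TitsAlternative.exists_descent G.subtype_injective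
  exact tits_alternative_general hF ρ hρ
end
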